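/- arXiv:1305.5440 — 3 statements merged into one kernel-verified Lean document; each statement's English description precedes it below -/
import Mathlib

section
/- Let V = (J, (V_j)_{j∈J}, r, H) be a hypergraph system, let e₁ ∈ H, and let g, g̃ be weighted hypergraphs on V such that 0 ≤ g̃_e ≤ 1 pointwise for all e ∈ H, 0 ≤ g_e ≤ 1 pointwise for all e ∈ H ∖ {e₁}, and (g_e, g̃_e) is an ε-discrepancy pair for each e ∈ H. Then |E[∏_{e∈H} g_e(x_e) | x ∈ V_J] − E[∏_{e∈H} g̃_e(x_e) | x ∈ V_J]| ≤ |H|·ε. -/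
/-!
The edges are replaced one at a time, `g e` by `g' e`, starting with `e₁`, so that at every step
the edges not being replaced carry weights in `[0, 1]`. A replacement at `e` changes the density
by `E[(g e - g' e)(x_e) ∏_{e' ≠ e} h_{e'}(x_{e'})]` with `0 ≤ h_{e'} ≤ 1`. Fix the coordinates of
`x` outside `e`. Every `e' ≠ e` misses a vertex `j ∈ e`, so `h_{e'}(x_{e'})` is then a function of
the face `x_{e \ {j}}`, and the product takes the form `∏_{j ∈ e} u_j(x_{e \ {j}})` with
`0 ≤ u_j ≤ 1`. The average is multilinear in `u` and `[0, 1]`-valued functions are convex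
combinations of indicators, so the discrepancy hypothesis bounds it by `ε`.
-/

open Finset

/-- The average (expectation with respect to the uniform measure) of `f` over `α`. -/
noncomputable def avg {α : Type*} [Fintype α] (f : α → ℝ) : ℝ :=
  (∑ x, f x) / (Fintype.card α)

variable {J : Type} [Fintype J] [DecidableEq J] {V : J → Type}

/-- Restriction (projection) of a full tuple `x ∈ V_J` to the coordinates in `e`. -/
def restr (e : Finset J) (x : (j : J) → V j) : (i : ↥e) → V i := fun i => x i.1

/-- Projection of a tuple indexed by `e` to the coordinates in the face `e.erase j`. -/
def faceProj {e : Finset J} (j : J) (x : (i : ↥e) → V i) :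
    (i : ↥(e.erase j)) → V i :=
  fun i => x ⟨i.1, Finset.mem_of_mem_erase i.2⟩

/-- The product `∏_{f ∈ ∂e} 1_{B_f}(x_f)` of the indicators of the sets `B_f ⊆ V_f`
over the faces `f = e.erase j`, `j ∈ e`, of `e`. -/
noncomputable def faceInd (e : Finset J)
    (B : (j : J) → Set ((i : ↥(e.erase j)) → V i)) (x : (i : ↥e) → V i) : ℝ :=
  ∏ j ∈ e, Set.indicator (B j) (fun _ => (1 : ℝ)) (faceProj j x)

/-- `(g, g')` is an `ε`-discrepancy pair on the edge `e`: for all choices of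
`B_f ⊆ V_f` (`f ∈ ∂e`), `|E[(g(x_e) - g'(x_e)) ∏_{f ∈ ∂e} 1_{B_f}(x_f)]| ≤ ε`. -/
noncomputable def EdgeDiscrepancy [∀ j, Fintype (V j)] (e : Finset J)
    (g g' : ((i : ↥e) → V i) → ℝ) (ε : ℝ) : Prop :=
  ∀ B : (j : J) → Set ((i : ↥(e.erase j)) → V i),
    |avg (fun x : (i : ↥e) → V i => (g x - g' x) * faceInd e B x)| ≤ ε

/-- `g` is upper `η`-regular on the edge `e`: for all choices of `B_f ⊆ V_f`
(`f ∈ ∂e`), `E[(g(x_e) - 1) ∏_{f ∈ ∂e} 1_{B_f}(x_f)] ≤ η`. -/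
noncomputable def EdgeUpperRegular [∀ j, Fintype (V j)] (e : Finset J)
    (g : ((i : ↥e) → V i) → ℝ) (η : ℝ) : Prop :=
  ∀ B : (j : J) → Set ((i : ↥(e.erase j)) → V i),
    avg (fun x : (i : ↥e) → V i => (g x - 1) * faceInd e B x) ≤ η

/-- `E ⊆ V_e` is the set of `r`-cliques of some `(r-1)`-uniform hypergraph: there are
sets `B_f ⊆ V_f` for the faces `f ∈ ∂e` with `1_E(x_e) = ∏_{f ∈ ∂e} 1_{B_f}(x_f)`. -/
def IsCliqueSet (e : Finset J) (E : Set ((i : ↥e) → V i)) : Prop :=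
  ∃ B : (j : J) → Set ((i : ↥(e.erase j)) → V i),
    ∀ x, x ∈ E ↔ ∀ j ∈ e, faceProj j x ∈ B j

/-- `E ⊆ V_e` has complexity at most `T`: it can be partitioned into `T` (possibly
empty) clique sets. -/
def ComplexityLE (e : Finset J) (E : Set ((i : ↥e) → V i)) (T : ℕ) : Prop :=
  ∃ P : Fin T → Set ((i : ↥e) → V i),
    (∀ i, IsCliqueSet e (P i)) ∧
    (∀ i₁ i₂, i₁ ≠ i₂ → P i₁ ∩ P i₂ = ∅) ∧
    (⋃ i, P i) = E

/-- The weighted hypergraph `ν` satisfies the `H`-linear forms condition within `η`: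
for every choice of exponents `n (e, ω) ∈ {0,1}` (`e ∈ H`, `ω ∈ {0,1}^e`),
`|E[∏_{e ∈ H} ∏_{ω ∈ {0,1}^e} ν_e(x_e^{(ω)})^{n_{e,ω}} | x⁰, x¹ ∈ V_J] - 1| ≤ η`. -/
noncomputable def HLinearForms [∀ j, Fintype (V j)] (H : Finset (Finset J))
    (ν : (e : Finset J) → ((i : ↥e) → V i) → ℝ) (η : ℝ) : Prop :=
  ∀ n : (e : Finset J) → (↥e → Bool) → Bool,
    |avg (fun x : ((j : J) → V j) × ((j : J) → V j) =>
      ∏ e ∈ H, ∏ ω : ↥e → Bool,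
        if n e ω then ν e (fun i => if ω i then x.2 i.1 else x.1 i.1) else 1) - 1| ≤ η

section Convexity

lemma pi_convexHull_subset {ι : Type*} [Finite ι] [DecidableEq ι] {E : ι → Type*}
    [∀ i, AddCommGroup (E i)] [∀ i, Module ℝ (E i)] {A : ∀ i, Set (E i)} {K : Set (∀ i, E i)}
    (hK : ∀ u i, Convex ℝ {v | Function.update u i v ∈ K}) (hA : Set.univ.pi A ⊆ K) :
    Set.univ.pi (fun i => convexHull ℝ (A i)) ⊆ K := by
  have := Fintype.ofFinite ι
  suffices h : ∀ (S : Finset ι) (u : ∀ i, E i), (∀ i ∈ S, u i ∈ convexHull ℝ (A i)) →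
      (∀ i ∉ S, u i ∈ A i) → u ∈ K from
    fun u hu => h univ u (fun i _ => hu i trivial) fun i hi => absurd (mem_univ i) hi
  intro S
  induction S using Finset.induction_on with
  | empty => exact fun u _ hu => hA fun i _ => hu i (notMem_empty i)
  | insert k S hk ih =>
    intro u huS hu
    have hvertex : A k ⊆ {v | Function.update u k v ∈ K} := by
      refine fun a ha => ih _ (fun i hi => ?_) fun i hi => ?_
      · rw [Function.update_of_ne (ne_of_mem_of_not_mem hi hk)]
        exact huS i (mem_insert_of_mem hi)
      · obtain rfl | hik := eq_or_ne i k
        · rwa [Function.update_self]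
        · rw [Function.update_of_ne hik]
          exact hu i (by simp only [mem_insert, hik, hi, or_self, not_false_eq_true])
    have huk : Function.update u k (u k) ∈ K :=
      convexHull_min hvertex (hK u k) (huS k (mem_insert_self k S))
    rwa [Function.update_eq_self] at huk

lemma norm_multilinearMap_le_of_mem_convexHull {ι F : Type*} [Finite ι] {E : ι → Type*}
    [∀ i, AddCommGroup (E i)] [∀ i, Module ℝ (E i)] [SeminormedAddCommGroup F] [NormedSpace ℝ F]
    (f : MultilinearMap ℝ E F) {A : ∀ i, Set (E i)} {C : ℝ}
    (hA : ∀ u, (∀ i, u i ∈ A i) → ‖f u‖ ≤ C) {u : ∀ i, E i}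
    (hu : ∀ i, u i ∈ convexHull ℝ (A i)) : ‖f u‖ ≤ C := by
  classical
  refine pi_convexHull_subset (K := {u | ‖f u‖ ≤ C}) (fun u i => ?_)
    (fun u hu => hA u fun i => hu i trivial) fun i _ => hu i
  have hball : {v | Function.update u i v ∈ {u | ‖f u‖ ≤ C}} =
      f.toLinearMap u i ⁻¹' Metric.closedBall 0 C := by
    ext v
    simp only [Set.mem_ofPred_eq, Set.mem_preimage, mem_closedBall_zero_iff,
      MultilinearMap.toLinearMap_apply]
  exact hball ▸ (convex_closedBall 0 C).linear_preimage _

lemma mem_convexHull_range_indicator {Y : Type*} [Finite Y] {w : Y → ℝ}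
    (hw : ∀ y, w y ∈ Set.Icc 0 1) :
    w ∈ convexHull ℝ (Set.range fun B : Set Y => B.indicator fun _ => (1 : ℝ)) := by
  have hcube : w ∈ convexHull ℝ (Set.univ.pi fun _ : Y => ({0, 1} : Set ℝ)) := by
    rw [convexHull_pi]
    intro y _
    rw [convexHull_pair, segment_eq_Icc zero_le_one]
    exact hw y
  refine convexHull_mono ?_ hcube
  intro v hv
  refine ⟨{y | v y = 1}, funext fun y => ?_⟩
  obtain h | h : v y = 0 ∨ v y = 1 := hv y trivial <;> simp [h]

end Convexity

section Average

open scoped BigOperators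

lemma avg_eq_expect {α : Type*} [Fintype α] (f : α → ℝ) : avg f = 𝔼 x, f x :=
  (Fintype.expect_eq_sum_div_card f).symm

lemma abs_avg_le {α : Type*} [Fintype α] [Nonempty α] {f : α → ℝ} {C : ℝ}
    (hf : ∀ x, |f x| ≤ C) : |avg f| ≤ C := by
  rw [avg_eq_expect]
  exact (abs_expect_le _ _).trans (expect_le univ_nonempty fun x _ => hf x)

lemma avg_sub {α : Type*} [Fintype α] (f g : α → ℝ) :
    avg f - avg g = avg fun x => f x - g x := by
  simp only [avg_eq_expect, expect_sub_distrib]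

variable [∀ j, Fintype (V j)] [∀ j, Nonempty (V j)]

lemma avg_avg_updateFinset (e : Finset J) (f : (∀ j, V j) → ℝ) :
    avg (fun z => avg fun y => f (Function.updateFinset z e y)) = avg f := by
  -- Exchanging `y` with the coordinates of `z` in `e` is an involution of `V_J × V_e`.
  let swap : (∀ j, V j) × (∀ i : e, V i) → (∀ j, V j) × (∀ i : e, V i) :=
    fun p => (Function.updateFinset p.1 e p.2, restr e p.1)
  have hswap : Function.Involutive swap := by
    rintro ⟨z, y⟩
    ext j
    · by_cases hj : j ∈ e <;> simp [swap, Function.updateFinset, restr, hj]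
    · simp [swap, Function.updateFinset, restr]
  simp only [avg_eq_expect]
  calc 𝔼 z, 𝔼 y, f (Function.updateFinset z e y)
      = 𝔼 p, f (swap p).1 := by rw [← univ_product_univ, expect_product]
    _ = 𝔼 p : (∀ j, V j) × (∀ i : e, V i), f p.1 :=
        Fintype.expect_equiv hswap.toPerm _ _ fun _ => rfl
    _ = 𝔼 z, 𝔼 _y : ∀ i : e, V i, f z := by rw [← univ_product_univ, expect_product]
    _ = 𝔼 z, f z := by simp only [Fintype.expect_const]

end Average

section Faces

omit [Fintype J]

lemma restr_updateFinset_faceProj {e e' : Finset J} {j : J} (hj : j ∉ e') (z : ∀ j, V j)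
    (y : ∀ i : e, V i) :
    restr e' (Function.updateFinset z (e.erase j) (faceProj j y)) =
      restr e' (Function.updateFinset z e y) := by
  funext i
  have hij : i.1 ≠ j := ne_of_mem_of_not_mem i.2 hj
  by_cases hi : i.1 ∈ e <;> simp [restr, Function.updateFinset, faceProj, hij, hi]

lemma exists_prod_restr_eq_prod_faceProj {e : Finset J} {K : Finset (Finset J)}
    (hK : ∀ e' ∈ K, ¬ e ⊆ e') {h : (e : Finset J) → (∀ i : e, V i) → ℝ}
    (hh : ∀ e' ∈ K, ∀ x, h e' x ∈ Set.Icc 0 1) (z : ∀ j, V j) :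
    ∃ u : (j : e) → (∀ i : e.erase j.1, V i) → ℝ, (∀ j y, u j y ∈ Set.Icc 0 1) ∧
      ∀ y, ∏ e' ∈ K, h e' (restr e' (Function.updateFinset z e y)) =
        ∏ j, u j (faceProj j.1 y) := by
  have hmissed : ∀ e' : K, ∃ j : e, j.1 ∉ e'.1 := fun e' =>
    let ⟨j, hje, hje'⟩ := not_subset.1 (hK e' e'.2)
    ⟨⟨j, hje⟩, hje'⟩
  choose missed hmissed using hmissed
  refine ⟨fun j y => ∏ e' : K with missed e' = j,
    h e' (restr e' (Function.updateFinset z (e.erase j) y)), fun j y => ?_, fun y => ?_⟩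
  · exact ⟨prod_nonneg fun e' _ => (hh e' e'.2 _).1,
      prod_le_one (fun e' _ => (hh e' e'.2 _).1) fun e' _ => (hh e' e'.2 _).2⟩
  · rw [← prod_coe_sort, ← prod_fiberwise univ missed]
    refine prod_congr rfl fun j _ => prod_congr rfl fun e' he' => ?_
    obtain rfl := (mem_filter.1 he').2
    rw [restr_updateFinset_faceProj (hmissed e')]

end Faces

section Discrepancy

variable [∀ j, Fintype (V j)] {e : Finset J} {g g' : (∀ i : e, V i) → ℝ} {ε : ℝ}

omit [Fintype J] in
lemma EdgeDiscrepancy.abs_avg_mul_prod_indicator_le (hd : EdgeDiscrepancy e g g' ε)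
    (B : (j : e) → Set (∀ i : e.erase j.1, V i)) :
    |avg fun x => (g x - g' x) *
      ∏ j, (B j).indicator (fun _ => (1 : ℝ)) (faceProj j.1 x)| ≤ ε := by
  let B' : (j : J) → Set (∀ i : e.erase j, V i) := fun j => {y | ∀ hj : j ∈ e, y ∈ B ⟨j, hj⟩}
  have hB' (j : e) : B' j = B j := Set.ext fun y => ⟨fun hy => hy j.2, fun hy _ => hy⟩
  simpa only [faceInd, ← prod_coe_sort e, hB'] using hd B'

omit [Fintype J] in
lemma EdgeDiscrepancy.abs_avg_mul_prod_faceProj_le (hd : EdgeDiscrepancy e g g' ε)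
    {u : (j : e) → (∀ i : e.erase j.1, V i) → ℝ} (hu : ∀ j y, u j y ∈ Set.Icc 0 1) :
    |avg fun x => (g x - g' x) * ∏ j, u j (faceProj j.1 x)| ≤ ε := by
  let pairing : MultilinearMap ℝ (fun j : e => (∀ i : e.erase j.1, V i) → ℝ) ℝ :=
    (Fintype.card (∀ i : e, V i) : ℝ)⁻¹ • ∑ x, (g x - g' x) •
      (MultilinearMap.mkPiAlgebra ℝ e ℝ).compLinearMap
        fun j => LinearMap.proj (faceProj j.1 x)
  have hpairing : ∀ v, pairing v = avg fun x => (g x - g' x) * ∏ j, v j (faceProj j.1 x) := by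
    intro v
    simp only [pairing, avg, div_eq_inv_mul, smul_apply, _root_.sum_apply,
      MultilinearMap.compLinearMap_apply, MultilinearMap.mkPiAlgebra_apply, LinearMap.proj_apply,
      smul_eq_mul]
  rw [← hpairing, ← Real.norm_eq_abs]
  refine norm_multilinearMap_le_of_mem_convexHull pairing (fun v hv => ?_)
    fun j => mem_convexHull_range_indicator (hu j)
  choose B hB using hv
  obtain rfl : (fun j => (B j).indicator fun _ => (1 : ℝ)) = v := funext hB
  rw [hpairing, Real.norm_eq_abs]
  exact hd.abs_avg_mul_prod_indicator_le B

lemma EdgeDiscrepancy.abs_avg_mul_prod_restr_le [∀ j, Nonempty (V j)]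
    (hd : EdgeDiscrepancy e g g' ε) {K : Finset (Finset J)} (hK : ∀ e' ∈ K, ¬ e ⊆ e')
    {h : (e : Finset J) → (∀ i : e, V i) → ℝ} (hh : ∀ e' ∈ K, ∀ x, h e' x ∈ Set.Icc 0 1) :
    |avg fun x : ∀ j, V j =>
      (g (restr e x) - g' (restr e x)) * ∏ e' ∈ K, h e' (restr e' x)| ≤ ε := by
  rw [← avg_avg_updateFinset e]
  refine abs_avg_le fun z => ?_
  obtain ⟨u, hu, hprod⟩ := exists_prod_restr_eq_prod_faceProj hK hh z
  have hrestr (y : ∀ i : e, V i) : restr e (Function.updateFinset z e y) = y :=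
    Function.restrict_updateFinset z y
  simpa only [hprod, hrestr] using hd.abs_avg_mul_prod_faceProj_le hu

end Discrepancy

section Density

variable [∀ j, Fintype (V j)]

/-- The density `E[∏_{e ∈ H} g_e(x_e) | x ∈ V_J]` of the hypergraph `H` in the weighted hypergraph
`g`. As `g` is a family over all `e ⊆ J`, replacing the weight of one edge is
`Function.update`. -/
noncomputable def weightedDensity (H : Finset (Finset J))
    (g : (e : Finset J) → (∀ i : e, V i) → ℝ) : ℝ :=
  avg fun x : ∀ j, V j => ∏ e ∈ H, g e (restr e x)

lemma weightedDensity_congr {H : Finset (Finset J)}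
    {g h : (e : Finset J) → (∀ i : e, V i) → ℝ} (hgh : ∀ e ∈ H, g e = h e) :
    weightedDensity H g = weightedDensity H h :=
  congrArg avg <| funext fun _ => prod_congr rfl fun e he => congrFun (hgh e he) _

lemma weightedDensity_sub_update {H : Finset (Finset J)} {e : Finset J} (he : e ∈ H)
    (g : (e : Finset J) → (∀ i : e, V i) → ℝ) (w : (∀ i : e, V i) → ℝ) :
    weightedDensity H g - weightedDensity H (Function.update g e w) =
      avg fun x : ∀ j, V j =>
        (g e (restr e x) - w (restr e x)) * ∏ e' ∈ H.erase e, g e' (restr e' x) := by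
  rw [weightedDensity, weightedDensity, avg_sub]
  congr 1 with x
  have hrest : ∏ e' ∈ H.erase e, Function.update g e w e' (restr e' x) =
      ∏ e' ∈ H.erase e, g e' (restr e' x) :=
    prod_congr rfl fun e' he' => by rw [Function.update_of_ne (ne_of_mem_erase he')]
  rw [← mul_prod_erase H _ he, ← mul_prod_erase H (fun e' => Function.update g e w e' _) he,
    hrest, Function.update_self, sub_mul]

variable [∀ j, Nonempty (V j)] {H : Finset (Finset J)}
  {g g' : (e : Finset J) → (∀ i : e, V i) → ℝ}

lemma abs_weightedDensity_sub_update_le (hH : IsAntichain (· ⊆ ·) (H : Set (Finset J)))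
    {e : Finset J} (he : e ∈ H) (hg : ∀ e' ∈ H, e' ≠ e → ∀ x, g e' x ∈ Set.Icc 0 1)
    {w : (∀ i : e, V i) → ℝ} {ε : ℝ} (hd : EdgeDiscrepancy e (g e) w ε) :
    |weightedDensity H g - weightedDensity H (Function.update g e w)| ≤ ε := by
  rw [weightedDensity_sub_update he]
  exact hd.abs_avg_mul_prod_restr_le
    (fun e' he' => hH he (mem_of_mem_erase he') (ne_of_mem_erase he').symm)
    fun e' he' => hg e' (mem_of_mem_erase he') (ne_of_mem_erase he')

lemma abs_weightedDensity_sub_piecewise_le (hH : IsAntichain (· ⊆ ·) (H : Set (Finset J)))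
    (hg : ∀ e ∈ H, ∀ x, g e x ∈ Set.Icc 0 1) (hg' : ∀ e ∈ H, ∀ x, g' e x ∈ Set.Icc 0 1)
    {ε : Finset J → ℝ} {S : Finset (Finset J)} (hSH : S ⊆ H)
    (hd : ∀ e ∈ S, EdgeDiscrepancy e (g e) (g' e) (ε e)) :
    |weightedDensity H g - weightedDensity H (S.piecewise g' g)| ≤ ∑ e ∈ S, ε e := by
  induction S using Finset.induction_on with
  | empty => simp only [piecewise_empty, sub_self, abs_zero, sum_empty, le_refl]
  | insert e S heS ih =>
    have hprev := ih ((subset_insert e S).trans hSH) fun e' he' => hd e' (mem_insert_of_mem he')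
    have hmixed : ∀ e' ∈ H, ∀ x, S.piecewise g' g e' x ∈ Set.Icc 0 1 := fun e' he' x =>
      S.piecewise_cases g' g (fun w => w x ∈ Set.Icc 0 1) (hg' e' he' x) (hg e' he' x)
    have hstep := abs_weightedDensity_sub_update_le hH (hSH (mem_insert_self e S))
      (fun e' he' _ => hmixed e' he')
      ((S.piecewise_eq_of_notMem g' g heS).symm ▸ hd e (mem_insert_self e S))
    rw [piecewise_insert, sum_insert heS]
    linarith [abs_sub_le (weightedDensity H g) (weightedDensity H (S.piecewise g' g))
      (weightedDensity H (Function.update (S.piecewise g' g) e (g' e)))]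

end Density

theorem telescoping_discrepancy_general [∀ j, Fintype (V j)] [∀ j, Nonempty (V j)]
    {H : Finset (Finset J)} (hH : IsAntichain (· ⊆ ·) (H : Set (Finset J)))
    {e₁ : Finset J} (he₁ : e₁ ∈ H) {g g' : (e : Finset J) → (∀ i : e, V i) → ℝ}
    {ε : Finset J → ℝ} (hg' : ∀ e ∈ H, ∀ x, g' e x ∈ Set.Icc 0 1)
    (hg : ∀ e ∈ H, e ≠ e₁ → ∀ x, g e x ∈ Set.Icc 0 1)
    (hd : ∀ e ∈ H, EdgeDiscrepancy e (g e) (g' e) (ε e)) :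
    |weightedDensity H g - weightedDensity H g'| ≤ ∑ e ∈ H, ε e := by
  let h := Function.update g e₁ (g' e₁)
  have hne : ∀ {e}, e ≠ e₁ → h e = g e := fun he => Function.update_of_ne he _ g
  have hself : h e₁ = g' e₁ := Function.update_self e₁ _ g
  have hfirst : |weightedDensity H g - weightedDensity H h| ≤ ε e₁ :=
    abs_weightedDensity_sub_update_le hH he₁ hg (hd e₁ he₁)
  have hh : ∀ e ∈ H, ∀ x, h e x ∈ Set.Icc 0 1 := by
    intro e he
    obtain rfl | hee₁ := eq_or_ne e e₁
    · exact hself ▸ hg' e he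
    · exact hne hee₁ ▸ hg e he hee₁
  have hrest := abs_weightedDensity_sub_piecewise_le hH hh hg' (erase_subset e₁ H) (ε := ε)
    fun e he => (hne (ne_of_mem_erase he)).symm ▸ hd e (mem_of_mem_erase he)
  have hlast : weightedDensity H ((H.erase e₁).piecewise g' h) = weightedDensity H g' := by
    refine weightedDensity_congr fun e he => ?_
    obtain rfl | hee₁ := eq_or_ne e e₁
    · rw [piecewise_eq_of_notMem _ _ _ (notMem_erase e H), hself]
    · rw [piecewise_eq_of_mem _ _ _ (mem_erase.2 ⟨hee₁, he⟩)]
  rw [hlast] at hrest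
  rw [← add_sum_erase H ε he₁]
  exact (abs_sub_le _ (weightedDensity H h) _).trans (add_le_add hfirst hrest)

/-- **Telescoping discrepancy argument for dense hypergraphs.** If `g, g'` are weighted
hypergraphs on a hypergraph system with `0 ≤ g' ≤ 1` everywhere, `0 ≤ g_e ≤ 1` for all
`e ≠ e₁`, `0 ≤ g_{e₁}`, and `(g_e, g'_e)` is an `ε`-discrepancy pair for each `e ∈ H`,
then `|E[∏_{e ∈ H} g_e(x_e)] - E[∏_{e ∈ H} g'_e(x_e)]| ≤ |H| ε`. -/
theorem telescoping_discrepancy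
    (J : Type) [Fintype J] [DecidableEq J]
    (V : J → Type) [∀ j, Fintype (V j)] [∀ j, Nonempty (V j)]
    (r : ℕ) (hr : 1 ≤ r) (H : Finset (Finset J)) (hH : ∀ e ∈ H, e.card = r)
    (e₁ : Finset J) (he₁ : e₁ ∈ H)
    (g g' : (e : Finset J) → ((i : ↥e) → V i) → ℝ) (ε : ℝ)
    (hg'01 : ∀ e ∈ H, ∀ x, 0 ≤ g' e x ∧ g' e x ≤ 1)
    (hg01 : ∀ e ∈ H, e ≠ e₁ → ∀ x, 0 ≤ g e x ∧ g e x ≤ 1)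
    (hge₁ : ∀ x, 0 ≤ g e₁ x)
    (hdisc : ∀ e ∈ H, EdgeDiscrepancy e (g e) (g' e) ε) :
    |avg (fun x : (j : J) → V j => ∏ e ∈ H, g e (restr e x)) -
      avg (fun x : (j : J) → V j => ∏ e ∈ H, g' e (restr e x))| ≤ H.card * ε := by
  have hanti : IsAntichain (· ⊆ ·) (H : Set (Finset J)) :=
    Set.Sized.isAntichain fun e he => hH e he
  simpa only [weightedDensity, sum_const, nsmul_eq_mul] using
    telescoping_discrepancy_general hanti he₁ hg'01 hg01 hdisc
end

section
/- For every γ > 0 and every finite set J, there exists η > 0 such that the following holds. Let V = (J, (V_j)_{j∈J}, r, H) be a hypergraph system, let ν be a weighted hypergraph on V satisfying the H-linear forms condition within η, and let e₁ ∈ H. For each ι ∈ {0,1} and each e ∈ H ∖ {e₁}, let g_e^{(ι)} : V_e → ℝ_{≥0} be a function such that either g_e^{(ι)} ≤ 1 pointwise or g_e^{(ι)} ≤ ν_e pointwise. Then |E[(ν_{e₁}(x_{e₁}) − 1)·∏_{ι∈{0,1}} ∏_{e∈H∖{e₁}} g_e^{(ι)}(x_e^{(ι)}) | x_J^{(0)},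 x_J^{(1)} ∈ V_J with x_j^{(0)} = x_j^{(1)} = x_j for all j ∈ e₁]| ≤ γ, where the expectation is over independent uniform x_j^{(0)}, x_j^{(1)} ∈ V_j for j ∈ J ∖ e₁ and a single uniform x_j ∈ V_j for each j ∈ e₁. -/
/-!
The variables `x_k`, `k ∈ e₁`, are doubled one at a time by Cauchy–Schwarz. Each time, the
factors that do not involve `x_k` are first bounded by their majorants (`1` or `ν_e`) and moved
outside the inner average; the others, including `ν_{e₁} - 1`, acquire a second copy. Since no
other edge contains `e₁`, in the end every `g_e^{(ι)}` has given way to its majorant, and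
`ν_{e₁} - 1` has become `∏_ω (ν_{e₁}(x_{e₁}^{(ω)}) - 1)`. Since no other edge is contained in
`e₁`, the factors obtained from `ι = 0` and `ι = 1` are evaluated at different points, so that
every product that arises is controlled by the linear forms condition: the weights used in
Cauchy–Schwarz average to at most `2`, and in the expansion of `∏_ω (ν_{e₁}(x_{e₁}^{(ω)}) - 1)`
the main terms cancel. After `#e₁` steps this bounds the `2 ^ #e₁`-th power of the average by
`4 ^ 2 ^ #e₁ * η`.
-/

open Finset

variable {J : Type} [Fintype J] [DecidableEq J] {V : J → Type}

open scoped BigOperators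

section UniformAverages

variable {α β : Type*} [Fintype α] [Fintype β]

-- A bijection preserves the uniform measure of `α × β`, so the first component of `σ p` is uniform.
lemma expect_fst_of_involutive [Nonempty β] {σ : α × β → α × β} (hσ : Function.Involutive σ)
    (f : α → ℝ) : 𝔼 p, f (σ p).1 = 𝔼 x, f x :=
  calc 𝔼 p, f (σ p).1 = 𝔼 p : α × β, f p.1 :=
        Fintype.expect_equiv hσ.toPerm _ _ fun _ => rfl
    _ = 𝔼 x, f x := by
        rw [← univ_product_univ, expect_product]
        simp only [Fintype.expect_const]

lemma sq_expect_mul_le_of_le {a b : α → ℝ} (ha : 0 ≤ a) (hab : a ≤ b) (m : α → ℝ) :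
    (𝔼 x, a x * m x) ^ 2 ≤ (𝔼 x, b x) * 𝔼 x, b x * m x ^ 2 := by
  have hb : 0 ≤ b := ha.trans hab
  have key : (∑ x, a x * m x) ^ 2 ≤ (∑ x, b x) * ∑ x, b x * m x ^ 2 := by
    refine sum_sq_le_sum_mul_sum_of_sq_le_mul _ (fun x _ => hb x)
      (fun x _ => mul_nonneg (hb x) (sq_nonneg _)) fun x _ => ?_
    calc (a x * m x) ^ 2 = a x ^ 2 * m x ^ 2 := mul_pow _ _ _
      _ ≤ b x ^ 2 * m x ^ 2 :=
        mul_le_mul_of_nonneg_right (pow_le_pow_left₀ (ha x) (hab x) 2) (sq_nonneg _)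
      _ = b x * (b x * m x ^ 2) := by ring
  simp only [Fintype.expect_eq_sum_div_card, div_pow, div_mul_div_comm, ← sq]
  gcongr

-- The signs in the expansion of `∏ i ∈ s, (h i - 1)` add up to zero, so the main terms cancel.
lemma abs_expect_prod_sub_one_mul_le {ι : Type*} {s : Finset ι} (hs : s.Nonempty)
    (h : ι → α → ℝ) (m : α → ℝ) {η : ℝ}
    (hη : ∀ t ⊆ s, |(𝔼 x, (∏ i ∈ t, h i x) * m x) - 1| ≤ η) :
    |𝔼 x, (∏ i ∈ s, (h i x - 1)) * m x| ≤ 2 ^ #s * η := by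
  classical
  have hsigns : ∑ t ∈ s.powerset, (-1 : ℝ) ^ #t = 0 := by
    exact_mod_cast sum_powerset_neg_one_pow_card_of_nonempty hs
  have hexpand : 𝔼 x, (∏ i ∈ s, (h i x - 1)) * m x =
      ∑ t ∈ s.powerset, (-1) ^ #t * 𝔼 x, (∏ i ∈ s \ t, h i x) * m x := by
    simp only [prod_sub, prod_const_one, mul_one, sum_mul, expect_sum_comm, mul_expect, mul_assoc]
  have hcancel : 𝔼 x, (∏ i ∈ s, (h i x - 1)) * m x =
      ∑ t ∈ s.powerset, (-1) ^ #t * ((𝔼 x, (∏ i ∈ s \ t, h i x) * m x) - 1) := by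
    simp only [mul_sub, mul_one, sum_sub_distrib, hsigns, sub_zero, hexpand]
  calc |𝔼 x, (∏ i ∈ s, (h i x - 1)) * m x|
      ≤ ∑ t ∈ s.powerset, |(-1) ^ #t * ((𝔼 x, (∏ i ∈ s \ t, h i x) * m x) - 1)| := by
        rw [hcancel]; exact abs_sum_le_sum_abs _ _
    _ ≤ ∑ _t ∈ s.powerset, η := by
        refine sum_le_sum fun t _ => ?_
        rw [abs_mul, abs_neg_one_pow, one_mul]
        exact hη _ sdiff_subset
    _ = 2 ^ #s * η := by simp

end UniformAverages

section Doubling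

variable {I : Type*} [DecidableEq I] {X : I → Type*}

/-- The space `V_J × V_J` of pairs `(x⁰, x¹)` of points with two independent copies of every
coordinate. The point taking its coordinates in `A` from `x¹` and the others from `x⁰` is
`A.piecewise p.2 p.1`. -/
abbrev PairSpace (X : I → Type*) := (∀ i, X i) × (∀ i, X i)

/-- Replaces the coordinate `k` of the first point of a pair by that of the second: the passage to
the second copy of the variable `x_k` that Cauchy–Schwarz introduces. -/
def copyCoord (k : I) (p : PairSpace X) : PairSpace X :=
  (Function.update p.1 k (p.2 k), p.2)

section CauchySchwarz

variable [Fintype I] [∀ i, Fintype (X i)] [∀ i, Nonempty (X i)]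

lemma expect_update_fst (k : I) (f : PairSpace X → ℝ) :
    𝔼 p, f p = 𝔼 p : PairSpace X, 𝔼 t, f (Function.update p.1 k t, p.2) := by
  have hinv : Function.Involutive fun q : PairSpace X × X k =>
      ((Function.update q.1.1 k q.2, q.1.2), q.1.1 k) := fun q => by simp
  rw [← expect_fst_of_involutive hinv f, ← univ_product_univ, expect_product]

lemma expect_update_snd (k : I) (f : PairSpace X → ℝ) :
    𝔼 p, f p = 𝔼 p : PairSpace X, 𝔼 t, f (p.1, Function.update p.2 k t) := by
  have hinv : Function.Involutive fun q : PairSpace X × X k =>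
      ((q.1.1, Function.update q.1.2 k q.2), q.1.2 k) := fun q => by simp
  rw [← expect_fst_of_involutive hinv f, ← univ_product_univ, expect_product]

lemma sq_expect_mul_le_expect_mul_copyCoord {a b c : PairSpace X → ℝ} (k : I)
    (ha : 0 ≤ a) (hab : a ≤ b)
    (ha_fst : ∀ x y t, a (Function.update x k t, y) = a (x, y))
    (hb_fst : ∀ x y t, b (Function.update x k t, y) = b (x, y))
    (hb_snd : ∀ x y t, b (x, Function.update y k t) = b (x, y))
    (hc_snd : ∀ x y t, c (x, Function.update y k t) = c (x, y)) :
    (𝔼 p, a p * c p) ^ 2 ≤ (𝔼 p, b p) * 𝔼 p, b p * (c p * c (copyCoord k p)) := by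
  let m : PairSpace X → ℝ := fun p => 𝔼 t, c (Function.update p.1 k t, p.2)
  have hsingle : 𝔼 p, a p * c p = 𝔼 p, a p * m p := by
    rw [expect_update_fst k]
    simp only [ha_fst, m, mul_expect]
  have hcopy : ∀ x y t u, c (copyCoord k (Function.update x k t, Function.update y k u)) =
      c (Function.update x k u, y) := fun x y t u => by
    simp only [copyCoord, Function.update_self, Function.update_idem, hc_snd]
  have hdouble : 𝔼 p, b p * (c p * c (copyCoord k p)) = 𝔼 p, b p * m p ^ 2 := by
    rw [expect_update_snd k, expect_update_fst k]
    simp only [hb_snd, hc_snd, hb_fst, hcopy, sq, m, expect_mul_expect]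
    simp only [mul_expect]
  rw [hsingle, hdouble]
  exact sq_expect_mul_le_of_le ha hab m

end CauchySchwarz

/-- The product of `F` over the `2 ^ #T` points of a pair whose second copies are used exactly on
`A ∪ B`, `A ⊆ T`. Here `T` is the set of doubled variables, and `B` the fixed set of coordinates
that `F` reads from the second copy in any case. -/
def cubeProd (B T : Finset I) (F : (∀ i, X i) → ℝ) (p : PairSpace X) : ℝ :=
  ∏ A ∈ T.powerset, F ((A ∪ B).piecewise p.2 p.1)

section CubeProd

variable {B T : Finset I} {F G : (∀ i, X i) → ℝ} {k : I}

lemma cubeProd_nonneg (hF : 0 ≤ F) : 0 ≤ cubeProd B T F :=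
  fun _ => prod_nonneg fun _ _ => hF _

lemma cubeProd_mono (hF : 0 ≤ F) (hFG : F ≤ G) : cubeProd B T F ≤ cubeProd B T G :=
  fun _ => prod_le_prod (fun _ _ => hF _) fun _ _ => hFG _

lemma cubeProd_update_fst {s : Set I} (hF : DependsOn F s) (hk : k ∉ s) (x y : ∀ i, X i)
    (t : X k) : cubeProd B T F (Function.update x k t, y) = cubeProd B T F (x, y) :=
  prod_congr rfl fun A _ => hF fun i hi => by
    simp [piecewise, Function.update_of_ne (ne_of_mem_of_not_mem hi hk)]

lemma cubeProd_update_snd {s : Set I} (hF : DependsOn F s) (hk : k ∉ s) (x y : ∀ i, X i)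
    (t : X k) : cubeProd B T F (x, Function.update y k t) = cubeProd B T F (x, y) :=
  prod_congr rfl fun A _ => hF fun i hi => by
    simp [piecewise, Function.update_of_ne (ne_of_mem_of_not_mem hi hk)]

lemma cubeProd_update_snd_of_notMem (hT : k ∉ T) (hB : k ∉ B) (x y : ∀ i, X i) (t : X k) :
    cubeProd B T F (x, Function.update y k t) = cubeProd B T F (x, y) :=
  prod_congr rfl fun A hA => congrArg F <|
    piecewise_congr _ (fun i hi => Function.update_of_ne (by
      rintro rfl
      exact (mem_union.1 hi).elim (fun h => hT (mem_powerset.1 hA h)) hB) _ _) fun _ _ => rfl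

lemma cubeProd_insert (hT : k ∉ T) (hB : k ∉ B) (p : PairSpace X) :
    cubeProd B (insert k T) F p = cubeProd B T F p * cubeProd B T F (copyCoord k p) := by
  rw [cubeProd, prod_powerset_insert hT]
  refine congrArg _ (prod_congr rfl fun A hA => congrArg F ?_)
  have hkA : k ∉ A ∪ B := notMem_union.2 ⟨fun h => hT (mem_powerset.1 hA h), hB⟩
  rw [insert_union, piecewise_insert, copyCoord, update_piecewise_of_notMem _ _ _ hkA]

lemma cubeProd_empty (p : PairSpace X) : cubeProd B ∅ F p = F (B.piecewise p.2 p.1) := by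
  rw [cubeProd, powerset_empty, prod_singleton, empty_union]

end CubeProd

/-- A nonnegative factor `val` of the averages treated by Cauchy–Schwarz, depending on the
coordinates in `supp` and with a majorant `maj` that depends on the same coordinates. It is
evaluated at points whose coordinates in `base` come from the second copy. -/
structure MajorizedFactor (X : I → Type*) where
  supp : Finset I
  base : Finset I
  val : (∀ i, X i) → ℝ
  maj : (∀ i, X i) → ℝ
  val_nonneg : 0 ≤ val
  val_le_maj : val ≤ maj
  dependsOn_val : DependsOn val supp
  dependsOn_maj : DependsOn maj supp

namespace MajorizedFactor

/-- What is left of a factor once the variables in `S` have been doubled: the factor itself if it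
involves all of them, its majorant otherwise. -/
def current (φ : MajorizedFactor X) (S : Finset I) : (∀ i, X i) → ℝ :=
  if S ⊆ φ.supp then φ.val else φ.maj

variable (φ : MajorizedFactor X) (S : Finset I)

lemma current_nonneg : 0 ≤ φ.current S := by
  unfold current
  split_ifs
  exacts [φ.val_nonneg, φ.val_nonneg.trans φ.val_le_maj]

lemma current_le_maj : φ.current S ≤ φ.maj := by
  unfold current
  split_ifs
  exacts [φ.val_le_maj, le_rfl]

lemma dependsOn_current : DependsOn (φ.current S) φ.supp := by
  unfold current
  split_ifs
  exacts [φ.dependsOn_val, φ.dependsOn_maj]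

variable {φ S} {k : I}

lemma current_of_not_subset (hS : ¬ S ⊆ φ.supp) : φ.current S = φ.maj := if_neg hS

lemma cubeProd_insert_of_notMem (hk : k ∉ φ.supp) (p : PairSpace X) :
    cubeProd φ.base (insert k S ∩ φ.supp) (φ.current (insert k S)) p =
      cubeProd φ.base (S ∩ φ.supp) φ.maj p := by
  rw [insert_inter_of_notMem hk,
    current_of_not_subset fun h => hk (h (mem_insert_self k S))]

lemma cubeProd_insert_of_mem (hk : k ∈ φ.supp) (hkS : k ∉ S) (hkB : k ∉ φ.base)
    (p : PairSpace X) :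
    cubeProd φ.base (insert k S ∩ φ.supp) (φ.current (insert k S)) p =
      cubeProd φ.base (S ∩ φ.supp) (φ.current S) p *
        cubeProd φ.base (S ∩ φ.supp) (φ.current S) (copyCoord k p) := by
  have hcurrent : φ.current (insert k S) = φ.current S := by
    simp only [current, insert_subset_iff, hk, true_and]
  rw [insert_inter_of_mem hk, hcurrent,
    cubeProd_insert (fun h => hkS (mem_of_mem_inter_left h)) hkB]

end MajorizedFactor

section Iteration

variable [Fintype I] [∀ i, Fintype (X i)] {κ : Type*} [Fintype κ]

/-- The average reached once Cauchy–Schwarz has doubled the variables in `S`. The function `f`, for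
which no majorant is available, has to be kept throughout. -/
noncomputable def doubledAverage (f : (∀ i, X i) → ℝ) (φ : κ → MajorizedFactor X)
    (S : Finset I) : ℝ :=
  𝔼 p : PairSpace X,
    cubeProd ∅ S f p * ∏ i, cubeProd (φ i).base (S ∩ (φ i).supp) ((φ i).current S) p

/-- The average of the majorants of the factors that do not involve `k`: the price of doubling `k`
once the variables in `S` have been doubled. -/
noncomputable def majorantAverage (φ : κ → MajorizedFactor X) (S : Finset I) (k : I) : ℝ :=
  𝔼 p : PairSpace X,
    ∏ i with k ∉ (φ i).supp, cubeProd (φ i).base (S ∩ (φ i).supp) (φ i).maj p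

variable [∀ i, Nonempty (X i)] (f : (∀ i, X i) → ℝ) {φ : κ → MajorizedFactor X}

lemma sq_doubledAverage_le {S : Finset I} {k : I} (hkS : k ∉ S) (hkB : ∀ i, k ∉ (φ i).base) :
    doubledAverage f φ S ^ 2 ≤ majorantAverage φ S k * doubledAverage f φ (insert k S) := by
  let a : PairSpace X → ℝ := fun p =>
    ∏ i with k ∉ (φ i).supp, cubeProd (φ i).base (S ∩ (φ i).supp) ((φ i).current S) p
  let b : PairSpace X → ℝ := fun p =>
    ∏ i with k ∉ (φ i).supp, cubeProd (φ i).base (S ∩ (φ i).supp) (φ i).maj p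
  let c : PairSpace X → ℝ := fun p => cubeProd ∅ S f p *
    ∏ i with k ∈ (φ i).supp, cubeProd (φ i).base (S ∩ (φ i).supp) ((φ i).current S) p
  have hsplit : doubledAverage f φ S = 𝔼 p, a p * c p :=
    expect_congr rfl fun p _ => by
      rw [← prod_filter_mul_prod_filter_not univ fun i => k ∈ (φ i).supp]
      ring
  have hsplit_insert :
      doubledAverage f φ (insert k S) = 𝔼 p, b p * (c p * c (copyCoord k p)) :=
    expect_congr rfl fun p _ => by
      rw [← prod_filter_mul_prod_filter_not univ fun i => k ∈ (φ i).supp,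
        prod_congr rfl fun i hi => MajorizedFactor.cubeProd_insert_of_mem
          (mem_filter.1 hi).2 hkS (hkB i) p,
        prod_congr rfl fun i hi => MajorizedFactor.cubeProd_insert_of_notMem
          (mem_filter.1 hi).2 p,
        prod_mul_distrib, cubeProd_insert hkS (notMem_empty k)]
      ring
  rw [hsplit, hsplit_insert]
  apply sq_expect_mul_le_expect_mul_copyCoord k
  · exact fun p => prod_nonneg fun i _ => cubeProd_nonneg ((φ i).current_nonneg S) p
  · exact fun p => prod_le_prod
      (fun i _ => cubeProd_nonneg ((φ i).current_nonneg S) p)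
      fun i _ => cubeProd_mono ((φ i).current_nonneg S) ((φ i).current_le_maj S) p
  · exact fun x y t => prod_congr rfl fun i hi =>
      cubeProd_update_fst ((φ i).dependsOn_current S) (mem_filter.1 hi).2 x y t
  · exact fun x y t => prod_congr rfl fun i hi =>
      cubeProd_update_fst (φ i).dependsOn_maj (mem_filter.1 hi).2 x y t
  · exact fun x y t => prod_congr rfl fun i hi =>
      cubeProd_update_snd (φ i).dependsOn_maj (mem_filter.1 hi).2 x y t
  · exact fun x y t => congrArg₂ _ (cubeProd_update_snd_of_notMem hkS (notMem_empty k) x y t) <|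
      prod_congr rfl fun i _ => cubeProd_update_snd_of_notMem
        (fun h => hkS (mem_of_mem_inter_left h)) (hkB i) x y t

lemma abs_doubledAverage_div_pow_le {E : Finset I} (hE : ∀ i, Disjoint E (φ i).base) {C : ℝ}
    (hC : 0 < C) (hmaj : ∀ S ⊆ E, ∀ k, |majorantAverage φ S k| ≤ C) :
    ∀ S ⊆ E, (|doubledAverage f φ ∅| / C) ^ 2 ^ #S ≤ |doubledAverage f φ S| / C := by
  intro S
  induction S using Finset.induction_on with
  | empty => simp
  | insert k S hkS ih =>
    intro hS
    have hSE : S ⊆ E := (subset_insert k S).trans hS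
    have hkB : ∀ i, k ∉ (φ i).base := fun i =>
      disjoint_left.1 (hE i) (hS (mem_insert_self k S))
    have hstep : |doubledAverage f φ S| ^ 2 ≤ C * |doubledAverage f φ (insert k S)| :=
      calc |doubledAverage f φ S| ^ 2
          ≤ majorantAverage φ S k * doubledAverage f φ (insert k S) := by
            rw [sq_abs]; exact sq_doubledAverage_le f hkS hkB
        _ ≤ |majorantAverage φ S k| * |doubledAverage f φ (insert k S)| := by
            rw [← abs_mul]; exact le_abs_self _
        _ ≤ C * |doubledAverage f φ (insert k S)| := by gcongr; exact hmaj S hSE k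
    calc (|doubledAverage f φ ∅| / C) ^ 2 ^ #(insert k S)
        = ((|doubledAverage f φ ∅| / C) ^ 2 ^ #S) ^ 2 := by
          rw [card_insert_of_notMem hkS, pow_succ, pow_mul]
      _ ≤ (|doubledAverage f φ S| / C) ^ 2 := by gcongr; exact ih hSE
      _ ≤ C * |doubledAverage f φ (insert k S)| / C ^ 2 := by rw [div_pow]; gcongr
      _ = |doubledAverage f φ (insert k S)| / C := by field_simp

end Iteration

end Doubling

section LinearForms

variable {H : Finset (Finset J)} {e₁ : Finset J}

/-- The coordinates that the point `x^{(ι)}` takes from the second copy: a pair `(x⁰, x¹)` encodes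
`x^{(0)}` and `x^{(1)}` off `e₁`, while both read the first copy on `e₁`. -/
def offEdge (e₁ : Finset J) (ι : Bool) : Finset J := if ι then e₁ᶜ else ∅

lemma disjoint_offEdge (e₁ : Finset J) (ι : Bool) : Disjoint e₁ (offEdge e₁ ι) := by
  cases ι
  exacts [disjoint_empty_right _, disjoint_compl_right]

-- An edge not contained in `e₁` has a coordinate off `e₁`, and this reveals `ι`.
lemma eq_and_eq_of_union_offEdge_inter_eq {e A A' : Finset J} {ι ι' : Bool} (he : ¬ e ⊆ e₁)
    (hA : A ⊆ e₁ ∩ e) (hA' : A' ⊆ e₁ ∩ e)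
    (h : (A ∪ offEdge e₁ ι) ∩ e = (A' ∪ offEdge e₁ ι') ∩ e) : A = A' ∧ ι = ι' := by
  have hmem := fun j => Finset.ext_iff.1 h j
  simp only [mem_inter, mem_union] at hmem
  constructor
  · ext j
    have hA_j := @hA j
    have hA'_j := @hA' j
    have hoff : j ∈ e₁ → j ∉ offEdge e₁ ι := fun hj => disjoint_left.1 (disjoint_offEdge e₁ ι) hj
    have hoff' : j ∈ e₁ → j ∉ offEdge e₁ ι' := fun hj => disjoint_left.1 (disjoint_offEdge e₁ ι') hj
    have hmem_j := hmem j
    simp only [mem_inter] at hA_j hA'_j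
    tauto
  · obtain ⟨j, hje, hj⟩ := not_subset.1 he
    have hjA : j ∉ A := fun h => hj (mem_inter.1 (hA h)).1
    have hjA' : j ∉ A' := fun h => hj (mem_inter.1 (hA' h)).1
    have hmem_j := hmem j
    cases ι <;> cases ι' <;> simp_all [offEdge]

variable [∀ j, Fintype (V j)] {ν : (e : Finset J) → ((i : ↥e) → V i) → ℝ} {η : ℝ}

-- Distinct pairs `(e, B ∩ e)` are distinct factors `ν_e(x_e^{(ω)})` of the linear forms condition.
lemma HLinearForms.abs_expect_prod_sub_one_le (h : HLinearForms H ν η) {κ : Type*}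
    {R : Finset κ} (e B : κ → Finset J) (he : ∀ i ∈ R, e i ∈ H)
    (hinj : Set.InjOn (fun i => (e i, B i ∩ e i)) R) :
    |(𝔼 p : PairSpace V, ∏ i ∈ R, ν (e i) (restr (e i) ((B i).piecewise p.2 p.1))) - 1| ≤ η := by
  classical
  let form : κ → Σ e : Finset J, (↥e → Bool) := fun i => ⟨e i, fun j => decide (j.1 ∈ B i)⟩
  have hform : Set.InjOn form R := by
    let toPair : (Σ e : Finset J, (↥e → Bool)) → Finset J × Finset J := fun q =>
      (q.1, (univ.filter fun j => q.2 j = true).map (Function.Embedding.subtype _))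
    refine Set.InjOn.of_comp (g := toPair) (hinj.congr fun i _ => ?_)
    ext j <;> simp [toPair, form, and_comm]
  have hcond := h fun e ω => decide (⟨e, ω⟩ ∈ R.image form)
  rw [avg_eq_expect] at hcond
  convert hcond using 4 with p
  have hsub : R.image form ⊆ H.sigma fun _ => univ := fun q hq => by
    obtain ⟨i, hi, rfl⟩ := mem_image.1 hq
    exact mem_sigma.2 ⟨he i hi, mem_univ _⟩
  simp only [decide_eq_true_eq]
  rw [prod_sigma', prod_ite_mem, inter_eq_right.2 hsub, prod_image hform]
  refine prod_congr rfl fun i _ => congrArg _ ?_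
  funext j
  simp only [restr, piecewise, form, decide_eq_true_eq]

/-- Names for the factors that Cauchy–Schwarz produces: `inl A` stands for `ν_{e₁}` and
`inr ⟨(ι, e), A⟩` for the majorant of `g_e^{(ι)}`, at the point where the variables in `A ⊆ e₁` have
been replaced by their second copies. -/
abbrev FactorIndex (H : Finset (Finset J)) (e₁ : Finset J) :=
  Finset J ⊕ Σ _ : Bool × ↥(H.erase e₁), Finset J

namespace FactorIndex

/-- The edge `e` such that the factor is a function of `x_e`. -/
def edge : FactorIndex H e₁ → Finset J := Sum.elim (fun _ => e₁) fun q => q.1.2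

/-- The coordinates that the factor reads from the second copy. -/
def copied : FactorIndex H e₁ → Finset J := Sum.elim id fun q => q.2 ∪ offEdge e₁ q.1.1

lemma injOn_edge_copied_inter_edge (hsub : ∀ e ∈ H, e ≠ e₁ → ¬ e ⊆ e₁) {T : Finset (Finset J)}
    (hT : T ⊆ e₁.powerset) {R : Finset (Σ _ : Bool × ↥(H.erase e₁), Finset J)}
    (hR : ∀ q ∈ R, q.2 ⊆ e₁ ∩ q.1.2) :
    Set.InjOn (fun q : FactorIndex H e₁ => (q.edge, q.copied ∩ q.edge)) (T.disjSum R) := by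
  rintro (A | ⟨⟨ι, e, he⟩, A⟩) hA (A' | ⟨⟨ι', e', he'⟩, A'⟩) hA' heq <;>
    simp only [edge, copied, Sum.elim_inl, Sum.elim_inr, id_eq, Prod.mk.injEq] at heq
  · rw [mem_coe, inl_mem_disjSum] at hA hA'
    rw [inter_eq_left.2 (mem_powerset.1 (hT hA)), inter_eq_left.2 (mem_powerset.1 (hT hA'))]
      at heq
    rw [heq.2]
  · exact absurd heq.1.symm (ne_of_mem_erase he')
  · exact absurd heq.1 (ne_of_mem_erase he)
  · obtain ⟨rfl, heq⟩ := heq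
    rw [mem_coe, inr_mem_disjSum] at hA hA'
    obtain ⟨rfl, rfl⟩ := eq_and_eq_of_union_offEdge_inter_eq
      (hsub e (mem_of_mem_erase he) (ne_of_mem_erase he)) (hR _ hA) (hR _ hA') heq
    rfl

end FactorIndex

-- Cauchy–Schwarz only ever produces products of distinct factors, which the condition controls.
lemma HLinearForms.abs_expect_cubeProd_sub_one_le (h : HLinearForms H ν η) (he₁ : e₁ ∈ H)
    (hsub : ∀ e ∈ H, e ≠ e₁ → ¬ e ⊆ e₁) {N : Bool → (e : Finset J) → ((i : ↥e) → V i) → ℝ}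
    (hN : ∀ ι e, N ι e = 1 ∨ N ι e = ν e) {T : Finset (Finset J)} (hT : T ⊆ e₁.powerset)
    (R : Finset (Bool × ↥(H.erase e₁))) {S : Finset J} (hS : S ⊆ e₁) :
    |(𝔼 p : PairSpace V, (∏ A ∈ T, ν e₁ (restr e₁ (A.piecewise p.2 p.1))) *
      ∏ i ∈ R, cubeProd (offEdge e₁ i.1) (S ∩ i.2) (fun x => N i.1 i.2 (restr i.2 x)) p) - 1|
      ≤ η := by
  classical
  let R' : Finset (Σ _ : Bool × ↥(H.erase e₁), Finset J) :=
    (R.filter fun i => N i.1 i.2 ≠ 1).sigma fun i => (S ∩ i.2).powerset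
  have hR' : ∀ q ∈ R', q.2 ⊆ e₁ ∩ q.1.2 := fun q hq =>
    (mem_powerset.1 (mem_sigma.1 hq).2).trans (inter_subset_inter_right hS)
  have hedge : ∀ q ∈ T.disjSum R', FactorIndex.edge q ∈ H := by
    rintro (_ | q) -
    exacts [he₁, mem_of_mem_erase q.1.2.2]
  convert h.abs_expect_prod_sub_one_le FactorIndex.edge FactorIndex.copied hedge
    (FactorIndex.injOn_edge_copied_inter_edge hsub hT hR') using 4 with p
  rw [prod_disjSum, prod_sigma, prod_filter]
  refine congrArg _ (prod_congr rfl fun i _ => ?_)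
  rcases eq_or_ne (N i.1 i.2) 1 with hi | hi
  · simp [cubeProd, hi]
  · rw [if_pos hi, (hN i.1 i.2).resolve_left hi]
    rfl

section Factors

variable {g N : Bool → (e : Finset J) → ((i : ↥e) → V i) → ℝ}

/-- The factors `g_e^{(ι)}(x_e^{(ι)})`, `e ≠ e₁`, of the theorem, with majorants `N`. -/
def edgeFactor (hg : ∀ ι, ∀ e ∈ H.erase e₁, 0 ≤ g ι e) (hgN : ∀ ι, ∀ e ∈ H.erase e₁, g ι e ≤ N ι e)
    (i : Bool × ↥(H.erase e₁)) : MajorizedFactor V where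
  supp := i.2
  base := offEdge e₁ i.1
  val := fun x => g i.1 i.2 (restr i.2 x)
  maj := fun x => N i.1 i.2 (restr i.2 x)
  val_nonneg _ := hg i.1 i.2 i.2.2 _
  val_le_maj _ := hgN i.1 i.2 i.2.2 _
  dependsOn_val _ _ hxy := congrArg _ (funext fun j => hxy j.1 j.2)
  dependsOn_maj _ _ hxy := congrArg _ (funext fun j => hxy j.1 j.2)

variable (hg : ∀ ι, ∀ e ∈ H.erase e₁, 0 ≤ g ι e) (hgN : ∀ ι, ∀ e ∈ H.erase e₁, g ι e ≤ N ι e)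

lemma abs_majorantAverage_edgeFactor_sub_one_le (h : HLinearForms H ν η) (he₁ : e₁ ∈ H)
    (hsub : ∀ e ∈ H, e ≠ e₁ → ¬ e ⊆ e₁) (hN : ∀ ι e, N ι e = 1 ∨ N ι e = ν e) {S : Finset J}
    (hS : S ⊆ e₁) (k : J) : |majorantAverage (edgeFactor hg hgN) S k - 1| ≤ η := by
  have hcube := h.abs_expect_cubeProd_sub_one_le he₁ hsub hN (empty_subset _)
    (univ.filter fun i => k ∉ i.2.1) hS
  simp only [prod_empty, one_mul] at hcube
  exact hcube

-- No factor involves all of `e₁`, so all of them have been replaced by their majorants.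
lemma abs_doubledAverage_edgeFactor_edge_le (h : HLinearForms H ν η) (he₁ : e₁ ∈ H)
    (hinc : ∀ e ∈ H, e ≠ e₁ → ¬ e ⊆ e₁ ∧ ¬ e₁ ⊆ e) (hN : ∀ ι e, N ι e = 1 ∨ N ι e = ν e) :
    |doubledAverage (fun x => ν e₁ (restr e₁ x) - 1) (edgeFactor hg hgN) e₁| ≤
      2 ^ 2 ^ #e₁ * η := by
  have hcurrent : ∀ i, (edgeFactor hg hgN i).current e₁ = fun x => N i.1 i.2 (restr i.2 x) :=
    fun i => MajorizedFactor.current_of_not_subset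
      (hinc i.2 (mem_of_mem_erase i.2.2) (ne_of_mem_erase i.2.2)).2
  have hdoubled : doubledAverage (fun x => ν e₁ (restr e₁ x) - 1) (edgeFactor hg hgN) e₁ =
      𝔼 p : PairSpace V, (∏ A ∈ e₁.powerset, (ν e₁ (restr e₁ (A.piecewise p.2 p.1)) - 1)) *
        ∏ i : Bool × ↥(H.erase e₁),
          cubeProd (offEdge e₁ i.1) (e₁ ∩ i.2) (fun x => N i.1 i.2 (restr i.2 x)) p := by
    simp only [doubledAverage, hcurrent]
    refine expect_congr rfl fun p _ => congrArg (· * _) (prod_congr rfl fun A _ => ?_)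
    rw [union_empty]
  rw [hdoubled, ← card_powerset]
  exact abs_expect_prod_sub_one_mul_le (powerset_nonempty e₁)
    (fun A (p : PairSpace V) => ν e₁ (restr e₁ (A.piecewise p.2 p.1))) _
    fun T hT => h.abs_expect_cubeProd_sub_one_le he₁ (fun e he hne => (hinc e he hne).1) hN hT
      univ subset_rfl

-- Exchanging the coordinates of `y` and `z⁰` in `e₁` leaves an average over a pair of points only.
lemma avg_edge_mul_prod_eq_doubledAverage [∀ j, Nonempty (V j)] :
    avg (fun t : ((j : J) → V j) × ((j : J) → V j) × ((j : J) → V j) =>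
      (ν e₁ (restr e₁ t.1) - 1) *
      ∏ ι : Bool, ∏ e ∈ H.erase e₁,
        g ι e (restr e (fun j => if j ∈ e₁ then t.1 j
          else if ι then t.2.2 j else t.2.1 j))) =
      doubledAverage (fun x => ν e₁ (restr e₁ x) - 1) (edgeFactor hg hgN) ∅ := by
  let f : PairSpace V → ℝ := fun p => (ν e₁ (restr e₁ p.1) - 1) *
    ∏ ι : Bool, ∏ e ∈ H.erase e₁, g ι e (restr e ((offEdge e₁ ι).piecewise p.2 p.1))
  let exchange : PairSpace V × (∀ j, V j) → PairSpace V × (∀ j, V j) := fun q =>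
    ((e₁.piecewise q.2 q.1.1, q.1.2), e₁.piecewise q.1.1 q.2)
  have hexchange : Function.Involutive exchange := fun q => by
    simp [exchange, piecewise_same]
  have hedge : ∀ y z : ∀ j, V j, restr e₁ (e₁.piecewise y z) = restr e₁ y := fun y z =>
    funext fun j => piecewise_eq_of_mem _ _ _ j.2
  have hpoint : ∀ (y z₀ z₁ : ∀ j, V j) (ι : Bool),
      (offEdge e₁ ι).piecewise z₁ (e₁.piecewise y z₀) =
        fun j => if j ∈ e₁ then y j else if ι then z₁ j else z₀ j := fun y z₀ z₁ ι => by
    ext j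
    by_cases hj : j ∈ e₁ <;> cases ι <;> simp [offEdge, hj]
  have hdoubled : doubledAverage (fun x => ν e₁ (restr e₁ x) - 1) (edgeFactor hg hgN) ∅ =
      𝔼 p, f p := by
    refine expect_congr rfl fun p _ => ?_
    simp only [cubeProd_empty, empty_inter, MajorizedFactor.current, empty_subset, if_true,
      piecewise_empty, f]
    rw [Fintype.prod_prod_type]
    exact congrArg _ (prod_congr rfl fun ι _ => prod_coe_sort (H.erase e₁) fun e =>
      g ι e (restr e ((offEdge e₁ ι).piecewise p.2 p.1)))
  rw [hdoubled, ← expect_fst_of_involutive hexchange f, avg_eq_expect]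
  refine Fintype.expect_equiv (Equiv.prodComm _ _) _ _ fun t => ?_
  simp only [f, exchange, Equiv.prodComm_apply, Prod.fst_swap, Prod.snd_swap, hedge, hpoint]

lemma abs_doubledAverage_edgeFactor_empty_pow_le [∀ j, Nonempty (V j)]
    (h : HLinearForms H ν η) (hη : η ≤ 1) (he₁ : e₁ ∈ H)
    (hinc : ∀ e ∈ H, e ≠ e₁ → ¬ e ⊆ e₁ ∧ ¬ e₁ ⊆ e) (hN : ∀ ι e, N ι e = 1 ∨ N ι e = ν e) :
    |doubledAverage (fun x => ν e₁ (restr e₁ x) - 1) (edgeFactor hg hgN) ∅| ^ 2 ^ #e₁ ≤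
      4 ^ 2 ^ #e₁ * η := by
  have hmaj : ∀ S ⊆ e₁, ∀ k, |majorantAverage (edgeFactor hg hgN) S k| ≤ 2 := fun S hS k => by
    have hone := abs_majorantAverage_edgeFactor_sub_one_le hg hgN h he₁
      (fun e he hne => (hinc e he hne).1) hN hS k
    rw [abs_le] at hone ⊢
    constructor <;> linarith
  have hfinal := abs_doubledAverage_edgeFactor_edge_le hg hgN h he₁ hinc hN
  have hiter := abs_doubledAverage_div_pow_le (fun x => ν e₁ (restr e₁ x) - 1)
    (fun i => disjoint_offEdge e₁ i.1) two_pos hmaj e₁ subset_rfl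
  rw [div_pow, div_le_iff₀ (by positivity)] at hiter
  calc _ ≤ _ := hiter
    _ ≤ (2 ^ 2 ^ #e₁ * η) * 2 ^ 2 ^ #e₁ := by
      gcongr
      exact (half_le_self (abs_nonneg _)).trans hfinal
    _ = 4 ^ 2 ^ #e₁ * η := by
      rw [mul_right_comm, ← mul_pow]
      norm_num

end Factors

end LinearForms

theorem strong_linear_forms_general (γ : ℝ) (hγ : 0 < γ)
    (J : Type) [Fintype J] [DecidableEq J] :
    ∃ η : ℝ, 0 < η ∧
    ∀ (V : J → Type) [∀ j, Fintype (V j)] [∀ j, Nonempty (V j)]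
      (H : Finset (Finset J)) (ν : (e : Finset J) → ((i : ↥e) → V i) → ℝ),
      HLinearForms H ν η →
      ∀ e₁ ∈ H, (∀ e ∈ H, e ≠ e₁ → ¬ e ⊆ e₁ ∧ ¬ e₁ ⊆ e) →
      ∀ g : Bool → (e : Finset J) → ((i : ↥e) → V i) → ℝ,
      (∀ ι : Bool, ∀ e ∈ H, e ≠ e₁ → (∀ x, 0 ≤ g ι e x) ∧
        ((∀ x, g ι e x ≤ 1) ∨ (∀ x, g ι e x ≤ ν e x))) →
      |avg (fun t : ((j : J) → V j) × ((j : J) → V j) × ((j : J) → V j) =>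
        (ν e₁ (restr e₁ t.1) - 1) *
        ∏ ι : Bool, ∏ e ∈ H.erase e₁,
          g ι e (restr e (fun j => if j ∈ e₁ then t.1 j
            else if ι then t.2.2 j else t.2.1 j)))| ≤ γ := by
  let c := min 1 (γ / 4)
  have hc : 0 < c := by positivity
  have hc_one : c ≤ 1 := min_le_left _ _
  refine ⟨c ^ 2 ^ Fintype.card J, by positivity,
    fun V _ _ H ν h e₁ he₁ hinc g hg => ?_⟩
  have hmajorant : ∀ ι e, ∃ n, (n = 1 ∨ n = ν e) ∧ (e ∈ H.erase e₁ → g ι e ≤ n) := fun ι e => by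
    by_cases hle : g ι e ≤ 1
    · exact ⟨1, .inl rfl, fun _ => hle⟩
    · exact ⟨ν e, .inr rfl, fun he =>
        (hg ι e (mem_of_mem_erase he) (ne_of_mem_erase he)).2.resolve_left hle⟩
  choose N hN hgN using hmajorant
  have hg_nonneg : ∀ ι, ∀ e ∈ H.erase e₁, 0 ≤ g ι e := fun ι e he =>
    (hg ι e (mem_of_mem_erase he) (ne_of_mem_erase he)).1
  rw [avg_edge_mul_prod_eq_doubledAverage hg_nonneg hgN]
  refine le_of_pow_le_pow_left₀ (n := 2 ^ #e₁) (by positivity) hγ.le ?_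
  calc _ ≤ 4 ^ 2 ^ #e₁ * c ^ 2 ^ Fintype.card J :=
        abs_doubledAverage_edgeFactor_empty_pow_le hg_nonneg hgN h
          (pow_le_one₀ hc.le hc_one) he₁ hinc hN
    _ ≤ 4 ^ 2 ^ #e₁ * c ^ 2 ^ #e₁ := by
        gcongr 4 ^ 2 ^ #e₁ * ?_
        exact pow_le_pow_of_le_one hc.le hc_one
          (Nat.pow_le_pow_right two_pos (card_le_univ e₁))
    _ = (4 * c) ^ 2 ^ #e₁ := (mul_pow _ _ _).symm
    _ ≤ γ ^ 2 ^ #e₁ := by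
        gcongr
        linarith [min_le_right 1 (γ / 4)]

/-- **Strong linear forms.** For every `γ > 0` and finite `J` there exists `η > 0` such
that: for every hypergraph system `(J, (V_j), r, H)`, every weighted hypergraph `ν`
satisfying the `H`-linear forms condition within `η`, every `e₁ ∈ H`, and all functions
`g_e^{(ι)} : V_e → ℝ≥0` (`ι ∈ {0,1}`, `e ∈ H ∖ {e₁}`) with each `g_e^{(ι)} ≤ 1` or
`g_e^{(ι)} ≤ ν_e` pointwise, one has
`|E[(ν_{e₁}(x_{e₁}) - 1) ∏_{ι} ∏_{e ∈ H ∖ {e₁}} g_e^{(ι)}(x_e^{(ι)})]| ≤ γ`,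
the expectation being over independent uniform `x_j^{(0)}, x_j^{(1)} ∈ V_j` for
`j ∈ J ∖ e₁` and a single uniform `x_j ∈ V_j` for `j ∈ e₁`. Here this expectation is
realized as an average over triples `(y, z⁰, z¹) ∈ V_J³`, with
`x^{(ι)}_j := y j` for `j ∈ e₁` and `x^{(ι)}_j := z^{(ι)} j` for `j ∉ e₁`. -/
theorem strong_linear_forms (γ : ℝ) (hγ : 0 < γ)
    (J : Type) [Fintype J] [DecidableEq J] :
    ∃ η : ℝ, 0 < η ∧
    ∀ (V : J → Type) [∀ j, Fintype (V j)] [∀ j, Nonempty (V j)]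
      (r : ℕ), 1 ≤ r → ∀ H : Finset (Finset J), (∀ e ∈ H, e.card = r) →
      ∀ ν : (e : Finset J) → ((i : ↥e) → V i) → ℝ,
      (∀ e ∈ H, ∀ x, 0 ≤ ν e x) →
      HLinearForms H ν η →
      ∀ e₁ ∈ H,
      ∀ g : Bool → (e : Finset J) → ((i : ↥e) → V i) → ℝ,
      (∀ ι : Bool, ∀ e ∈ H, e ≠ e₁ → (∀ x, 0 ≤ g ι e x) ∧
        ((∀ x, g ι e x ≤ 1) ∨ (∀ x, g ι e x ≤ ν e x))) →
      |avg (fun t : ((j : J) → V j) × ((j : J) → V j) × ((j : J) → V j) =>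
        (ν e₁ (restr e₁ t.1) - 1) *
        ∏ ι : Bool, ∏ e ∈ H.erase e₁,
          g ι e (restr e (fun j => if j ∈ e₁ then t.1 j
            else if ι then t.2.2 j else t.2.1 j)))| ≤ γ := by
  obtain ⟨η, hη, hgeneral⟩ := strong_linear_forms_general γ hγ J
  exact ⟨η, hη, fun V _ _ r _ H hr ν _ h e₁ he₁ => hgeneral V H ν h e₁ he₁ fun e he hne =>
    have hanti : IsAntichain (· ⊆ ·) (H : Set (Finset J)) := Set.Sized.isAntichain hr
    ⟨hanti he he₁ hne, hanti he₁ he hne.symm⟩⟩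
end

section
/- For every δ > 0 there exist η > 0 and N₀ such that the following holds for all N ≥ N₀. Let S ⊆ Z_N × Z_N be nonempty and set ν := (N²/|S|)·1_S. Suppose that |E[∏_{factors in F} ν(·) | x, x', y, y', z, z' ∈ Z_N] − 1| ≤ η for every nonempty subset F of the twelve factors ν(x,y), ν(x',y), ν(x,y'), ν(x',y'), ν(x, z−x), ν(x', z−x'), ν(x, z'−x), ν(x', z'−x'), ν(z−y, y), ν(z−y', y'), ν(z'−y, y), ν(z'−y', y'). Then every subset A ⊆ S containing no corner satisfies |A| ≤ δ|S|. -/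
/-!
Put `f := (N²/|S|)·1_A ≤ ν` and consider the tripartite graph on three copies of `Z_N` with edge
weights `f(x, y)`, `f(z - y, y)`, `f(x, z - x)`. A triangle `(x, y, z)` is a corner with difference
`d = z - x - y`, so if `A` is corner-free then only the trivial triangles `z = x + y` carry weight
and the weighted triangle density is at most `N³/|S|²`. The linear forms condition itself forces
this to be small for large `N`: the degenerate choice `x = x'`, `y = y'`, `z = z' = x + y` alone
gives `N¹⁸ ≤ 2|S|¹¹`.

It remains to prove a removal lemma for weighted graphs majorised by a pseudorandom weight: if the
triangle density is small, then a triangle-free graph carries almost all of the weight of each of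
the three edge functions. Each point of `A` gives a trivial triangle, one of whose edges is missing
from the triangle-free graph, so the total mass `|A|/|S|` of `f` is then small. The removal lemma
rests on three results.

* Weak regularity. An energy increment argument gives a partition of the vertices into boundedly
  many cells such that averaging `F ≤ ν` over pairs of cells produces `g` with `0 ≤ g ≤ 2` and with
  `F - g` small in cut norm. Cells that are too small are discarded; that `ν - 1` is small in cut
  norm makes this harmless and bounds `g`.
* Counting. If each `F_i` is close to the bounded `g_i` in cut norm, then the triangle densities of
  `F` and `g` are close. This is densification (Conlon, Fox and Zhao): the three sparse weights are
  introduced one at a time. By Cauchy–Schwarz, the error made with a sparse weight `a` in one place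
  is controlled by the second moment of `D(x, y) = 𝔼_z (F₂ F₃ - g₂ g₃)` weighted by `a`; the linear
  forms condition allows `a` to be replaced by `1`, and the unweighted second moment is the counting
  statement with one sparse weight fewer, tested against a truncation of `D`.
* Removal for the bounded model. The triangle removal lemma is upgraded so that the triangle-free
  graph is a union of boxes of the partition that carries `g`. This is what allows the removed
  weight of `F` to be compared with that of `g`.

The bounded model must be majorised by the weight it is compared with, which fails for `g` and `ν`.
Therefore counting is applied to `F/4`, `g/4` and the weight `(1 + ν)/2`, which inherits the linear
forms condition because the averages involved are affine in each of the twelve factors.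
-/

open Finset

/-- The twelve factors `ν(x,y), ν(x',y), ν(x,y'), ν(x',y'), ν(x,z-x), ν(x',z-x'),
ν(x,z'-x), ν(x',z'-x'), ν(z-y,y), ν(z-y',y'), ν(z'-y,y), ν(z'-y',y')` appearing in the
linear forms condition for corners. -/
noncomputable def cornerFactors {N : ℕ} [NeZero N] (ν : ZMod N × ZMod N → ℝ)
    (x x' y y' z z' : ZMod N) : Fin 12 → ℝ :=
  ![ν (x, y), ν (x', y), ν (x, y'), ν (x', y'),
    ν (x, z - x), ν (x', z - x'), ν (x, z' - x), ν (x', z' - x'),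
    ν (z - y, y), ν (z - y', y'), ν (z' - y, y), ν (z' - y', y')]

open scoped BigOperators

namespace CornerRemoval

/-! ### Averages over products -/

section Averages

variable {ι W X Y : Type*} [Fintype ι] [Fintype W] [Fintype X] [Fintype Y]

lemma expect_prod_type (f : X × Y → ℝ) : 𝔼 p, f p = 𝔼 x, 𝔼 y, f (x, y) := by
  rw [← univ_product_univ, expect_product]

lemma abs_mul_le_mul {s s' t t' : ℝ} (hs : |s| ≤ t) (hs' : |s'| ≤ t') : |s * s'| ≤ t * t' := by
  rw [abs_mul]
  exact mul_le_mul hs hs' (abs_nonneg _) ((abs_nonneg _).trans hs)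

lemma sq_expect_mul_le {P w : ι → ℝ} (hP : ∀ i, |P i| ≤ w i) (f : ι → ℝ) :
    (𝔼 i, P i * f i) ^ 2 ≤ (𝔼 i, w i) * 𝔼 i, w i * f i ^ 2 := by
  have hw : ∀ i, 0 ≤ w i := fun i ↦ (abs_nonneg _).trans (hP i)
  simp only [Fintype.expect_eq_sum_div_card]
  rw [div_mul_div_comm, div_pow, ← sq]
  gcongr
  refine sum_sq_le_sum_mul_sum_of_sq_le_mul _ (fun i _ ↦ hw i)
    (fun i _ ↦ mul_nonneg (hw i) (sq_nonneg _)) fun i _ ↦ ?_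
  calc (P i * f i) ^ 2 = |P i| ^ 2 * f i ^ 2 := by rw [mul_pow, sq_abs]
    _ ≤ w i ^ 2 * f i ^ 2 := by gcongr; exact hP i
    _ = w i * (w i * f i ^ 2) := by ring

lemma sq_expect_expect_mul_le {P w : X → Y → ℝ} (hP : ∀ x y, |P x y| ≤ w x y) (f : X → Y → ℝ) :
    (𝔼 x, 𝔼 y, P x y * f x y) ^ 2 ≤ (𝔼 x, 𝔼 y, w x y) * 𝔼 x, 𝔼 y, w x y * f x y ^ 2 := by
  simpa only [expect_prod_type] using
    sq_expect_mul_le (P := fun p : X × Y ↦ P p.1 p.2) (fun p ↦ hP p.1 p.2) fun p ↦ f p.1 p.2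

/-- Two applications of Cauchy–Schwarz eliminate first `P` and then `Q`. -/
lemma expect_mul_mul_pow_four_le (h : X → Y → ℝ) {P p : X → W → ℝ} {Q q : Y → W → ℝ} {A B C : ℝ}
    (hP : ∀ x w, |P x w| ≤ p x w) (hQ : ∀ y w, |Q y w| ≤ q y w) (hA : 𝔼 x, 𝔼 w, p x w ≤ A)
    (hB : 𝔼 y, 𝔼 y', 𝔼 w, q y w * q y' w ≤ B)
    (hC : 𝔼 y, 𝔼 y', 𝔼 w, q y w * q y' w * (𝔼 x, p x w * (h x y * h x y')) ^ 2 ≤ C) :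
    (𝔼 x, 𝔼 y, 𝔼 w, h x y * (P x w * Q y w)) ^ 4 ≤ A ^ 2 * (B * C) := by
  have hp : ∀ x w, 0 ≤ p x w := fun x w ↦ (abs_nonneg _).trans (hP x w)
  have hq : ∀ y w, 0 ≤ q y w := fun y w ↦ (abs_nonneg _).trans (hQ y w)
  have hA₀ : 0 ≤ 𝔼 x, 𝔼 w, p x w := expect_nonneg fun x _ ↦ expect_nonneg fun w _ ↦ hp x w
  have hB₀ : 0 ≤ 𝔼 y, 𝔼 y', 𝔼 w, q y w * q y' w := expect_nonneg fun y _ ↦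
    expect_nonneg fun y' _ ↦ expect_nonneg fun w _ ↦ mul_nonneg (hq y w) (hq y' w)
  have hC₀ : 0 ≤ 𝔼 y, 𝔼 y', 𝔼 w, q y w * q y' w * (𝔼 x, p x w * (h x y * h x y')) ^ 2 :=
    expect_nonneg fun y _ ↦ expect_nonneg fun y' _ ↦ expect_nonneg fun w _ ↦
      mul_nonneg (mul_nonneg (hq y w) (hq y' w)) (sq_nonneg _)
  set M := 𝔼 y, 𝔼 y', 𝔼 w, Q y w * Q y' w * 𝔼 x, p x w * (h x y * h x y') with hM
  have elim_P : (𝔼 x, 𝔼 y, 𝔼 w, h x y * (P x w * Q y w)) ^ 2 ≤ (𝔼 x, 𝔼 w, p x w) * M := by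
    convert sq_expect_expect_mul_le hP fun x w ↦ 𝔼 y, h x y * Q y w using 2
    · simp only [mul_expect, expect_comm (univ : Finset W) (univ : Finset Y)]
      exact expect_congr rfl fun x _ ↦ expect_congr rfl fun y _ ↦ expect_congr rfl fun w _ ↦ by ring
    · simp only [sq, expect_mul_expect]
      simp only [hM, mul_expect, expect_comm (univ : Finset X) (univ : Finset W),
        expect_comm (univ : Finset X) (univ : Finset Y),
        expect_comm (univ : Finset W) (univ : Finset Y)]
      exact expect_congr rfl fun y _ ↦ expect_congr rfl fun y' _ ↦ expect_congr rfl fun w _ ↦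
        expect_congr rfl fun x _ ↦ by ring
  have elim_Q : M ^ 2 ≤ (𝔼 y, 𝔼 y', 𝔼 w, q y w * q y' w) *
      𝔼 y, 𝔼 y', 𝔼 w, q y w * q y' w * (𝔼 x, p x w * (h x y * h x y')) ^ 2 := by
    simpa only [expect_prod_type] using sq_expect_mul_le
      (P := fun v : Y × Y × W ↦ Q v.1 v.2.2 * Q v.2.1 v.2.2)
      (w := fun v : Y × Y × W ↦ q v.1 v.2.2 * q v.2.1 v.2.2)
      (fun v ↦ abs_mul_le_mul (hQ _ _) (hQ _ _))
      fun v ↦ 𝔼 x, p x v.2.2 * (h x v.1 * h x v.2.1)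
  calc (𝔼 x, 𝔼 y, 𝔼 w, h x y * (P x w * Q y w)) ^ 4
      = ((𝔼 x, 𝔼 y, 𝔼 w, h x y * (P x w * Q y w)) ^ 2) ^ 2 := by ring
    _ ≤ ((𝔼 x, 𝔼 w, p x w) * M) ^ 2 := by gcongr
    _ ≤ A ^ 2 * (B * C) := by
        rw [mul_pow]
        exact mul_le_mul (pow_le_pow_left₀ hA₀ hA 2)
          (elim_Q.trans (mul_le_mul hB hC hC₀ (hB₀.trans hB))) (sq_nonneg M) (sq_nonneg A)

end Averages

/-! ### Families whose subproducts average to almost one -/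

/-- Every subproduct of the family `f` of functions on `Ω` has average within `γ` of `1`; this is
the shape of a linear forms condition. The empty subproduct is included, so `0 ≤ γ`. -/
def SubproductsNearOne {Ω ι : Type*} [Fintype Ω] (γ : ℝ) (f : Ω → ι → ℝ) : Prop :=
  ∀ T : Finset ι, |(𝔼 ω, ∏ i ∈ T, f ω i) - 1| ≤ γ

namespace SubproductsNearOne

variable {Ω Ω' ι κ : Type*} [Fintype Ω] [Fintype Ω'] {γ : ℝ} {f : Ω → ι → ℝ}

lemma expect_prod_le (h : SubproductsNearOne γ f) (T : Finset ι) :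
    𝔼 ω, ∏ i ∈ T, f ω i ≤ 1 + γ := by
  linarith [(abs_le.1 (h T)).2]

lemma comp (h : SubproductsNearOne γ f) (e : Ω' ≃ Ω) (σ : κ ↪ ι) :
    SubproductsNearOne γ fun ω k ↦ f (e ω) (σ k) := fun T ↦ by
  rw [Fintype.expect_equiv e _ (fun ω ↦ ∏ k ∈ T, f ω (σ k)) fun _ ↦ rfl]
  simpa only [prod_map] using h (T.map σ)

lemma half_one_add (h : SubproductsNearOne γ f) :
    SubproductsNearOne γ fun ω i ↦ (1 + f ω i) / 2 := fun T ↦ by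
  have expand (ω : Ω) : ∏ i ∈ T, (1 + f ω i) / 2 = 𝔼 U ∈ T.powerset, ∏ i ∈ U, f ω i := by
    rw [prod_div_distrib, prod_one_add, expect_eq_sum_div_card, card_powerset, prod_const]
    norm_num
  calc |(𝔼 ω, ∏ i ∈ T, (1 + f ω i) / 2) - 1|
      = |𝔼 U ∈ T.powerset, ((𝔼 ω, ∏ i ∈ U, f ω i) - 1)| := by
        rw [expect_sub_distrib, expect_const (powerset_nonempty T), expect_comm]
        simp only [expand]
    _ ≤ γ := (abs_expect_le _ _).trans (expect_le (powerset_nonempty T) fun U _ ↦ h U)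

lemma ite_one [DecidableEq ι] (h : SubproductsNearOne γ f) (s : Finset ι) :
    SubproductsNearOne γ fun ω i ↦ if i ∈ s then f ω i else 1 := fun T ↦ by
  simpa only [prod_ite_mem] using h (T ∩ s)

lemma abs_expect_prod_mul_prod_sub_one_le (h : SubproductsNearOne γ f) {T U : Finset ι}
    (hTU : Disjoint T U) (hU : U.Nonempty) :
    |𝔼 ω, (∏ i ∈ T, f ω i) * ∏ i ∈ U, (f ω i - 1)| ≤ 2 ^ #U * γ := by
  classical
  induction hU using Nonempty.cons_induction generalizing T with
  | singleton i =>
    have hi : i ∉ T := disjoint_singleton_right.1 hTU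
    calc |𝔼 ω, (∏ i ∈ T, f ω i) * ∏ i ∈ {i}, (f ω i - 1)|
        = |((𝔼 ω, ∏ j ∈ insert i T, f ω j) - 1) - ((𝔼 ω, ∏ j ∈ T, f ω j) - 1)| := by
          rw [sub_sub_sub_cancel_right, ← expect_sub_distrib]
          simp only [prod_insert hi, prod_singleton, mul_sub_one, mul_comm]
      _ ≤ γ + γ := (abs_sub _ _).trans (add_le_add (h _) (h _))
      _ = 2 ^ #{i} * γ := by rw [card_singleton]; ring
  | cons i U hi _ ih =>
    rw [cons_eq_insert, disjoint_insert_right] at hTU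
    have hiT := ih (T := insert i T) (disjoint_insert_left.2 ⟨hi, hTU.2⟩)
    calc |𝔼 ω, (∏ i ∈ T, f ω i) * ∏ i ∈ cons i U hi, (f ω i - 1)|
        = |(𝔼 ω, (∏ j ∈ insert i T, f ω j) * ∏ j ∈ U, (f ω j - 1)) -
            𝔼 ω, (∏ j ∈ T, f ω j) * ∏ j ∈ U, (f ω j - 1)| := by
          rw [← expect_sub_distrib]
          simp only [prod_insert hTU.1, prod_cons]
          exact congrArg _ (expect_congr rfl fun ω _ ↦ by ring)
      _ ≤ 2 ^ #U * γ + 2 ^ #U * γ := (abs_sub _ _).trans (add_le_add hiT (ih hTU.2))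
      _ = 2 ^ #(cons i U hi) * γ := by rw [card_cons]; ring

end SubproductsNearOne

/-! ### The linear forms condition -/

section LinearForms

variable {X Y Z : Type*}

/-- The edges of the octahedron `K_{2,2,2}`, the blow-up of a triangle, weighted by `a` between `X`
and `Y`, by `b` between `Y` and `Z` and by `c` between `Z` and `X`. -/
def octahedronFactors (a : X → Y → ℝ) (b : Y → Z → ℝ) (c : Z → X → ℝ) :
    X × X × Y × Y × Z × Z → Fin 12 → ℝ
  | (x, x', y, y', z, z') =>
    ![a x y, a x' y, a x y', a x' y',
      c z x, c z x', c z' x, c z' x',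
      b y z, b y' z, b y z', b y' z']

variable [Fintype X] [Fintype Y] [Fintype Z]

/-- The linear forms condition for the weights `a`, `b`, `c` on the three parts of a complete
tripartite graph: any set of edges of a random octahedron has average weight almost one. -/
def LinearFormsCondition (γ : ℝ) (a : X → Y → ℝ) (b : Y → Z → ℝ) (c : Z → X → ℝ) : Prop :=
  SubproductsNearOne γ (octahedronFactors a b c)

namespace LinearFormsCondition

variable {γ : ℝ} {a : X → Y → ℝ} {b : Y → Z → ℝ} {c : Z → X → ℝ}

lemma mono {γ' : ℝ} (h : LinearFormsCondition γ a b c) (hγ : γ ≤ γ') :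
    LinearFormsCondition γ' a b c :=
  fun T ↦ (h T).trans hγ

lemma rotate (h : LinearFormsCondition γ a b c) : LinearFormsCondition γ b c a := by
  let e : Y × Y × Z × Z × X × X ≃ X × X × Y × Y × Z × Z :=
    { toFun := fun (y, y', z, z', x, x') ↦ (x, x', y, y', z, z')
      invFun := fun (x, x', y, y', z, z') ↦ (y, y', z, z', x, x') }
  let σ : Fin 12 ↪ Fin 12 := ⟨![8, 9, 10, 11, 0, 2, 1, 3, 4, 6, 5, 7], by decide⟩
  unfold LinearFormsCondition
  convert h.comp e σ using 3 with v i
  obtain ⟨y, y', z, z', x, x'⟩ := v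
  fin_cases i <;> rfl

lemma one_left (h : LinearFormsCondition γ a b c) : LinearFormsCondition γ 1 b c := by
  unfold LinearFormsCondition
  convert h.ite_one {4, 5, 6, 7, 8, 9, 10, 11} using 3 with v i
  fin_cases i <;> rfl

lemma half_one_add (h : LinearFormsCondition γ a b c) :
    LinearFormsCondition γ (fun x y ↦ (1 + a x y) / 2) (fun y z ↦ (1 + b y z) / 2)
      (fun z x ↦ (1 + c z x) / 2) := by
  unfold LinearFormsCondition
  convert SubproductsNearOne.half_one_add h using 3 with v i
  fin_cases i <;> rfl

lemma expect_octahedron_sub_one_le (h : LinearFormsCondition γ a b c) :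
    𝔼 y, 𝔼 y', 𝔼 z, 𝔼 z', b y z * b y z' * (b y' z * b y' z') *
      (𝔼 x, c z x * c z' x * ((a x y - 1) * (a x y' - 1))) ^ 2 ≤ 2 ^ 4 * γ := by
  have hU := (abs_le.1 (h.abs_expect_prod_mul_prod_sub_one_le
    (T := {4, 5, 6, 7, 8, 9, 10, 11}) (U := {0, 1, 2, 3}) (by decide) (by decide))).2
  refine le_of_eq_of_le ?_ hU
  have prod_T (f : Fin 12 → ℝ) : ∏ i ∈ {4, 5, 6, 7, 8, 9, 10, 11}, f i =
      f 4 * (f 5 * (f 6 * (f 7 * (f 8 * (f 9 * (f 10 * f 11)))))) := by simp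
  have prod_U (f : Fin 12 → ℝ) : ∏ i ∈ {0, 1, 2, 3}, (f i - 1) =
      (f 0 - 1) * ((f 1 - 1) * ((f 2 - 1) * (f 3 - 1))) := by simp
  simp only [prod_T, prod_U, expect_prod_type, sq, expect_mul_expect]
  simp only [mul_expect, expect_comm (univ : Finset Y) (univ : Finset X),
    expect_comm (univ : Finset Z) (univ : Finset X)]
  refine expect_congr rfl fun x _ ↦ expect_congr rfl fun x' _ ↦ expect_congr rfl fun y _ ↦
    expect_congr rfl fun y' _ ↦ expect_congr rfl fun z _ ↦ expect_congr rfl fun z' _ ↦ ?_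
  simp only [octahedronFactors, Matrix.cons_val]
  ring

lemma expect_four_cycle_sub_one_le [Nonempty Z] (h : LinearFormsCondition γ a b c) :
    𝔼 y, 𝔼 y', (𝔼 x, (a x y - 1) * (a x y' - 1)) ^ 2 ≤ 2 ^ 4 * γ := by
  have hU := (abs_le.1 (h.abs_expect_prod_mul_prod_sub_one_le
    (T := ∅) (U := {0, 1, 2, 3}) (by decide) (by decide))).2
  refine le_of_eq_of_le ?_ hU
  have prod_U (f : Fin 12 → ℝ) : ∏ i ∈ {0, 1, 2, 3}, (f i - 1) =
      (f 0 - 1) * ((f 1 - 1) * ((f 2 - 1) * (f 3 - 1))) := by simp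
  simp only [prod_empty, one_mul, prod_U, expect_prod_type, octahedronFactors, Matrix.cons_val,
    expect_const univ_nonempty, sq, expect_mul_expect,
    expect_comm (univ : Finset Y) (univ : Finset X)]
  exact expect_congr rfl fun x _ ↦ expect_congr rfl fun x' _ ↦ expect_congr rfl fun y _ ↦
    expect_congr rfl fun y' _ ↦ by ring

lemma expect_edge_le [Nonempty X] [Nonempty Y] [Nonempty Z] (h : LinearFormsCondition γ a b c) :
    𝔼 x, 𝔼 y, a x y ≤ 1 + γ := by
  simpa [expect_prod_type, octahedronFactors] using h.expect_prod_le {0}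

lemma expect_star_le [Nonempty X] [Nonempty Y] (h : LinearFormsCondition γ a b c) :
    𝔼 x, 𝔼 z, 𝔼 z', c z x * c z' x ≤ 1 + γ := by
  simpa [expect_prod_type, octahedronFactors] using h.expect_prod_le {4, 6}

lemma expect_four_cycle_le [Nonempty X] (h : LinearFormsCondition γ a b c) :
    𝔼 y, 𝔼 y', 𝔼 z, 𝔼 z', b y z * b y z' * (b y' z * b y' z') ≤ 1 + γ := by
  simpa [expect_prod_type, octahedronFactors, mul_assoc] using h.expect_prod_le {8, 10, 9, 11}

lemma abs_expect_path_sub_one_le [Nonempty X] [Nonempty Y] [Nonempty Z]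
    (h : LinearFormsCondition γ a b c) :
    |(𝔼 x, 𝔼 y, 𝔼 z, b y z * c z x) - 1| ≤ γ := by
  simpa [expect_prod_type, octahedronFactors] using h {8, 4}

lemma abs_expect_two_paths_sub_one_le [Nonempty X] [Nonempty Y] (h : LinearFormsCondition γ a b c) :
    |(𝔼 x, 𝔼 y, 𝔼 z, 𝔼 z', b y z * c z x * (b y z' * c z' x)) - 1| ≤ γ := by
  simpa [expect_prod_type, octahedronFactors, mul_assoc] using h {8, 4, 10, 6}

end LinearFormsCondition
end LinearForms

/-! ### Densification -/

section Densification

variable {X Y Z : Type*} [Fintype X] [Fintype Y] [Fintype Z]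

/-- The average weight of a path from `x` to `y` through `Z`. -/
noncomputable def pathDensity (b : Y → Z → ℝ) (c : Z → X → ℝ) (x : X) (y : Y) : ℝ :=
  𝔼 z, b y z * c z x

/-- The weighted triangle density of a tripartite graph; the arguments of the three edge functions
are in cyclic order. -/
noncomputable def triangleDensity (a : X → Y → ℝ) (b : Y → Z → ℝ) (c : Z → X → ℝ) : ℝ :=
  𝔼 x, 𝔼 y, a x y * pathDensity b c x y

/-- The cut norm of `h` is at most `ε`, where the cut norm is taken with respect to test functions
with values in `[0, 1]`. -/
def CutLE (h : X → Y → ℝ) (ε : ℝ) : Prop :=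
  ∀ ⦃u : X → ℝ⦄ ⦃v : Y → ℝ⦄, (∀ x, u x ∈ Set.Icc (0 : ℝ) 1) → (∀ y, v y ∈ Set.Icc (0 : ℝ) 1) →
    |𝔼 x, 𝔼 y, h x y * (u x * v y)| ≤ ε

/-- `g` is a bounded approximation in cut norm of `F`, both of them majorised by the weight `ω`. -/
structure DenseModel (ε : ℝ) (ω F g : X → Y → ℝ) : Prop where
  nonneg : ∀ x y, 0 ≤ F x y
  le_weight : ∀ x y, F x y ≤ ω x y
  model_nonneg : ∀ x y, 0 ≤ g x y
  model_le_weight : ∀ x y, g x y ≤ ω x y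
  model_le_one : ∀ x y, g x y ≤ 1
  cutLE : CutLE (fun x y ↦ F x y - g x y) ε

/-- Replacing functions majorised by the weights `a`, `b`, `c` by dense models at cut distance `ε`
changes triangle densities by at most `θ`. -/
def HasTriangleCounting (ε θ : ℝ) (a : X → Y → ℝ) (b : Y → Z → ℝ) (c : Z → X → ℝ) : Prop :=
  ∀ ⦃F₁ g₁ : X → Y → ℝ⦄ ⦃F₂ g₂ : Y → Z → ℝ⦄ ⦃F₃ g₃ : Z → X → ℝ⦄,
    DenseModel ε a F₁ g₁ → DenseModel ε b F₂ g₂ → DenseModel ε c F₃ g₃ →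
      |triangleDensity F₁ F₂ F₃ - triangleDensity g₁ g₂ g₃| ≤ θ

lemma triangleDensity_rotate (a : X → Y → ℝ) (b : Y → Z → ℝ) (c : Z → X → ℝ) :
    triangleDensity a b c = triangleDensity b c a := by
  simp only [triangleDensity, pathDensity, mul_expect,
    expect_comm (univ : Finset Z) (univ : Finset X),
    expect_comm (univ : Finset Y) (univ : Finset X)]
  exact expect_congr rfl fun x _ ↦ expect_congr rfl fun y _ ↦ expect_congr rfl fun z _ ↦ by ring

lemma triangleDensity_sub_left (a a' : X → Y → ℝ) (b : Y → Z → ℝ) (c : Z → X → ℝ) :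
    triangleDensity (fun x y ↦ a x y - a' x y) b c =
      triangleDensity a b c - triangleDensity a' b c := by
  simp only [triangleDensity, sub_mul, expect_sub_distrib]

lemma expect_mul_pathDensity_sub (w : X → Y → ℝ) (b b' : Y → Z → ℝ) (c c' : Z → X → ℝ) :
    𝔼 x, 𝔼 y, w x y * (pathDensity b c x y - pathDensity b' c' x y) =
      triangleDensity w b c - triangleDensity w b' c' := by
  simp only [triangleDensity, mul_sub, expect_sub_distrib]

lemma HasTriangleCounting.rotate {ε θ : ℝ} {a : X → Y → ℝ} {b : Y → Z → ℝ} {c : Z → X → ℝ}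
    (h : HasTriangleCounting ε θ a b c) : HasTriangleCounting ε θ b c a := by
  intro F₂ g₂ F₃ g₃ F₁ g₁ h₂ h₃ h₁
  rw [← triangleDensity_rotate F₁, ← triangleDensity_rotate g₁]
  exact h h₁ h₂ h₃

lemma DenseModel.refl {ε : ℝ} (hε : 0 ≤ ε) {h : X → Y → ℝ}
    (hh : ∀ x y, h x y ∈ Set.Icc (0 : ℝ) 1) : DenseModel ε 1 h h where
  nonneg x y := (hh x y).1
  le_weight x y := (hh x y).2
  model_nonneg x y := (hh x y).1
  model_le_weight x y := (hh x y).2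
  model_le_one x y := (hh x y).2
  cutLE _ _ _ _ := by simpa

lemma DenseModel.model_mem_Icc {ε : ℝ} {ω F g : X → Y → ℝ} (h : DenseModel ε ω F g) (x : X)
    (y : Y) : g x y ∈ Set.Icc (0 : ℝ) 1 :=
  ⟨h.model_nonneg x y, h.model_le_one x y⟩

lemma DenseModel.abs_le {ε : ℝ} {ω F g : X → Y → ℝ} (h : DenseModel ε ω F g) (x : X) (y : Y) :
    |F x y| ≤ ω x y :=
  (abs_of_nonneg (h.nonneg x y)).trans_le (h.le_weight x y)

lemma DenseModel.abs_model_le {ε : ℝ} {ω F g : X → Y → ℝ} (h : DenseModel ε ω F g) (x : X)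
    (y : Y) : |g x y| ≤ ω x y :=
  (abs_of_nonneg (h.model_nonneg x y)).trans_le (h.model_le_weight x y)

lemma CutLE.abs_triangleDensity_le [Nonempty Z] {h : X → Y → ℝ} {b : Y → Z → ℝ} {c : Z → X → ℝ}
    {ε : ℝ} (hh : CutLE h ε) (hb : ∀ y z, b y z ∈ Set.Icc (0 : ℝ) 1)
    (hc : ∀ z x, c z x ∈ Set.Icc (0 : ℝ) 1) : |triangleDensity h b c| ≤ ε := by
  have slice : triangleDensity h b c = 𝔼 z, 𝔼 x, 𝔼 y, h x y * (c z x * b y z) := by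
    simp only [triangleDensity, pathDensity, mul_expect,
      expect_comm (univ : Finset Z) (univ : Finset X),
      expect_comm (univ : Finset Z) (univ : Finset Y)]
    exact expect_congr rfl fun x _ ↦ expect_congr rfl fun y _ ↦ expect_congr rfl fun z _ ↦ by ring
  rw [slice]
  exact (abs_expect_le _ _).trans
    (expect_le univ_nonempty fun z _ ↦ hh (fun x ↦ hc z x) fun y ↦ hb y z)

namespace LinearFormsCondition

variable {κ : ℝ} {a : X → Y → ℝ} {b : Y → Z → ℝ} {c : Z → X → ℝ}

/-- A pseudorandom weight `a` can be replaced by `1` against products of functions majorised by the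
other two weights. -/
lemma abs_expect_sub_one_mul_pathDensity_le [Nonempty X] [Nonempty Y]
    (h : LinearFormsCondition (κ ^ 4) a b c) (hκ : 0 ≤ κ) (hκ1 : κ ≤ 1)
    {v v' : Y → Z → ℝ} {u u' : Z → X → ℝ} (hv : ∀ y z, |v y z| ≤ b y z)
    (hv' : ∀ y z, |v' y z| ≤ b y z) (hu : ∀ z x, |u z x| ≤ c z x) (hu' : ∀ z x, |u' z x| ≤ c z x) :
    |𝔼 x, 𝔼 y, (a x y - 1) * (pathDensity v u x y * pathDensity v' u' x y)| ≤ 4 * κ := by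
  have hκ4 : κ ^ 4 ≤ 1 := pow_le_one₀ hκ hκ1
  have cauchySchwarz := expect_mul_mul_pow_four_le (A := 2) (B := 2) (C := 2 ^ 4 * κ ^ 4)
    (fun x y ↦ a x y - 1)
    (P := fun x (w : Z × Z) ↦ u w.1 x * u' w.2 x) (Q := fun y (w : Z × Z) ↦ v y w.1 * v' y w.2)
    (fun x w ↦ abs_mul_le_mul (hu w.1 x) (hu' w.2 x))
    (fun y w ↦ abs_mul_le_mul (hv y w.1) (hv' y w.2))
    (by simp only [expect_prod_type]; linarith [h.expect_star_le])
    (by simp only [expect_prod_type]; linarith [h.expect_four_cycle_le])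
    (by simpa only [expect_prod_type] using h.expect_octahedron_sub_one_le)
  have expand : 𝔼 x, 𝔼 y, (a x y - 1) * (pathDensity v u x y * pathDensity v' u' x y) =
      𝔼 x, 𝔼 y, 𝔼 w : Z × Z, (a x y - 1) * (u w.1 x * u' w.2 x * (v y w.1 * v' y w.2)) := by
    refine expect_congr rfl fun x _ ↦ expect_congr rfl fun y _ ↦ ?_
    rw [pathDensity, pathDensity, expect_mul_expect, expect_prod_type]
    simp only [mul_expect]
    exact expect_congr rfl fun z _ ↦ expect_congr rfl fun z' _ ↦ by ring
  refine (pow_le_pow_iff_left₀ (abs_nonneg _) (by positivity) four_ne_zero).1 ?_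
  rw [expand, Even.pow_abs (by decide)]
  linarith [pow_nonneg hκ 4, mul_pow 4 κ 4]

lemma cutLE_sub_one [Nonempty X] [Nonempty Y] [Nonempty Z]
    (h : LinearFormsCondition (κ ^ 4) a b c) (hκ : 0 ≤ κ) :
    CutLE (fun x y ↦ a x y - 1) (2 * κ) := by
  intro u v hu hv
  have abs_le_one {t : ℝ} (ht : t ∈ Set.Icc (0 : ℝ) 1) : |t| ≤ 1 :=
    abs_le.2 ⟨by linarith [ht.1], ht.2⟩
  have cauchySchwarz := expect_mul_mul_pow_four_le (W := Unit) (A := 1) (B := 1)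
    (fun x y ↦ a x y - 1) (fun x _ ↦ abs_le_one (hu x)) (fun y _ ↦ abs_le_one (hv y)) (by simp)
    (by simp) (by simpa using h.expect_four_cycle_sub_one_le)
  refine (pow_le_pow_iff_left₀ (abs_nonneg _) (by positivity) four_ne_zero).1 ?_
  rw [Even.pow_abs (by decide), mul_pow]
  simpa using cauchySchwarz

lemma expect_sq_pathDensity_sub_one_le [Nonempty X] [Nonempty Y] [Nonempty Z] {γ : ℝ}
    (h : LinearFormsCondition γ a b c) : 𝔼 x, 𝔼 y, (pathDensity b c x y - 1) ^ 2 ≤ 3 * γ := by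
  have expand : 𝔼 x, 𝔼 y, (pathDensity b c x y - 1) ^ 2 =
      (𝔼 x, 𝔼 y, 𝔼 z, 𝔼 z', b y z * c z x * (b y z' * c z' x)) -
        2 * (𝔼 x, 𝔼 y, 𝔼 z, b y z * c z x) + 1 := by
    have square (x : X) (y : Y) : (pathDensity b c x y - 1) ^ 2 =
        (𝔼 z, 𝔼 z', b y z * c z x * (b y z' * c z' x)) - 2 * (𝔼 z, b y z * c z x) + 1 := by
      rw [← expect_mul_expect, pathDensity]
      ring
    simp only [square, expect_add_distrib, expect_sub_distrib, ← mul_expect, Fintype.expect_const]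
  linarith [(abs_le.1 h.abs_expect_path_sub_one_le).1,
    (abs_le.1 h.abs_expect_two_paths_sub_one_le).2]

lemma expect_abs_pathDensity_sub_one_le [Nonempty X] [Nonempty Y] [Nonempty Z]
    (h : LinearFormsCondition (κ ^ 4) a b c) :
    𝔼 x, 𝔼 y, |pathDensity b c x y - 1| ≤ 2 * κ ^ 2 := by
  have hsq := sq_expect_expect_mul_le (P := fun (_ : X) (_ : Y) ↦ (1 : ℝ)) (fun _ _ ↦ abs_one.le)
    fun x y ↦ |pathDensity b c x y - 1|
  simp only [one_mul, sq_abs, Fintype.expect_const] at hsq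
  refine le_of_sq_le_sq ?_ (by positivity)
  nlinarith [h.expect_sq_pathDensity_sub_one_le, sq_nonneg (κ ^ 2)]

end LinearFormsCondition

lemma hasTriangleCounting_one [Nonempty X] [Nonempty Y] [Nonempty Z] (ε : ℝ) :
    HasTriangleCounting ε (3 * ε) (1 : X → Y → ℝ) (1 : Y → Z → ℝ) (1 : Z → X → ℝ) := by
  intro F₁ g₁ F₂ g₂ F₃ g₃ h₁ h₂ h₃
  have replace₁ := h₁.cutLE.abs_triangleDensity_le (b := F₂) (c := F₃)
    (fun y z ↦ ⟨h₂.nonneg y z, h₂.le_weight y z⟩) fun z x ↦ ⟨h₃.nonneg z x, h₃.le_weight z x⟩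
  have replace₂ := h₂.cutLE.abs_triangleDensity_le (b := F₃) (c := g₁)
    (fun z x ↦ ⟨h₃.nonneg z x, h₃.le_weight z x⟩) h₁.model_mem_Icc
  have replace₃ := h₃.cutLE.abs_triangleDensity_le h₁.model_mem_Icc h₂.model_mem_Icc
  rw [triangleDensity_sub_left] at replace₁ replace₂ replace₃
  rw [← triangleDensity_rotate g₁, ← triangleDensity_rotate g₁] at replace₂
  rw [triangleDensity_rotate, triangleDensity_rotate g₃] at replace₃
  rw [abs_le] at *
  constructor <;> linarith

/-- The part of `D` in `[-1, 1]` accounts for all of `D ^ 2` except where the majorant `ρ` of `|D|`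
exceeds `1`. -/
lemma sq_le_truncation_mul_add {D ρ : ℝ} (h : |D| ≤ ρ) :
    D ^ 2 ≤ max 0 (min 1 D) * D - max 0 (min 1 (-D)) * D + ((ρ - 1) ^ 2 + |ρ - 1|) := by
  obtain ⟨hneg, hpos⟩ := abs_le.1 h
  have hρ := le_abs_self (ρ - 1)
  rcases le_total 0 D with hD | hD
  · rw [max_eq_left ((min_le_right _ _).trans (neg_nonpos.2 hD))]
    rcases le_total 1 D with h1 | h1
    · rw [min_eq_left h1, max_eq_right zero_le_one]
      nlinarith
    · rw [min_eq_right h1, max_eq_right hD]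
      nlinarith [abs_nonneg (ρ - 1)]
  · rw [max_eq_left ((min_le_right _ _).trans hD)]
    rcases le_total 1 (-D) with h1 | h1
    · rw [min_eq_left h1, max_eq_right zero_le_one]
      nlinarith
    · rw [min_eq_right h1, max_eq_right (neg_nonneg.2 hD)]
      nlinarith [abs_nonneg (ρ - 1)]

section

variable {ε θ : ℝ} {a : X → Y → ℝ} {b F₂ g₂ : Y → Z → ℝ} {c F₃ g₃ : Z → X → ℝ}

lemma DenseModel.abs_pathDensity_sub_le (h₂ : DenseModel ε b F₂ g₂) (h₃ : DenseModel ε c F₃ g₃)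
    (x : X) (y : Y) : |pathDensity F₂ F₃ x y - pathDensity g₂ g₃ x y| ≤ pathDensity b c x y := by
  refine abs_sub_le_of_nonneg_of_le ?_ ?_ ?_ ?_
  · exact expect_nonneg fun z _ ↦ mul_nonneg (h₂.nonneg y z) (h₃.nonneg z x)
  · exact expect_le_expect fun z _ ↦ mul_le_mul (h₂.le_weight y z) (h₃.le_weight z x)
      (h₃.nonneg z x) ((h₂.nonneg y z).trans (h₂.le_weight y z))
  · exact expect_nonneg fun z _ ↦ mul_nonneg (h₂.model_nonneg y z) (h₃.model_nonneg z x)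
  · exact expect_le_expect fun z _ ↦ mul_le_mul (h₂.model_le_weight y z) (h₃.model_le_weight z x)
      (h₃.model_nonneg z x) ((h₂.nonneg y z).trans (h₂.le_weight y z))

lemma HasTriangleCounting.expect_sq_pathDensity_sub_le [Nonempty X] [Nonempty Y] [Nonempty Z]
    (H : HasTriangleCounting ε θ 1 b c) (h : LinearFormsCondition (ε ^ 4) a b c) (hε : 0 ≤ ε)
    (hε1 : ε ≤ 1) (h₂ : DenseModel ε b F₂ g₂) (h₃ : DenseModel ε c F₃ g₃) :
    𝔼 x, 𝔼 y, (pathDensity F₂ F₃ x y - pathDensity g₂ g₃ x y) ^ 2 ≤ 2 * θ + 5 * ε := by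
  set D : X → Y → ℝ := fun x y ↦ pathDensity F₂ F₃ x y - pathDensity g₂ g₃ x y
  have test (w : X → Y → ℝ) (hw : ∀ x y, w x y ∈ Set.Icc (0 : ℝ) 1) :
      |𝔼 x, 𝔼 y, w x y * D x y| ≤ θ := by
    rw [expect_mul_pathDensity_sub]
    exact H (.refl hε hw) h₂ h₃
  have truncation_mem (t : ℝ) : max 0 (min 1 t) ∈ Set.Icc (0 : ℝ) 1 :=
    ⟨le_max_left _ _, max_le zero_le_one (min_le_left _ _)⟩
  have test_pos := (abs_le.1 (test _ fun x y ↦ truncation_mem (D x y))).2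
  have test_neg := (abs_le.1 (test _ fun x y ↦ truncation_mem (-D x y))).1
  have truncate : 𝔼 x, 𝔼 y, D x y ^ 2 ≤ 𝔼 x, 𝔼 y, (max 0 (min 1 (D x y)) * D x y
      - max 0 (min 1 (-D x y)) * D x y
      + ((pathDensity b c x y - 1) ^ 2 + |pathDensity b c x y - 1|)) :=
    expect_le_expect fun x _ ↦ expect_le_expect fun y _ ↦
      sq_le_truncation_mul_add (h₂.abs_pathDensity_sub_le h₃ x y)
  simp only [expect_add_distrib, expect_sub_distrib] at truncate
  linarith [h.expect_sq_pathDensity_sub_one_le, h.expect_abs_pathDensity_sub_one_le,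
    pow_le_of_le_one hε hε1 four_ne_zero, pow_le_of_le_one hε hε1 two_ne_zero]

lemma LinearFormsCondition.expect_sub_one_mul_sq_pathDensity_sub_le [Nonempty X] [Nonempty Y]
    (h : LinearFormsCondition (ε ^ 4) a b c) (hε : 0 ≤ ε) (hε1 : ε ≤ 1)
    (h₂ : DenseModel ε b F₂ g₂) (h₃ : DenseModel ε c F₃ g₃) :
    𝔼 x, 𝔼 y, (a x y - 1) * (pathDensity F₂ F₃ x y - pathDensity g₂ g₃ x y) ^ 2 ≤ 16 * ε := by
  have decouple {v v' : Y → Z → ℝ} {u u' : Z → X → ℝ} (hv : ∀ y z, |v y z| ≤ b y z)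
      (hv' : ∀ y z, |v' y z| ≤ b y z) (hu : ∀ z x, |u z x| ≤ c z x)
      (hu' : ∀ z x, |u' z x| ≤ c z x) :=
    abs_le.1 (h.abs_expect_sub_one_mul_pathDensity_le hε hε1 hv hv' hu hu')
  have expand : 𝔼 x, 𝔼 y, (a x y - 1) * (pathDensity F₂ F₃ x y - pathDensity g₂ g₃ x y) ^ 2 =
      (𝔼 x, 𝔼 y, (a x y - 1) * (pathDensity F₂ F₃ x y * pathDensity F₂ F₃ x y)) -
        2 * (𝔼 x, 𝔼 y, (a x y - 1) * (pathDensity F₂ F₃ x y * pathDensity g₂ g₃ x y)) +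
        𝔼 x, 𝔼 y, (a x y - 1) * (pathDensity g₂ g₃ x y * pathDensity g₂ g₃ x y) := by
    simp only [mul_expect, ← expect_add_distrib, ← expect_sub_distrib]
    exact expect_congr rfl fun x _ ↦ expect_congr rfl fun y _ ↦ by ring
  rw [expand]
  linarith [(decouple h₂.abs_le h₂.abs_le h₃.abs_le h₃.abs_le).2,
    (decouple h₂.abs_le h₂.abs_model_le h₃.abs_le h₃.abs_model_le).1,
    (decouple h₂.abs_model_le h₂.abs_model_le h₃.abs_model_le h₃.abs_model_le).2]

end

/-- Densification: a weight `1` in the counting lemma may be replaced by a pseudorandom one. -/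
lemma HasTriangleCounting.of_one_left [Nonempty X] [Nonempty Y] [Nonempty Z] {ε s : ℝ}
    {a : X → Y → ℝ} {b : Y → Z → ℝ} {c : Z → X → ℝ} (H : HasTriangleCounting ε (s ^ 2) 1 b c)
    (h : LinearFormsCondition (ε ^ 4) a b c) (hε : 0 ≤ ε) (hεs : ε ≤ s ^ 2) (hs : 0 ≤ s)
    (hs1 : s ≤ 1) : HasTriangleCounting ε (8 * s) a b c := by
  intro F₁ g₁ F₂ g₂ F₃ g₃ h₁ h₂ h₃
  have hε1 : ε ≤ 1 := hεs.trans (pow_le_one₀ hs hs1)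
  have ha x y : 0 ≤ a x y := (h₁.nonneg x y).trans (h₁.le_weight x y)
  set D : X → Y → ℝ := fun x y ↦ pathDensity F₂ F₃ x y - pathDensity g₂ g₃ x y
  have weighted_moment : 𝔼 x, 𝔼 y, a x y * D x y ^ 2 ≤ 23 * s ^ 2 := by
    have split : 𝔼 x, 𝔼 y, a x y * D x y ^ 2 =
        (𝔼 x, 𝔼 y, (a x y - 1) * D x y ^ 2) + 𝔼 x, 𝔼 y, D x y ^ 2 := by
      simp only [← expect_add_distrib]
      exact expect_congr rfl fun x _ ↦ expect_congr rfl fun y _ ↦ by ring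
    linarith [h.expect_sub_one_mul_sq_pathDensity_sub_le hε hε1 h₂ h₃,
      H.expect_sq_pathDensity_sub_le h hε hε1 h₂ h₃]
  have sparse : |triangleDensity F₁ F₂ F₃ - triangleDensity F₁ g₂ g₃| ≤ 7 * s := by
    rw [← expect_mul_pathDensity_sub]
    refine abs_le_of_sq_le_sq ((sq_expect_expect_mul_le h₁.abs_le D).trans ?_) (by positivity)
    have edge : 𝔼 x, 𝔼 y, a x y ≤ 2 := by
      linarith [h.expect_edge_le, pow_le_one₀ hε hε1 (n := 4)]
    calc (𝔼 x, 𝔼 y, a x y) * 𝔼 x, 𝔼 y, a x y * D x y ^ 2 ≤ 2 * (23 * s ^ 2) :=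
          mul_le_mul edge weighted_moment (expect_nonneg fun x _ ↦ expect_nonneg fun y _ ↦
            mul_nonneg (ha x y) (sq_nonneg _)) zero_le_two
      _ ≤ (7 * s) ^ 2 := by nlinarith [sq_nonneg s]
  have dense := h₁.cutLE.abs_triangleDensity_le h₂.model_mem_Icc h₃.model_mem_Icc
  rw [triangleDensity_sub_left] at dense
  have hss : s ^ 2 ≤ s := pow_le_of_le_one hs hs1 two_ne_zero
  linarith [abs_sub_le (triangleDensity F₁ F₂ F₃) (triangleDensity F₁ g₂ g₃)
    (triangleDensity g₁ g₂ g₃)]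

end Densification

universe u v w in
/-- Starting from bounded functions, the three sparse weights are introduced one at a time. -/
theorem exists_hasTriangleCounting {θ : ℝ} (hθ : 0 < θ) (hθ1 : θ ≤ 1) :
    ∃ ε : ℝ, 0 < ε ∧ ε ≤ 1 ∧ ∀ {X : Type u} {Y : Type v} {Z : Type w} [Fintype X] [Fintype Y]
      [Fintype Z] [Nonempty X] [Nonempty Y] [Nonempty Z] {a : X → Y → ℝ} {b : Y → Z → ℝ}
      {c : Z → X → ℝ}, LinearFormsCondition (ε ^ 4) a b c → HasTriangleCounting ε θ a b c := by
  obtain ⟨s₃, h₃⟩ : ∃ s₃, 8 * s₃ = θ := ⟨θ / 8, by ring⟩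
  obtain ⟨s₂, h₂⟩ : ∃ s₂, 8 * s₂ = s₃ ^ 2 := ⟨s₃ ^ 2 / 8, by ring⟩
  obtain ⟨s₁, h₁⟩ : ∃ s₁, 8 * s₁ = s₂ ^ 2 := ⟨s₂ ^ 2 / 8, by ring⟩
  obtain ⟨ε, hε⟩ : ∃ ε, 3 * ε = s₁ ^ 2 := ⟨s₁ ^ 2 / 3, by ring⟩
  have pos₃ : 0 < s₃ := by linarith
  have pos₂ : 0 < s₂ := by nlinarith
  have pos₁ : 0 < s₁ := by nlinarith
  have pos : 0 < ε := by nlinarith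
  have le₂ : s₂ ≤ s₃ := by nlinarith
  have le₁ : s₁ ≤ s₂ := by nlinarith
  have sq_le₁ : s₁ ^ 2 ≤ s₂ ^ 2 := by gcongr
  have : s₂ ^ 2 ≤ s₃ ^ 2 := by gcongr
  have : s₁ ^ 2 ≤ 1 := pow_le_one₀ pos₁.le (by linarith)
  refine ⟨ε, pos, by linarith, fun {X Y Z} _ _ _ _ _ _ {a b c} h ↦ ?_⟩
  have count₀ : HasTriangleCounting ε (s₁ ^ 2) (1 : Y → Z → ℝ) (1 : Z → X → ℝ) (1 : X → Y → ℝ) :=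
    hε ▸ hasTriangleCounting_one ε
  have count₁ := count₀.of_one_left h.one_left.rotate.rotate.one_left.rotate.rotate pos.le
    (by linarith) pos₁.le (by linarith)
  rw [h₁] at count₁
  have count₂ := count₁.rotate.of_one_left h.one_left.rotate.rotate pos.le (by linarith) pos₂.le
    (by linarith)
  rw [h₂] at count₂
  have count₃ := count₂.rotate.of_one_left h pos.le (by linarith) pos₃.le (by linarith)
  rwa [h₃] at count₃

/-! ### Weak regularity -/

section CutNorm

variable {X Y : Type*} [Fintype X] [Fintype Y]

lemma exists_finset_forall_expect_mul_le [DecidableEq X] (k : X → ℝ) :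
    ∃ A : Finset X, ∀ u : X → ℝ, (∀ x, u x ∈ Set.Icc (0 : ℝ) 1) →
      𝔼 x, k x * u x ≤ 𝔼 x, k x * if x ∈ A then 1 else 0 := by
  refine ⟨univ.filter (0 < k ·), fun u hu ↦ expect_le_expect fun x _ ↦ ?_⟩
  obtain ⟨h0, h1⟩ := hu x
  simp only [mem_filter, mem_univ, true_and]
  split_ifs <;> nlinarith

lemma exists_finset_expect_expect_mul_le [DecidableEq X] [DecidableEq Y] (h : X → Y → ℝ)
    {u : X → ℝ} {v : Y → ℝ} (hu : ∀ x, u x ∈ Set.Icc (0 : ℝ) 1)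
    (hv : ∀ y, v y ∈ Set.Icc (0 : ℝ) 1) :
    ∃ (A : Finset X) (B : Finset Y), 𝔼 x, 𝔼 y, h x y * (u x * v y) ≤
      𝔼 x, 𝔼 y, h x y * ((if x ∈ A then 1 else 0) * if y ∈ B then 1 else 0) := by
  have slice_left (u : X → ℝ) (v : Y → ℝ) :
      𝔼 x, 𝔼 y, h x y * (u x * v y) = 𝔼 x, (𝔼 y, h x y * v y) * u x := by
    simp only [expect_mul]
    exact expect_congr rfl fun x _ ↦ expect_congr rfl fun y _ ↦ by ring
  have slice_right (u : X → ℝ) (v : Y → ℝ) :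
      𝔼 x, 𝔼 y, h x y * (u x * v y) = 𝔼 y, (𝔼 x, h x y * u x) * v y := by
    simp only [expect_mul]
    rw [expect_comm]
    exact expect_congr rfl fun y _ ↦ expect_congr rfl fun x _ ↦ by ring
  obtain ⟨A, hA⟩ := exists_finset_forall_expect_mul_le fun x ↦ 𝔼 y, h x y * v y
  obtain ⟨B, hB⟩ :=
    exists_finset_forall_expect_mul_le fun y ↦ 𝔼 x, h x y * if x ∈ A then 1 else 0
  refine ⟨A, B, ?_⟩
  calc 𝔼 x, 𝔼 y, h x y * (u x * v y)
      ≤ 𝔼 x, (𝔼 y, h x y * v y) * if x ∈ A then 1 else 0 := slice_left u v ▸ hA u hu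
    _ = 𝔼 y, (𝔼 x, h x y * if x ∈ A then 1 else 0) * v y := by rw [← slice_left, slice_right]
    _ ≤ _ := by
      rw [slice_right]
      exact hB v hv

lemma exists_finset_of_not_cutLE [DecidableEq X] [DecidableEq Y] {h : X → Y → ℝ} {ε : ℝ}
    (hh : ¬ CutLE h ε) :
    ∃ (A : Finset X) (B : Finset Y),
      ε < |𝔼 x, 𝔼 y, h x y * ((if x ∈ A then 1 else 0) * if y ∈ B then 1 else 0)| := by
  contrapose! hh
  refine fun u v hu hv ↦ abs_le'.2 ⟨?_, ?_⟩
  · obtain ⟨A, B, hAB⟩ := exists_finset_expect_expect_mul_le h hu hv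
    exact hAB.trans ((le_abs_self _).trans (hh A B))
  · obtain ⟨A, B, hAB⟩ := exists_finset_expect_expect_mul_le (fun x y ↦ -h x y) hu hv
    simp only [neg_mul, expect_neg_distrib] at hAB
    exact hAB.trans ((neg_le_abs _).trans (hh A B))

lemma CutLE.sum_box_le [Nonempty X] [Nonempty Y] {h : X → Y → ℝ} {ε : ℝ} (hh : CutLE h ε)
    (A : Finset X) (B : Finset Y) :
    ∑ x ∈ A, ∑ y ∈ B, h x y ≤ ε * (Fintype.card X * Fintype.card Y) := by
  classical
  have test := (le_abs_self _).trans (hh (u := fun x ↦ if x ∈ A then 1 else 0)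
    (v := fun y ↦ if y ∈ B then 1 else 0) (fun x ↦ by split_ifs <;> simp)
    fun y ↦ by split_ifs <;> simp)
  rw [← expect_prod_type fun p : X × Y ↦
    h p.1 p.2 * ((if p.1 ∈ A then 1 else 0) * if p.2 ∈ B then 1 else 0),
    Fintype.expect_eq_sum_div_card, div_le_iff₀ (by positivity), Fintype.sum_prod_type] at test
  simpa [← mul_assoc, ← sum_filter, filter_mem_eq_inter] using test

lemma CutLE.expect_box_le_one [Nonempty X] [Nonempty Y] {h : X → Y → ℝ} {τ : ℝ}
    (hh : CutLE h (τ ^ 2)) (hτ : 0 < τ) {A : Finset X} {B : Finset Y}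
    (hA : τ * Fintype.card X ≤ #A) (hB : τ * Fintype.card Y ≤ #B) :
    𝔼 x ∈ A, 𝔼 y ∈ B, h x y ≤ 1 := by
  have posA : (0 : ℝ) < #A := (by positivity : (0 : ℝ) < τ * Fintype.card X).trans_le hA
  have posB : (0 : ℝ) < #B := (by positivity : (0 : ℝ) < τ * Fintype.card Y).trans_le hB
  simp only [expect_eq_sum_div_card, ← sum_div]
  rw [div_div, div_le_one (by positivity), mul_comm (#B : ℝ)]
  calc ∑ x ∈ A, ∑ y ∈ B, h x y ≤ τ ^ 2 * (Fintype.card X * Fintype.card Y) := hh.sum_box_le A B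
    _ = τ * Fintype.card X * (τ * Fintype.card Y) := by ring
    _ ≤ #A * #B := by gcongr

end CutNorm

section Boxes

variable {G : Type*} [Fintype G] [DecidableEq G]

/-- The indicator function of the vertices whose cell in `P` has relative size at least `τ`. -/
noncomputable def largeCell (P : Finpartition (univ : Finset G)) (τ : ℝ) (v : G) : ℝ :=
  if τ * Fintype.card G ≤ #(P.part v) then 1 else 0

/-- The conditional expectation of `F` on the boxes of `P`, the products of two cells, set to `0` on
the boxes with a side of relative size less than `τ`. -/
noncomputable def boxAverage (P : Finpartition (univ : Finset G)) (τ : ℝ) (F : G → G → ℝ)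
    (x y : G) : ℝ :=
  largeCell P τ x * largeCell P τ y * 𝔼 x' ∈ P.part x, 𝔼 y' ∈ P.part y, F x' y'

/-- `φ` is constant on the boxes of `P`. The codomain is arbitrary so that this also applies to
`Prop`-valued functions, that is to graphs. -/
def ConstOnBoxes {α : Type*} (P : Finpartition (univ : Finset G)) (φ : G → G → α) : Prop :=
  ∀ ⦃x x' y y'⦄, P.part x = P.part x' → P.part y = P.part y' → φ x y = φ x' y'

/-- The mass of `F` on the boxes that `boxAverage` discards. -/
noncomputable def smallCellMass (P : Finpartition (univ : Finset G)) (τ : ℝ) (F : G → G → ℝ) : ℝ :=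
  𝔼 x, 𝔼 y, F x y * (1 - largeCell P τ x * largeCell P τ y)

/-- The energy of a partition: the mean square of the box averages. -/
noncomputable def energy (P : Finpartition (univ : Finset G)) (τ : ℝ) (F : G → G → ℝ) : ℝ :=
  𝔼 x, 𝔼 y, boxAverage P τ F x y ^ 2

variable {P Q : Finpartition (univ : Finset G)} {τ : ℝ} {F φ : G → G → ℝ}

lemma largeCell_mem_Icc (P : Finpartition (univ : Finset G)) (τ : ℝ) (v : G) :
    largeCell P τ v ∈ Set.Icc (0 : ℝ) 1 := by
  unfold largeCell
  split_ifs <;> simp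

lemma largeCell_mul_self (P : Finpartition (univ : Finset G)) (τ : ℝ) (v : G) :
    largeCell P τ v * largeCell P τ v = largeCell P τ v := by
  unfold largeCell
  split_ifs <;> simp

lemma largeCell_congr {v w : G} (h : P.part v = P.part w) : largeCell P τ v = largeCell P τ w := by
  rw [largeCell, largeCell, h]

lemma one_sub_largeCell_mul_nonneg (P : Finpartition (univ : Finset G)) (τ : ℝ) (x y : G) :
    0 ≤ 1 - largeCell P τ x * largeCell P τ y :=
  sub_nonneg.2 (mul_le_one₀ (largeCell_mem_Icc P τ x).2 (largeCell_mem_Icc P τ y).1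
    (largeCell_mem_Icc P τ y).2)

lemma constOnBoxes_boxAverage (P : Finpartition (univ : Finset G)) (τ : ℝ) (F : G → G → ℝ) :
    ConstOnBoxes P (boxAverage P τ F) := by
  intro x x' y y' hx hy
  simp only [boxAverage, hx, hy, largeCell_congr hx, largeCell_congr hy]

lemma part_eq_part_of_le (hQP : Q ≤ P) {v w : G} (h : Q.part v = Q.part w) :
    P.part v = P.part w := by
  obtain ⟨C, hC, hsub⟩ := hQP (Q.part_mem.2 (mem_univ v))
  rw [P.part_eq_of_mem hC (hsub (Q.mem_part_self.2 (mem_univ v))),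
    P.part_eq_of_mem hC (hsub (h ▸ Q.mem_part_self.2 (mem_univ w)))]

lemma ConstOnBoxes.of_le {α : Type*} {φ : G → G → α} (h : ConstOnBoxes P φ) (hQP : Q ≤ P) :
    ConstOnBoxes Q φ :=
  fun _ _ _ _ hx hy ↦ h (part_eq_part_of_le hQP hx) (part_eq_part_of_le hQP hy)

/-- Averaging over cells is self-adjoint. -/
lemma expect_cellAverage_mul (P : Finpartition (univ : Finset G)) (k : G → ℝ) {m : G → ℝ}
    (hm : ∀ ⦃v w⦄, P.part v = P.part w → m v = m w) :
    𝔼 v, (𝔼 w ∈ P.part v, k w) * m v = 𝔼 v, k v * m v := by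
  have mem_part_iff (v w : G) : w ∈ P.part v ↔ P.part w = P.part v :=
    P.mem_part_iff_part_eq_part (mem_univ w) (mem_univ v)
  simp only [expect_eq_sum_div_card]
  congr 1
  calc ∑ v, (∑ w ∈ P.part v, k w) / #(P.part v) * m v
      = ∑ v, ∑ w ∈ P.part v, k w * m w / #(P.part w) := by
        refine sum_congr rfl fun v _ ↦ ?_
        rw [div_mul_eq_mul_div, sum_mul, sum_div]
        refine sum_congr rfl fun w hw ↦ ?_
        rw [hm ((mem_part_iff v w).1 hw), (mem_part_iff v w).1 hw]
    _ = ∑ w, ∑ _v ∈ P.part w, k w * m w / #(P.part w) :=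
        sum_comm' fun v w ↦ by simp only [mem_univ, true_and, and_true, mem_part_iff, eq_comm]
    _ = ∑ w, k w * m w := by
        refine sum_congr rfl fun w _ ↦ ?_
        have : (#(P.part w) : ℝ) ≠ 0 :=
          Nat.cast_ne_zero.2 (card_pos.2 (P.part_nonempty.2 (mem_univ w))).ne'
        rw [sum_const, nsmul_eq_mul, mul_div_cancel₀ _ this]

lemma expect_boxAverage_mul (F : G → G → ℝ) (τ : ℝ) (hφ : ConstOnBoxes P φ) :
    𝔼 x, 𝔼 y, boxAverage P τ F x y * φ x y =
      𝔼 x, 𝔼 y, F x y * (largeCell P τ x * largeCell P τ y * φ x y) := by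
  calc 𝔼 x, 𝔼 y, boxAverage P τ F x y * φ x y
      = 𝔼 y, 𝔼 x, (𝔼 x' ∈ P.part x, 𝔼 y' ∈ P.part y, F x' y') *
          (largeCell P τ x * largeCell P τ y * φ x y) := by
        rw [expect_comm]
        refine expect_congr rfl fun y _ ↦ expect_congr rfl fun x _ ↦ ?_
        rw [boxAverage]
        ring
    _ = 𝔼 y, 𝔼 x, (𝔼 y' ∈ P.part y, F x y') * (largeCell P τ x * largeCell P τ y * φ x y) :=
        expect_congr rfl fun y _ ↦ expect_cellAverage_mul P _ fun x x' h ↦ by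
          rw [largeCell_congr h, hφ h rfl]
    _ = 𝔼 x, 𝔼 y, F x y * (largeCell P τ x * largeCell P τ y * φ x y) := by
        rw [expect_comm]
        exact expect_congr rfl fun x _ ↦ expect_cellAverage_mul P _ fun y y' h ↦ by
          rw [largeCell_congr h, hφ rfl h]

/-- Pythagoras: up to the mass on small cells, a refinement increases the energy by the squared
distance of the box averages. -/
lemma energy_add_le (hF : ∀ x y, 0 ≤ F x y) (hQP : Q ≤ P)
    (hP : ∀ x y, boxAverage P τ F x y ∈ Set.Icc (0 : ℝ) 2) :
    energy P τ F + 𝔼 x, 𝔼 y, (boxAverage Q τ F x y - boxAverage P τ F x y) ^ 2 ≤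
      energy Q τ F + 4 * smallCellMass Q τ F := by
  have largeCell_mul_boxAverage x y :
      largeCell P τ x * largeCell P τ y * boxAverage P τ F x y = boxAverage P τ F x y := by
    rw [boxAverage]
    linear_combination (𝔼 x' ∈ P.part x, 𝔼 y' ∈ P.part y, F x' y') *
      (largeCell P τ y * largeCell P τ y * largeCell_mul_self P τ x +
        largeCell P τ x * largeCell_mul_self P τ y)
  have inner_self : 𝔼 x, 𝔼 y, boxAverage P τ F x y * boxAverage P τ F x y =
      𝔼 x, 𝔼 y, F x y * boxAverage P τ F x y := by
    simpa only [largeCell_mul_boxAverage] using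
      expect_boxAverage_mul F τ (constOnBoxes_boxAverage P τ F)
  have inner_refinement :=
    expect_boxAverage_mul F τ ((constOnBoxes_boxAverage P τ F).of_le hQP)
  have discarded : 𝔼 x, 𝔼 y, F x y * boxAverage P τ F x y -
      𝔼 x, 𝔼 y, F x y * (largeCell Q τ x * largeCell Q τ y * boxAverage P τ F x y) ≤
        2 * smallCellMass Q τ F := by
    simp only [smallCellMass, ← expect_sub_distrib, mul_expect]
    refine expect_le_expect fun x _ ↦ expect_le_expect fun y _ ↦ ?_
    nlinarith [mul_nonneg (hF x y) (one_sub_largeCell_mul_nonneg Q τ x y), (hP x y).2]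
  have expand : 𝔼 x, 𝔼 y, (boxAverage Q τ F x y - boxAverage P τ F x y) ^ 2 =
      energy Q τ F - 2 * (𝔼 x, 𝔼 y, boxAverage Q τ F x y * boxAverage P τ F x y) +
        𝔼 x, 𝔼 y, boxAverage P τ F x y * boxAverage P τ F x y := by
    simp only [energy, mul_expect, ← expect_sub_distrib, ← expect_add_distrib]
    exact expect_congr rfl fun x _ ↦ expect_congr rfl fun y _ ↦ by ring
  simp only [energy, sq] at expand ⊢
  linarith

lemma abs_expect_mul_sub_expect_boxAverage_mul_le (hF : ∀ x y, 0 ≤ F x y) (hφ : ConstOnBoxes P φ)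
    (hφ1 : ∀ x y, φ x y ∈ Set.Icc (0 : ℝ) 1) :
    |𝔼 x, 𝔼 y, F x y * φ x y - 𝔼 x, 𝔼 y, boxAverage P τ F x y * φ x y| ≤ smallCellMass P τ F := by
  have discarded_nonneg x y := mul_nonneg (hF x y) (one_sub_largeCell_mul_nonneg P τ x y)
  have difference : 𝔼 x, 𝔼 y, F x y * φ x y - 𝔼 x, 𝔼 y, boxAverage P τ F x y * φ x y =
      𝔼 x, 𝔼 y, F x y * (1 - largeCell P τ x * largeCell P τ y) * φ x y := by
    rw [expect_boxAverage_mul F τ hφ]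
    simp only [← expect_sub_distrib]
    exact expect_congr rfl fun x _ ↦ expect_congr rfl fun y _ ↦ by ring
  rw [difference, abs_of_nonneg (expect_nonneg fun x _ ↦ expect_nonneg fun y _ ↦
    mul_nonneg (discarded_nonneg x y) (hφ1 x y).1)]
  exact expect_le_expect fun x _ ↦ expect_le_expect fun y _ ↦
    mul_le_of_le_one_right (discarded_nonneg x y) (hφ1 x y).2

end Boxes

section Regularity

variable {G : Type*} [Fintype G] [DecidableEq G] {P : Finpartition (univ : Finset G)}
  {ν F : G → G → ℝ} {τ γ : ℝ}

lemma CutLE.mono {X Y : Type*} [Fintype X] [Fintype Y] {h : X → Y → ℝ} {ε ε' : ℝ}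
    (hh : CutLE h ε) (hε : ε ≤ ε') : CutLE h ε' :=
  fun _ _ hu hv ↦ (hh hu hv).trans hε

lemma boxAverage_mem_Icc (hF : ∀ x y, 0 ≤ F x y) (hFν : ∀ x y, F x y ≤ ν x y)
    (hν : CutLE (fun x y ↦ ν x y - 1) (τ ^ 2)) (hτ : 0 < τ) (x y : G) :
    boxAverage P τ F x y ∈ Set.Icc (0 : ℝ) 2 := by
  have : Nonempty G := ⟨x⟩
  have cell_nonempty (v : G) : (P.part v).Nonempty := P.part_nonempty.2 (mem_univ v)
  refine ⟨mul_nonneg (mul_nonneg (largeCell_mem_Icc P τ x).1 (largeCell_mem_Icc P τ y).1)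
    (expect_nonneg fun x _ ↦ expect_nonneg fun y _ ↦ hF x y), ?_⟩
  unfold boxAverage largeCell
  split_ifs with hx hy
  · have weight_le := hν.expect_box_le_one hτ hx hy
    simp only [expect_sub_distrib, expect_const (cell_nonempty _)] at weight_le
    have le_weight : 𝔼 x' ∈ P.part x, 𝔼 y' ∈ P.part y, F x' y' ≤
        𝔼 x' ∈ P.part x, 𝔼 y' ∈ P.part y, ν x' y' :=
      expect_le_expect fun x' _ ↦ expect_le_expect fun y' _ ↦ hFν x' y'
    linarith
  all_goals norm_num

lemma expect_one_sub_largeCell_le (P : Finpartition (univ : Finset G)) (hτ : 0 ≤ τ) :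
    𝔼 v, (1 - largeCell P τ v) ≤ #P.parts * τ := by
  cases isEmpty_or_nonempty G
  · simp only [univ_eq_empty, expect_empty]
    positivity
  have sum_cells : ∑ v, (1 - largeCell P τ v) = ∑ C ∈ P.parts, ∑ v ∈ C, (1 - largeCell P τ v) := by
    rw [← sum_congr P.biUnion_parts fun _ _ ↦ rfl, sum_biUnion P.supIndep.pairwiseDisjoint]
    rfl
  rw [Fintype.expect_eq_sum_div_card, div_le_iff₀ (by positivity), sum_cells, mul_assoc,
    ← nsmul_eq_mul]
  refine sum_le_card_nsmul _ _ _ fun C hC ↦ ?_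
  have cell (v : G) (hv : v ∈ C) :
      1 - largeCell P τ v = if τ * Fintype.card G ≤ #C then 0 else 1 := by
    rw [largeCell, P.part_eq_of_mem hC hv]
    split_ifs <;> simp
  rw [sum_congr rfl cell, sum_const, nsmul_eq_mul]
  split_ifs with h
  · rw [mul_zero]
    positivity
  · linarith

lemma smallCellMass_le [Nonempty G] (hF : ∀ x y, 0 ≤ F x y) (hFν : ∀ x y, F x y ≤ ν x y)
    (hν : CutLE (fun x y ↦ ν x y - 1) γ) (hτ : 0 ≤ τ) :
    smallCellMass P τ F ≤ 2 * (#P.parts * τ + γ) := by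
  set s : G → ℝ := fun v ↦ 1 - largeCell P τ v with hs
  have hs01 v : s v ∈ Set.Icc (0 : ℝ) 1 := by
    obtain ⟨h0, h1⟩ := largeCell_mem_Icc P τ v
    constructor <;> simp only [hs] <;> linarith
  have one_mem (_ : G) : (1 : ℝ) ∈ Set.Icc (0 : ℝ) 1 := by simp
  have rows := (abs_le.1 (hν hs01 one_mem)).2
  have columns := (abs_le.1 (hν one_mem hs01)).2
  have pointwise x y : F x y * (1 - largeCell P τ x * largeCell P τ y) ≤
      (ν x y - 1) * (s x * 1) + (ν x y - 1) * (1 * s y) + (s x + s y) := by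
    have mass := mul_le_mul_of_nonneg_right (hFν x y) (one_sub_largeCell_mul_nonneg P τ x y)
    have overlap := mul_nonneg ((hF x y).trans (hFν x y)) (mul_nonneg (hs01 x).1 (hs01 y).1)
    simp only [hs] at overlap ⊢
    linarith
  calc smallCellMass P τ F
      ≤ 𝔼 x, 𝔼 y, ((ν x y - 1) * (s x * 1) + (ν x y - 1) * (1 * s y) + (s x + s y)) :=
        expect_le_expect fun x _ ↦ expect_le_expect fun y _ ↦ pointwise x y
    _ = 𝔼 x, 𝔼 y, (ν x y - 1) * (s x * 1) + 𝔼 x, 𝔼 y, (ν x y - 1) * (1 * s y) +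
          (𝔼 v, s v + 𝔼 v, s v) := by
        simp only [expect_add_distrib, Fintype.expect_const]
    _ ≤ γ + γ + (#P.parts * τ + #P.parts * τ) := by
        gcongr <;> exact expect_one_sub_largeCell_le P hτ
    _ = 2 * (#P.parts * τ + γ) := by ring

lemma card_parts_inf_le (P Q : Finpartition (univ : Finset G)) :
    #(P ⊓ Q).parts ≤ #P.parts * #Q.parts := by
  rw [Finpartition.parts_inf, ← card_product]
  exact (card_le_card (erase_subset _ _)).trans card_image_le

lemma exists_refinement (P : Finpartition (univ : Finset G)) (A B : Finset G) :
    ∃ Q ≤ P, #Q.parts ≤ 4 * #P.parts ∧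
      ∀ v w, Q.part v = Q.part w → (v ∈ A ↔ w ∈ A) ∧ (v ∈ B ↔ w ∈ B) := by
  set R := Finpartition.atomise univ {A, B}
  refine ⟨P ⊓ R, inf_le_left, ?_, fun v w h ↦ ?_⟩
  · calc #(P ⊓ R).parts ≤ #P.parts * #R.parts := card_parts_inf_le P R
      _ ≤ #P.parts * 2 ^ 2 := by
        gcongr
        exact Finpartition.card_atomise_le.trans (Nat.pow_le_pow_right two_pos card_le_two)
      _ = 4 * #P.parts := by ring
  · have same_atom := part_eq_part_of_le inf_le_right h
    obtain ⟨-, C, -, hC⟩ := Finpartition.mem_atomise.1 (R.part_mem.2 (mem_univ v))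
    have mem_iff {u : G} (hu : u ∈ R.part v) (D : Finset G) (hD : D ∈ ({A, B} : Finset _)) :
        D ∈ C ↔ u ∈ D := by
      simp only [← hC, mem_filter] at hu
      exact hu.2 D hD
    have hv := mem_iff (R.mem_part_self.2 (mem_univ v))
    have hw := mem_iff (same_atom ▸ R.mem_part_self.2 (mem_univ w))
    exact ⟨(hv A (by simp)).symm.trans (hw A (by simp)),
      (hv B (by simp)).symm.trans (hw B (by simp))⟩

/-- A test function that distinguishes `F` from its box averages and is constant on the boxes of a
refinement forces the box averages of the refinement to differ. -/
lemma sq_sub_le_expect_sq_boxAverage_sub [Nonempty G] {Q : Finpartition (univ : Finset G)}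
    {φ : G → G → ℝ} {ε β : ℝ} (hF : ∀ x y, 0 ≤ F x y) (hφ : ConstOnBoxes Q φ)
    (hφ1 : ∀ x y, φ x y ∈ Set.Icc (0 : ℝ) 1) (hQ : smallCellMass Q τ F ≤ β) (hβ : β ≤ ε)
    (hε : ε ≤ |𝔼 x, 𝔼 y, (F x y - boxAverage P τ F x y) * φ x y|) :
    (ε - β) ^ 2 ≤ 𝔼 x, 𝔼 y, (boxAverage Q τ F x y - boxAverage P τ F x y) ^ 2 := by
  have split : 𝔼 x, 𝔼 y, (F x y - boxAverage P τ F x y) * φ x y =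
      (𝔼 x, 𝔼 y, F x y * φ x y - 𝔼 x, 𝔼 y, boxAverage Q τ F x y * φ x y) +
        𝔼 x, 𝔼 y, φ x y * (boxAverage Q τ F x y - boxAverage P τ F x y) := by
    simp only [← expect_sub_distrib, ← expect_add_distrib]
    exact expect_congr rfl fun x _ ↦ expect_congr rfl fun y _ ↦ by ring
  have distance : ε - β ≤ |𝔼 x, 𝔼 y, φ x y * (boxAverage Q τ F x y - boxAverage P τ F x y)| := by
    rw [split] at hε
    linarith [abs_add_le _ _ |>.trans' hε,
      abs_expect_mul_sub_expect_boxAverage_mul_le (τ := τ) hF hφ hφ1]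
  calc (ε - β) ^ 2
      ≤ (𝔼 x, 𝔼 y, φ x y * (boxAverage Q τ F x y - boxAverage P τ F x y)) ^ 2 := by
        rw [← sq_abs (𝔼 x, _)]
        exact pow_le_pow_left₀ (sub_nonneg.2 hβ) distance 2
    _ ≤ (𝔼 _x : G, 𝔼 _y : G, (1 : ℝ)) *
          𝔼 x, 𝔼 y, 1 * (boxAverage Q τ F x y - boxAverage P τ F x y) ^ 2 :=
        sq_expect_expect_mul_le (w := fun _ _ ↦ 1)
          (fun x y ↦ abs_le.2 ⟨by linarith [(hφ1 x y).1], (hφ1 x y).2⟩) _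
    _ = 𝔼 x, 𝔼 y, (boxAverage Q τ F x y - boxAverage P τ F x y) ^ 2 := by
        simp only [Fintype.expect_const, one_mul]

end Regularity

section WeakRegularity

variable {G ι : Type*} [Fintype G] [DecidableEq G] [Fintype ι]
  {P : Finpartition (univ : Finset G)} {F : ι → G → G → ℝ}

/-- The energy increment step: the refinement by two sets that witness the failure of the cut norm
bound for one of the functions gains energy in total, since no function loses more than `4 * β`. -/
lemma exists_energy_add_le [Nonempty G] {τ ε β : ℝ} {M : ℕ} (hε1 : ε ≤ 1) (hβ : 0 ≤ β)
    (hβε : 8 * (Fintype.card ι + 1) * β ≤ ε ^ 2) (hβε1 : β ≤ ε) (hF : ∀ i x y, 0 ≤ F i x y)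
    (hP : #P.parts ≤ M) (hbox : ∀ i x y, boxAverage P τ (F i) x y ∈ Set.Icc (0 : ℝ) 2)
    (hsmall : ∀ Q : Finpartition (univ : Finset G), #Q.parts ≤ 4 * M →
      ∀ i, smallCellMass Q τ (F i) ≤ β)
    {i : ι} (hi : ¬ CutLE (fun x y ↦ F i x y - boxAverage P τ (F i) x y) ε) :
    ∃ Q : Finpartition (univ : Finset G), #Q.parts ≤ 4 * M ∧
      ∑ j, energy P τ (F j) + ε ^ 2 / 2 ≤ ∑ j, energy Q τ (F j) := by
  obtain ⟨A, B, hAB⟩ := exists_finset_of_not_cutLE hi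
  obtain ⟨Q, hQP, hcard, hQ⟩ := exists_refinement P A B
  have hQM : #Q.parts ≤ 4 * M := hcard.trans (Nat.mul_le_mul_left 4 hP)
  have gain := sq_sub_le_expect_sq_boxAverage_sub (hF i)
    (φ := fun x y ↦ (if x ∈ A then 1 else 0) * if y ∈ B then 1 else 0)
    (fun x x' y y' hx hy ↦ by simp only [(hQ x x' hx).1, (hQ y y' hy).2])
    (fun x y ↦ by split_ifs <;> simp) (hsmall Q hQM i) hβε1 hAB.le
  have gain_le := single_le_sum (f := fun j ↦
      𝔼 x, 𝔼 y, (boxAverage Q τ (F j) x y - boxAverage P τ (F j) x y) ^ 2)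
    (fun j _ ↦ expect_nonneg fun x _ ↦ expect_nonneg fun y _ ↦ sq_nonneg _) (mem_univ i)
  have pythagoras := sum_le_sum fun j (_ : j ∈ univ) ↦
    (energy_add_le (hF j) hQP (hbox j)).trans
      (add_le_add_right (mul_le_mul_of_nonneg_left (hsmall Q hQM j) zero_le_four) _)
  simp only [sum_add_distrib, sum_const, card_univ, nsmul_eq_mul] at pythagoras
  have half_gain : ε ^ 2 / 2 + Fintype.card ι * (4 * β) ≤ (ε - β) ^ 2 := by nlinarith
  exact ⟨Q, hQM, by linarith⟩

lemma exists_of_energy_increment {α : Type*} {C : ℕ → α → Prop} {good : α → Prop} {E : α → ℝ}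
    {δ B : ℝ} {K : ℕ} (start : ∃ a, C 0 a ∧ 0 ≤ E a) (hE : ∀ a, E a ≤ B) (hK : B < K * δ)
    (step : ∀ n < K, ∀ a, C n a → ¬ good a → ∃ a', C (n + 1) a' ∧ E a + δ ≤ E a') :
    ∃ n < K, ∃ a, C n a ∧ good a := by
  by_contra! never
  have climb : ∀ n ≤ K, ∃ a, C n a ∧ n * δ ≤ E a := by
    intro n
    induction n with
    | zero => simpa using start
    | succ n ih =>
      intro hn
      obtain ⟨a, ha, hEa⟩ := ih (by omega)
      obtain ⟨a', ha', hEa'⟩ := step n hn a ha (never n hn a ha)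
      refine ⟨a', ha', ?_⟩
      push_cast
      linarith
  obtain ⟨a, -, ha⟩ := climb K le_rfl
  linarith [hE a]

lemma energy_nonneg (P : Finpartition (univ : Finset G)) (τ : ℝ) (F : G → G → ℝ) :
    0 ≤ energy P τ F :=
  expect_nonneg fun _ _ ↦ expect_nonneg fun _ _ ↦ sq_nonneg _

lemma energy_le_four [Nonempty G] {τ : ℝ} {F : G → G → ℝ}
    (hbox : ∀ x y, boxAverage P τ F x y ∈ Set.Icc (0 : ℝ) 2) : energy P τ F ≤ 4 :=
  expect_le univ_nonempty fun x _ ↦ expect_le univ_nonempty fun y _ ↦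
    (pow_le_pow_left₀ (hbox x y).1 (hbox x y).2 2).trans (by norm_num)

/-- `g` is a bounded approximation of `F` in cut norm that is constant on the boxes of `P` and, up
to `κ`, dominates `F` on every union of boxes. -/
structure BoxModel (P : Finpartition (univ : Finset G)) (ε κ : ℝ) (F g : G → G → ℝ) : Prop where
  constOnBoxes : ConstOnBoxes P g
  mem_Icc : ∀ x y, g x y ∈ Set.Icc (0 : ℝ) 2
  cutLE : CutLE (fun x y ↦ F x y - g x y) ε
  expect_mul_le : ∀ ⦃φ : G → G → ℝ⦄, ConstOnBoxes P φ → (∀ x y, φ x y ∈ Set.Icc (0 : ℝ) 1) →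
    𝔼 x, 𝔼 y, F x y * φ x y ≤ 𝔼 x, 𝔼 y, g x y * φ x y + κ

lemma exists_boxModel_of_smallCellMass_le [Nonempty G] {τ ε β : ℝ} {K : ℕ} (hε1 : ε ≤ 1)
    (hβ : 0 ≤ β) (hβε : 8 * (Fintype.card ι + 1) * β ≤ ε ^ 2) (hβε1 : β ≤ ε)
    (hK : Fintype.card ι * 4 < K * (ε ^ 2 / 2)) (hF : ∀ i x y, 0 ≤ F i x y)
    (hbox : ∀ (P : Finpartition (univ : Finset G)) i x y,
      boxAverage P τ (F i) x y ∈ Set.Icc (0 : ℝ) 2)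
    (hsmall : ∀ P : Finpartition (univ : Finset G), #P.parts ≤ 4 ^ K →
      ∀ i, smallCellMass P τ (F i) ≤ β) :
    ∃ P : Finpartition (univ : Finset G), ∀ i, BoxModel P ε β (F i) (boxAverage P τ (F i)) := by
  have le_final {n : ℕ} (hn : n ≤ K) : 4 ^ n ≤ 4 ^ K := Nat.pow_le_pow_right four_pos hn
  obtain ⟨n, hn, P, hPn, hP⟩ := exists_of_energy_increment
    (C := fun n (P : Finpartition (univ : Finset G)) ↦ #P.parts ≤ 4 ^ n)
    (good := fun P ↦ ∀ i, CutLE (fun x y ↦ F i x y - boxAverage P τ (F i) x y) ε)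
    (E := fun P ↦ ∑ i, energy P τ (F i)) (δ := ε ^ 2 / 2) (K := K) (B := Fintype.card ι * 4)
    ⟨⊤, card_le_one_iff_subsingleton.2 (Finpartition.parts_top_subsingleton _),
      sum_nonneg fun i _ ↦ energy_nonneg _ τ (F i)⟩
    (fun P ↦ by
      simpa using sum_le_card_nsmul univ _ 4 fun i _ ↦ energy_le_four (hbox P i)) hK
    fun n hn P hP hbad ↦ by
      obtain ⟨i, hi⟩ := not_forall.1 hbad
      simpa only [pow_succ'] using exists_energy_add_le hε1 hβ hβε hβε1 hF hP (hbox P)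
        (fun Q hQ ↦ hsmall Q (hQ.trans (by simpa only [pow_succ'] using le_final hn))) hi
  refine ⟨P, fun i ↦ ⟨constOnBoxes_boxAverage P τ _, hbox P i, hP i, fun φ hφ hφ1 ↦ ?_⟩⟩
  linarith [hsmall P (hPn.trans (le_final hn.le)) i,
    (abs_le.1 (abs_expect_mul_sub_expect_boxAverage_mul_le (τ := τ) (hF i) hφ hφ1)).2]

/-- Weak regularity for functions majorised by weights that are close to `1` in cut norm: one
partition serves the whole family. -/
theorem exists_boxModel.{u} (ι : Type*) [Finite ι] {ε κ : ℝ} (hε : 0 < ε) (hε1 : ε ≤ 1)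
    (hκ : 0 < κ) :
    ∃ γ : ℝ, 0 < γ ∧ ∀ {G : Type u} [Fintype G] [DecidableEq G] [Nonempty G]
      {ν F : ι → G → G → ℝ}, (∀ i x y, 0 ≤ F i x y) → (∀ i x y, F i x y ≤ ν i x y) →
      (∀ i, CutLE (fun x y ↦ ν i x y - 1) γ) →
      ∃ (P : Finpartition (univ : Finset G)) (g : ι → G → G → ℝ),
        ∀ i, BoxModel P ε κ (F i) (g i) := by
  cases nonempty_fintype ι
  obtain ⟨K, hK⟩ := exists_nat_gt (Fintype.card ι * 4 / (ε ^ 2 / 2))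
  rw [div_lt_iff₀ (by positivity)] at hK
  set β := min (ε ^ 2 / (8 * (Fintype.card ι + 1))) κ
  have β_pos : 0 < β := by positivity
  have hβε : 8 * (Fintype.card ι + 1) * β ≤ ε ^ 2 :=
    (le_div_iff₀' (by positivity)).1 (min_le_left _ _)
  have hβε1 : β ≤ ε := by nlinarith [Nat.cast_nonneg (α := ℝ) (Fintype.card ι)]
  set τ : ℝ := β / (4 * 4 ^ K) with hτ
  have τ_pos : 0 < τ := by positivity
  refine ⟨min (β / 4) (τ ^ 2), by positivity, fun {G} _ _ _ {ν F} hF hFν hν ↦ ?_⟩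
  obtain ⟨P, hP⟩ := exists_boxModel_of_smallCellMass_le hε1 β_pos.le hβε hβε1 hK hF
    (fun P i ↦ boxAverage_mem_Icc (hF i) (hFν i) ((hν i).mono (min_le_right _ _)) τ_pos)
    fun P hP i ↦ by
      have cells : #P.parts * τ ≤ 4 ^ K * τ := by
        gcongr
        exact_mod_cast hP
      have cells_eq : 4 ^ K * τ = β / 4 := by
        rw [hτ]
        field_simp
      linarith [smallCellMass_le (P := P) (hF i) (hFν i) ((hν i).mono (min_le_left _ _)) τ_pos.le]
  exact ⟨P, fun i ↦ boxAverage P τ (F i), fun i ↦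
    { hP i with
      expect_mul_le := fun φ hφ hφ1 ↦ ((hP i).expect_mul_le hφ hφ1).trans
        (add_le_add_right (min_le_right _ _) _) }⟩

end WeakRegularity

/-! ### Triangle removal -/

section TriangleRemoval

variable {G : Type*}

/-- There are no edges `x y`, `y z`, `z x` of the graphs `E 0`, `E 1`, `E 2` that form a triangle.
The three graphs are bipartite, each between two copies of `G`. -/
def TriangleFree (E : Fin 3 → G → G → Prop) : Prop :=
  ∀ x y z, E 0 x y → E 1 y z → ¬ E 2 z x

/-- The tripartite graph on three copies of `G` in which `H i` joins the `i`-th copy to the next one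
in cyclic order. -/
def tripartite (H : Fin 3 → G → G → Prop) : SimpleGraph (Fin 3 × G) where
  Adj p q := q.1 = p.1 + 1 ∧ H p.1 p.2 q.2 ∨ p.1 = q.1 + 1 ∧ H q.1 q.2 p.2
  symm := ⟨fun _ _ h ↦ h.symm⟩
  loopless := ⟨fun p h ↦ by simp at h⟩

lemma tripartite_adj {H : Fin 3 → G → G → Prop} {i : Fin 3} {u v : G} :
    (tripartite H).Adj (i, u) (i + 1, v) ↔ H i u v := by
  have add_one_add_one_ne : i ≠ i + 1 + 1 := by
    revert i
    decide
  simp [tripartite, add_one_add_one_ne]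

lemma exists_triangle_of_tripartite_adj {H : Fin 3 → G → G → Prop} {p q r : Fin 3 × G}
    (hpq : (tripartite H).Adj p q) (hpr : (tripartite H).Adj p r) (hqr : (tripartite H).Adj q r) :
    ∃ x y z, (H 0 x y ∧ H 1 y z ∧ H 2 z x) ∧
      ({p, q, r} : Set (Fin 3 × G)) = {(0, x), (1, y), (2, z)} := by
  obtain ⟨i, a⟩ := p
  obtain ⟨j, b⟩ := q
  obtain ⟨k, c⟩ := r
  simp only [tripartite] at hpq hpr hqr
  fin_cases i <;> fin_cases j <;> fin_cases k <;> grind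

lemma triangleFree_adj_of_cliqueFree {K : SimpleGraph (Fin 3 × G)} (hK : K.CliqueFree 3) :
    TriangleFree fun i x y ↦ K.Adj (i, x) (i + 1, y) := by
  classical
  exact fun x y z h₀ h₁ h₂ ↦ hK {(0, x), (1, y), (2, z)}
    (SimpleGraph.is3Clique_iff.2 ⟨_, _, _, h₀, .symm (G := K) h₂, h₁, rfl⟩)

open Classical in
/-- The indicator function of the edges of a bipartite graph. -/
noncomputable def edgeIndicator (H : G → G → Prop) (x y : G) : ℝ :=
  if H x y then 1 else 0

lemma edgeIndicator_mem_Icc (H : G → G → Prop) (x y : G) :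
    edgeIndicator H x y ∈ Set.Icc (0 : ℝ) 1 := by
  unfold edgeIndicator
  split_ifs <;> simp

lemma mul_edgeIndicator_le {f : G → G → ℝ} (hf : ∀ x y, 0 ≤ f x y) (t : ℝ) (x y : G) :
    t * edgeIndicator (fun x y ↦ t ≤ f x y) x y ≤ f x y := by
  unfold edgeIndicator
  split_ifs with h
  · simpa only [mul_one] using h
  · simpa only [mul_zero] using hf x y

variable [Fintype G]

open Classical in
lemma expect_edgeIndicator (H : G → G → Prop) :
    𝔼 x, 𝔼 y, edgeIndicator H x y =
      #{p : G × G | H p.1 p.2} / (Fintype.card G : ℝ) ^ 2 := by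
  rw [← expect_prod_type fun p : G × G ↦ edgeIndicator H p.1 p.2, Fintype.expect_eq_sum_div_card]
  simp only [edgeIndicator, sum_boole, Fintype.card_prod, Nat.cast_mul, sq]

open Classical in
lemma triangleDensity_edgeIndicator (H : Fin 3 → G → G → Prop) :
    triangleDensity (edgeIndicator (H 0)) (edgeIndicator (H 1)) (edgeIndicator (H 2)) =
      #{t : G × G × G | H 0 t.1 t.2.1 ∧ H 1 t.2.1 t.2.2 ∧ H 2 t.2.2 t.1} /
        (Fintype.card G : ℝ) ^ 3 := by
  calc triangleDensity (edgeIndicator (H 0)) (edgeIndicator (H 1)) (edgeIndicator (H 2))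
      = 𝔼 t : G × G × G, if H 0 t.1 t.2.1 ∧ H 1 t.2.1 t.2.2 ∧ H 2 t.2.2 t.1 then 1 else 0 := by
        simp only [expect_prod_type, triangleDensity, pathDensity, edgeIndicator, mul_expect]
        refine expect_congr rfl fun x _ ↦ expect_congr rfl fun y _ ↦ expect_congr rfl fun z _ ↦ ?_
        split_ifs <;> grind
    _ = _ := by
        rw [Fintype.expect_eq_sum_div_card]
        simp only [sum_boole, Fintype.card_prod, Nat.cast_mul, pow_succ, pow_zero, one_mul,
          mul_assoc]

open Classical in
lemma card_cliqueFinset_tripartite_le (H : Fin 3 → G → G → Prop) :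
    #((tripartite H).cliqueFinset 3) ≤
      #{t : G × G × G | H 0 t.1 t.2.1 ∧ H 1 t.2.1 t.2.2 ∧ H 2 t.2.2 t.1} := by
  refine (card_le_card (t := image (fun t : G × G × G ↦
    ({(0, t.1), (1, t.2.1), (2, t.2.2)} : Finset (Fin 3 × G))) _) fun s hs ↦ ?_).trans
      card_image_le
  rw [SimpleGraph.mem_cliqueFinset_iff, SimpleGraph.is3Clique_iff] at hs
  obtain ⟨p, q, r, hpq, hpr, hqr, rfl⟩ := hs
  obtain ⟨x, y, z, h, vertices_eq⟩ := exists_triangle_of_tripartite_adj hpq hpr hqr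
  refine mem_image.2 ⟨(x, y, z), mem_filter.2 ⟨mem_univ _, h⟩, coe_injective ?_⟩
  simpa only [coe_insert, coe_singleton] using vertices_eq.symm

open Classical in
lemma expect_edgeIndicator_lost_le {H : Fin 3 → G → G → Prop} {K : SimpleGraph (Fin 3 × G)}
    [Fintype K.edgeSet] (hK : K ≤ tripartite H) (i : Fin 3) :
    𝔼 x, 𝔼 y, edgeIndicator (fun x y ↦ H i x y ∧ ¬ K.Adj (i, x) (i + 1, y)) x y ≤
      (#(tripartite H).edgeFinset - #K.edgeFinset : ℝ) / (Fintype.card G : ℝ) ^ 2 := by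
  have edges_subset := SimpleGraph.edgeFinset_mono hK
  rw [expect_edgeIndicator, ← Nat.cast_sub (card_le_card edges_subset),
    ← card_sdiff_of_subset edges_subset]
  gcongr
  refine card_le_card_of_injOn (fun p ↦ s((i, p.1), (i + 1, p.2))) (fun p hp ↦ ?_)
    fun p _ q _ h ↦ ?_
  · simp only [coe_filter, mem_univ, true_and, Set.mem_ofPred_eq] at hp
    simp only [coe_sdiff, SimpleGraph.coe_edgeFinset, Set.mem_sdiff, SimpleGraph.mem_edgeSet]
    exact ⟨tripartite_adj.2 hp.1, hp.2⟩
  · simpa [Prod.ext_iff] using h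

lemma exists_triangleFree_of_triangleDensity_lt [Nonempty G] {ε : ℝ} {H : Fin 3 → G → G → Prop}
    (hH : triangleDensity (edgeIndicator (H 0)) (edgeIndicator (H 1)) (edgeIndicator (H 2)) <
      SimpleGraph.triangleRemovalBound (ε / 9) * 27) :
    ∃ H' : Fin 3 → G → G → Prop, TriangleFree H' ∧
      ∀ i, 𝔼 x, 𝔼 y, edgeIndicator (fun x y ↦ H i x y ∧ ¬ H' i x y) x y ≤ ε := by
  classical
  have card_pos : (0 : ℝ) < Fintype.card G := Nat.cast_pos.2 Fintype.card_pos
  have card_vertices : (Fintype.card (Fin 3 × G) : ℝ) = 3 * Fintype.card G := by simp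
  rw [triangleDensity_edgeIndicator, div_lt_iff₀ (by positivity)] at hH
  obtain ⟨K, hK, _, lost, hfree⟩ := SimpleGraph.triangle_removal (G := tripartite H) (ε := ε / 9)
    (by
      rw [card_vertices]
      linarith [(Nat.cast_le (α := ℝ)).2 (card_cliqueFinset_tripartite_le H)])
  refine ⟨_, triangleFree_adj_of_cliqueFree hfree, fun i ↦ ?_⟩
  refine (expect_edgeIndicator_lost_le hK i).trans ((div_le_iff₀ (by positivity)).2 ?_)
  rw [Nat.cast_pow, card_vertices] at lost
  linarith

end TriangleRemoval

section BoxRemoval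

variable {G : Type*} [Fintype G] [DecidableEq G] {P : Finpartition (univ : Finset G)}

lemma ConstOnBoxes.edgeIndicator {H : G → G → Prop} (hH : ConstOnBoxes P H) :
    ConstOnBoxes P (edgeIndicator H) := by
  intro x x' y y' hx hy
  rw [CornerRemoval.edgeIndicator, CornerRemoval.edgeIndicator, hH hx hy]

lemma boxAverage_zero (F : G → G → ℝ) (x y : G) :
    boxAverage P 0 F x y = 𝔼 x' ∈ P.part x, 𝔼 y' ∈ P.part y, F x' y' := by
  simp [boxAverage, largeCell]

/-- A random triple of vertices in three given cells is not a triangle. -/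
lemma TriangleFree.one_le_add_boxAverage {H : Fin 3 → G → G → Prop} (hH : TriangleFree H)
    (x y z : G) :
    1 ≤ boxAverage P 0 (edgeIndicator fun x y ↦ ¬ H 0 x y) x y +
      boxAverage P 0 (edgeIndicator fun x y ↦ ¬ H 1 x y) y z +
      boxAverage P 0 (edgeIndicator fun x y ↦ ¬ H 2 x y) z x := by
  have part_nonempty v : (P.part v).Nonempty := P.part_nonempty.2 (mem_univ v)
  set ρ := fun i ↦ edgeIndicator fun x y ↦ ¬ H i x y
  calc (1 : ℝ) ≤ 𝔼 x' ∈ P.part x, 𝔼 y' ∈ P.part y, 𝔼 z' ∈ P.part z,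
        (ρ 0 x' y' + ρ 1 y' z' + ρ 2 z' x') :=
        le_expect (part_nonempty x) fun x' _ ↦ le_expect (part_nonempty y) fun y' _ ↦
          le_expect (part_nonempty z) fun z' _ ↦ by
            have := hH x' y' z'
            simp only [ρ, edgeIndicator]
            split_ifs <;> grind
    _ = _ := by
        simp only [expect_add_distrib, expect_const (part_nonempty _), boxAverage_zero]
        rw [expect_comm (s := P.part z)]

/-- The edges that are removed lie in boxes of which at least a third is outside of `H'`. -/
lemma expect_edgeIndicator_removed_le {H H' : G → G → Prop} (hH : ConstOnBoxes P H) :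
    𝔼 x, 𝔼 y, edgeIndicator (fun x y ↦ H x y ∧
        ¬ (H x y ∧ boxAverage P 0 (edgeIndicator fun x y ↦ ¬ H' x y) x y < 1 / 3)) x y ≤
      3 * 𝔼 x, 𝔼 y, edgeIndicator (fun x y ↦ H x y ∧ ¬ H' x y) x y := by
  set ρ := boxAverage P 0 (edgeIndicator fun x y ↦ ¬ H' x y)
  have ρ_nonneg x y : 0 ≤ ρ x y := by
    simp only [ρ, boxAverage_zero]
    exact expect_nonneg fun _ _ ↦ expect_nonneg fun _ _ ↦ (edgeIndicator_mem_Icc _ _ _).1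
  calc _ ≤ 3 * 𝔼 x, 𝔼 y, ρ x y * edgeIndicator H x y := by
        simp only [mul_expect]
        refine expect_le_expect fun x _ ↦ expect_le_expect fun y _ ↦ ?_
        have := ρ_nonneg x y
        simp only [edgeIndicator]
        split_ifs <;> grind
    _ = 3 * 𝔼 x, 𝔼 y, edgeIndicator (fun x y ↦ H x y ∧ ¬ H' x y) x y := by
        rw [expect_boxAverage_mul _ _ hH.edgeIndicator]
        congr! 5 with x _ y _
        simp only [largeCell, edgeIndicator, zero_mul, Nat.cast_nonneg, if_true, one_mul]
        split_ifs <;> grind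

/-- Triangle removal among unions of boxes: keep the boxes of which less than a third
is removed. -/
theorem exists_constOnBoxes_triangleFree.{u} {ε : ℝ} (hε : 0 < ε) :
    ∃ β : ℝ, 0 < β ∧ ∀ {G : Type u} [Fintype G] [DecidableEq G] [Nonempty G]
      {P : Finpartition (univ : Finset G)} {H : Fin 3 → G → G → Prop},
      (∀ i, ConstOnBoxes P (H i)) →
      triangleDensity (edgeIndicator (H 0)) (edgeIndicator (H 1)) (edgeIndicator (H 2)) < β →
      ∃ E : Fin 3 → G → G → Prop, (∀ i, ConstOnBoxes P (E i)) ∧ TriangleFree E ∧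
        ∀ i, 𝔼 x, 𝔼 y, edgeIndicator (fun x y ↦ H i x y ∧ ¬ E i x y) x y ≤ ε := by
  refine ⟨SimpleGraph.triangleRemovalBound (ε / 3 / 9) * 27,
    mul_pos (SimpleGraph.triangleRemovalBound_pos (by positivity)) (by norm_num),
    fun {G} _ _ _ {P H} hH hlt ↦ ?_⟩
  obtain ⟨H', hfree, hloss⟩ := exists_triangleFree_of_triangleDensity_lt hlt
  refine ⟨fun i x y ↦ H i x y ∧ boxAverage P 0 (edgeIndicator fun x y ↦ ¬ H' i x y) x y < 1 / 3,
    fun i x x' y y' hx hy ↦ ?_, fun x y z h₀ h₁ h₂ ↦ ?_, fun i ↦ ?_⟩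
  · simp only [hH i hx hy, constOnBoxes_boxAverage P 0 _ hx hy]
  · linarith [hfree.one_le_add_boxAverage (P := P) x y z, h₀.2, h₁.2, h₂.2]
  · linarith [expect_edgeIndicator_removed_le (hH i) (H' := H' i), hloss i]

end BoxRemoval

section RelativeRemoval

variable {G : Type*} [Fintype G]

lemma CutLE.div_const {X Y : Type*} [Fintype X] [Fintype Y] {h : X → Y → ℝ} {ε r : ℝ}
    (hh : CutLE h ε) (hr : 0 ≤ r) : CutLE (fun x y ↦ h x y / r) (ε / r) := by
  intro u v hu hv
  simp only [div_mul_eq_mul_div, ← expect_div, abs_div, abs_of_nonneg hr]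
  exact div_le_div_of_nonneg_right (hh hu hv) hr

lemma triangleDensity_div_const {X Y Z : Type*} [Fintype X] [Fintype Y] [Fintype Z]
    (a : X → Y → ℝ) (b : Y → Z → ℝ) (c : Z → X → ℝ) (r : ℝ) :
    triangleDensity (fun x y ↦ a x y / r) (fun y z ↦ b y z / r) (fun z x ↦ c z x / r) =
      triangleDensity a b c / r ^ 3 := by
  simp only [triangleDensity, pathDensity, mul_expect, expect_div]
  exact expect_congr rfl fun x _ ↦ expect_congr rfl fun y _ ↦ expect_congr rfl fun z _ ↦ by ring

/-- The bound `2` of a box model does not allow `ω` itself as a common majorant of `F` and its model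
where `ω` is small; after division by `4` the weight `(1 + ω) / 2 ≥ 1 / 2` serves. -/
lemma BoxModel.denseModel [DecidableEq G] {P : Finpartition (univ : Finset G)} {ε κ : ℝ}
    {ω F g : G → G → ℝ} (h : BoxModel P ε κ F g) (hε : 0 ≤ ε) (hF : ∀ x y, 0 ≤ F x y)
    (hFω : ∀ x y, F x y ≤ ω x y) :
    DenseModel ε (fun x y ↦ (1 + ω x y) / 2) (fun x y ↦ F x y / 4) (fun x y ↦ g x y / 4) where
  nonneg x y := by linarith [hF x y]
  le_weight x y := by linarith [hF x y, hFω x y]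
  model_nonneg x y := by linarith [(h.mem_Icc x y).1]
  model_le_weight x y := by linarith [hF x y, hFω x y, (h.mem_Icc x y).2]
  model_le_one x y := by linarith [(h.mem_Icc x y).2]
  cutLE := by
    simpa only [sub_div] using (h.cutLE.div_const zero_le_four).mono (div_le_self hε (by norm_num))

lemma pow_mul_triangleDensity_edgeIndicator_le {a b c : G → G → ℝ} (ha : ∀ x y, 0 ≤ a x y)
    (hb : ∀ x y, 0 ≤ b x y) (hc : ∀ x y, 0 ≤ c x y) {t : ℝ} (ht : 0 ≤ t) :
    t ^ 3 * triangleDensity (edgeIndicator fun x y ↦ t ≤ a x y)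
      (edgeIndicator fun x y ↦ t ≤ b x y) (edgeIndicator fun x y ↦ t ≤ c x y) ≤
        triangleDensity a b c := by
  have scaled_nonneg (H : G → G → Prop) x y : 0 ≤ t * edgeIndicator H x y :=
    mul_nonneg ht (edgeIndicator_mem_Icc H x y).1
  simp only [triangleDensity, pathDensity, mul_expect]
  refine expect_le_expect fun x _ ↦ expect_le_expect fun y _ ↦ expect_le_expect fun z _ ↦ ?_
  calc _ = t * edgeIndicator (fun x y ↦ t ≤ a x y) x y *
        (t * edgeIndicator (fun x y ↦ t ≤ b x y) y z *
          (t * edgeIndicator (fun x y ↦ t ≤ c x y) z x)) := by ring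
    _ ≤ a x y * (b y z * c z x) :=
        mul_le_mul (mul_edgeIndicator_le ha t x y)
          (mul_le_mul (mul_edgeIndicator_le hb t y z) (mul_edgeIndicator_le hc t z x)
            (scaled_nonneg _ _ _) (hb y z))
          (mul_nonneg (scaled_nonneg _ _ _) (scaled_nonneg _ _ _)) (ha x y)

lemma BoxModel.expect_mul_edgeIndicator_not_le [DecidableEq G] [Nonempty G]
    {P : Finpartition (univ : Finset G)} {ε κ : ℝ} {F g : G → G → ℝ} {E : G → G → Prop}
    (h : BoxModel P ε κ F g) (hE : ConstOnBoxes P E) {t : ℝ} (ht : 0 ≤ t) :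
    𝔼 x, 𝔼 y, F x y * edgeIndicator (fun x y ↦ ¬ E x y) x y ≤
      t + 2 * (𝔼 x, 𝔼 y, edgeIndicator (fun x y ↦ t ≤ g x y ∧ ¬ E x y) x y) + κ := by
  have not_E_const : ConstOnBoxes P fun x y ↦ ¬ E x y :=
    fun _ _ _ _ hx hy ↦ congrArg Not (hE hx hy)
  calc 𝔼 x, 𝔼 y, F x y * edgeIndicator (fun x y ↦ ¬ E x y) x y
      ≤ 𝔼 x, 𝔼 y, g x y * edgeIndicator (fun x y ↦ ¬ E x y) x y + κ :=
        h.expect_mul_le not_E_const.edgeIndicator fun _ _ ↦ edgeIndicator_mem_Icc _ _ _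
    _ ≤ 𝔼 x, 𝔼 y, (t + 2 * edgeIndicator (fun x y ↦ t ≤ g x y ∧ ¬ E x y) x y) + κ := by
        gcongr with x _ y _
        have := h.mem_Icc x y
        simp only [edgeIndicator]
        split_ifs <;> grind
    _ = _ := by
        simp only [expect_add_distrib, ← mul_expect, Fintype.expect_const]

theorem exists_triangleFree_of_boxModel.{u} {δ : ℝ} (hδ : 0 < δ) :
    ∃ t : ℝ, 0 < t ∧ ∀ {G : Type u} [Fintype G] [DecidableEq G] [Nonempty G]
      {P : Finpartition (univ : Finset G)} {ε : ℝ} {F g : Fin 3 → G → G → ℝ},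
      (∀ i, BoxModel P ε (δ / 4) (F i) (g i)) → triangleDensity (g 0) (g 1) (g 2) < t →
      ∃ E : Fin 3 → G → G → Prop, TriangleFree E ∧
        ∀ i, 𝔼 x, 𝔼 y, F i x y * edgeIndicator (fun x y ↦ ¬ E i x y) x y ≤ δ := by
  obtain ⟨β, hβ, removal⟩ := exists_constOnBoxes_triangleFree (ε := δ / 4) (by positivity)
  refine ⟨(δ / 4) ^ 3 * β, by positivity, fun {G} _ _ _ {P ε F g} hg hlt ↦ ?_⟩
  have g_nonneg i x y := ((hg i).mem_Icc x y).1
  obtain ⟨E, hE, hfree, loss⟩ := removal (H := fun i x y ↦ δ / 4 ≤ g i x y)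
    (fun i x x' y y' hx hy ↦ by simp only [(hg i).constOnBoxes hx hy])
    (lt_of_mul_lt_mul_left ((pow_mul_triangleDensity_edgeIndicator_le (g_nonneg 0) (g_nonneg 1)
      (g_nonneg 2) (by positivity)).trans_lt hlt) (by positivity))
  refine ⟨E, hfree, fun i ↦ ?_⟩
  linarith [(hg i).expect_mul_edgeIndicator_not_le (hE i) (t := δ / 4) (by positivity), loss i]

theorem exists_triangleFree_of_linearFormsCondition.{u} {δ : ℝ} (hδ : 0 < δ) :
    ∃ η t : ℝ, 0 < η ∧ 0 < t ∧ ∀ {G : Type u} [Fintype G] [Nonempty G]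
      {ω F : Fin 3 → G → G → ℝ}, (∀ i x y, 0 ≤ F i x y) → (∀ i x y, F i x y ≤ ω i x y) →
      LinearFormsCondition η (ω 0) (ω 1) (ω 2) → triangleDensity (F 0) (F 1) (F 2) ≤ t →
      ∃ E : Fin 3 → G → G → Prop, TriangleFree E ∧
        ∀ i, 𝔼 x, 𝔼 y, F i x y * edgeIndicator (fun x y ↦ ¬ E i x y) x y ≤ δ := by
  obtain ⟨m, hm, removal⟩ := exists_triangleFree_of_boxModel.{u} hδ
  obtain ⟨ε, hε, hε1, counting⟩ := exists_hasTriangleCounting.{u, u, u} (θ := min 1 (m / 128))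
    (by positivity) (min_le_left _ _)
  obtain ⟨γ, hγ, regularity⟩ := exists_boxModel.{u} (Fin 3) hε hε1 (κ := δ / 4) (by positivity)
  refine ⟨min (ε ^ 4) ((γ / 2) ^ 4), m / 4, by positivity, by positivity,
    fun {G} _ _ {ω F} hF hFω hω ht ↦ ?_⟩
  classical
  have cutLE_of_linearForms {a b c : G → G → ℝ}
      (h : LinearFormsCondition (min (ε ^ 4) ((γ / 2) ^ 4)) a b c) :
      CutLE (fun x y ↦ a x y - 1) γ :=
    ((h.mono (min_le_right _ _)).cutLE_sub_one (by positivity)).mono (by linarith)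
  obtain ⟨P, g, hg⟩ := regularity hF hFω fun i ↦ by
    fin_cases i
    exacts [cutLE_of_linearForms hω, cutLE_of_linearForms hω.rotate,
      cutLE_of_linearForms hω.rotate.rotate]
  have dense i := (hg i).denseModel hε.le (hF i) (hFω i)
  have densities_close := counting (hω.mono (min_le_left _ _)).half_one_add
    (dense 0) (dense 1) (dense 2)
  rw [triangleDensity_div_const, triangleDensity_div_const] at densities_close
  refine removal hg ?_
  linarith [(abs_le.1 densities_close).1, min_le_right 1 (m / 128)]

end RelativeRemoval

/-! ### Corners -/

section Corners

variable {G : Type*}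

lemma isCornerFree_iff_not_exists [AddCommGroup G] {A : Set (G × G)} :
    IsCornerFree A ↔
      ¬ ∃ x y d : G, d ≠ 0 ∧ (x, y) ∈ A ∧ (x + d, y) ∈ A ∧ (x, y + d) ∈ A := by
  constructor
  · rintro hA ⟨x, y, d, hd, hxy, hxd, hyd⟩
    exact hd (left_eq_add.1 (hA ⟨hxy, hyd, hxd, by abel⟩))
  · intro hA x₁ y₁ x₂ y₂ h
    by_contra hne
    have y₂_eq : y₁ + (x₂ - x₁) = y₂ := by
      rw [← add_sub_assoc, add_comm, ← h.add_eq_add, add_sub_cancel_left]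
    exact hA ⟨x₁, y₁, x₂ - x₁, sub_ne_zero.2 (Ne.symm hne), h.fst_fst_mem,
      (add_sub_cancel x₁ x₂).symm ▸ h.snd_fst_mem, y₂_eq.symm ▸ h.fst_snd_mem⟩

/-- The edge weights, at `(x, y)`, `(y, z)` and `(z, x)`, of the tripartite graph attached to `f`.
The triangle `x, y, z` stands for the corner `(x, y)`, `(z - y, y)`, `(x, z - x)`, which is trivial
if and only if `z = x + y`. -/
def cornerEdges [Sub G] (f : G × G → ℝ) : Fin 3 → G → G → ℝ :=
  ![fun x y ↦ f (x, y), fun y z ↦ f (z - y, y), fun z x ↦ f (x, z - x)]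

lemma octahedronFactors_trivialCorner [AddCommGroup G] (f : G × G → ℝ) (x y : G) (i : Fin 12) :
    octahedronFactors (cornerEdges f 0) (cornerEdges f 1) (cornerEdges f 2)
      (x, x, y, y, x + y, x + y) i = f (x, y) := by
  fin_cases i <;> simp [octahedronFactors, cornerEdges]

/-- The indicator function of `B` scaled by the factor that gives the indicator function of `S`
mean `1`. -/
noncomputable def relIndicator [Fintype G] [DecidableEq G] (S B : Finset (G × G)) (p : G × G) : ℝ :=
  (Fintype.card G : ℝ) ^ 2 / #S * if p ∈ B then 1 else 0

section RelIndicator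

variable [Fintype G] [DecidableEq G] {S A B : Finset (G × G)}

lemma relIndicator_nonneg (S B : Finset (G × G)) (p : G × G) : 0 ≤ relIndicator S B p := by
  unfold relIndicator
  positivity

lemma relIndicator_mono (hAB : A ⊆ B) (p : G × G) : relIndicator S A p ≤ relIndicator S B p := by
  unfold relIndicator
  gcongr
  split_ifs with hA hB
  exacts [le_rfl, absurd (hAB hA) hB, zero_le_one, le_rfl]

lemma relIndicator_le (S B : Finset (G × G)) (p : G × G) :
    relIndicator S B p ≤ (Fintype.card G : ℝ) ^ 2 / #S :=
  mul_le_of_le_one_right (by positivity) (by split_ifs <;> norm_num)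

lemma relIndicator_of_mem {p : G × G} (hp : p ∈ B) :
    relIndicator S B p = (Fintype.card G : ℝ) ^ 2 / #S := by
  rw [relIndicator, if_pos hp, mul_one]

lemma relIndicator_of_notMem {p : G × G} (hp : p ∉ B) : relIndicator S B p = 0 := by
  rw [relIndicator, if_neg hp, mul_zero]

lemma expect_relIndicator [Nonempty G] (S B : Finset (G × G)) :
    𝔼 x, 𝔼 y, relIndicator S B (x, y) = #B / #S := by
  have card_ne_zero : (Fintype.card G : ℝ) ≠ 0 := Nat.cast_ne_zero.2 Fintype.card_ne_zero
  rw [← expect_prod_type, Fintype.expect_eq_sum_div_card]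
  simp only [relIndicator, ← mul_sum, sum_boole, Fintype.card_prod, Nat.cast_mul,
    filter_mem_eq_inter, univ_inter]
  field_simp

end RelIndicator

variable [AddCommGroup G] [Fintype G]

/-- Each pair `(x, y)` spans the triangle `x, y, x + y`, all of whose edges have weight `f (x, y)`,
and a triangle-free graph misses one of them. -/
lemma TriangleFree.expect_le_sum_cornerEdges {E : Fin 3 → G → G → Prop} (hE : TriangleFree E)
    {f : G × G → ℝ} (hf : ∀ p, 0 ≤ f p) :
    𝔼 x, 𝔼 y, f (x, y) ≤
      ∑ i, 𝔼 x, 𝔼 y, cornerEdges f i x y * edgeIndicator (fun x y ↦ ¬ E i x y) x y := by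
  set missing := fun i ↦ edgeIndicator fun x y ↦ ¬ E i x y with missing_def
  have second : 𝔼 x, 𝔼 y, f (x, y) * missing 1 y (x + y) =
      𝔼 y, 𝔼 z, f (z - y, y) * missing 1 y z := by
    rw [expect_comm]
    exact expect_congr rfl fun y _ ↦ Fintype.expect_equiv (Equiv.addRight y) _ _ fun x ↦ by simp
  have third : 𝔼 x, 𝔼 y, f (x, y) * missing 2 (x + y) x =
      𝔼 z, 𝔼 x, f (x, z - x) * missing 2 z x := by
    rw [expect_comm (s := univ) (t := univ) (f := fun z x ↦ f (x, z - x) * missing 2 z x)]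
    exact expect_congr rfl fun x _ ↦ Fintype.expect_equiv (Equiv.addLeft x) _ _ fun y ↦ by simp
  calc 𝔼 x, 𝔼 y, f (x, y)
      ≤ 𝔼 x, 𝔼 y, (f (x, y) * missing 0 x y + f (x, y) * missing 1 y (x + y) +
          f (x, y) * missing 2 (x + y) x) := by
        refine expect_le_expect fun x _ ↦ expect_le_expect fun y _ ↦ ?_
        have := hE x y (x + y)
        have := hf (x, y)
        simp only [missing_def, edgeIndicator]
        split_ifs <;> grind
    _ = _ := by
        simp only [expect_add_distrib, second, third, Fin.sum_univ_three]
        rfl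

variable [DecidableEq G] {S A : Finset (G × G)}

/-- Only the trivial corners contribute to the triangle density. -/
lemma triangleDensity_cornerEdges_le (hA : IsCornerFree (A : Set (G × G))) (hAS : #A ≤ #S) :
    triangleDensity (cornerEdges (relIndicator S A) 0) (cornerEdges (relIndicator S A) 1)
      (cornerEdges (relIndicator S A) 2) ≤ (Fintype.card G : ℝ) ^ 3 / #S ^ 2 := by
  set M : ℝ := (Fintype.card G : ℝ) ^ 2 / #S with hM
  have card_ne_zero : (Fintype.card G : ℝ) ≠ 0 := Nat.cast_ne_zero.2 Fintype.card_ne_zero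
  have trivial_or_zero (x y z : G) :
      relIndicator S A (x, y) * (relIndicator S A (z - y, y) * relIndicator S A (x, z - x)) ≤
        relIndicator S A (x, y) * M ^ 2 * if z = x + y then 1 else 0 := by
    split_ifs with hz
    · rw [mul_one, sq]
      exact mul_le_mul_of_nonneg_left (mul_le_mul (relIndicator_le _ _ _) (relIndicator_le _ _ _)
        (relIndicator_nonneg _ _ _) (by positivity)) (relIndicator_nonneg _ _ _)
    · rw [mul_zero]
      by_contra! hpos
      have mem_of_ne {p : G × G} (hp : relIndicator S A p ≠ 0) : p ∈ (A : Set (G × G)) :=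
        of_not_not (mt relIndicator_of_notMem hp)
      have hne := hpos.ne'
      simp only [ne_eq, mul_eq_zero, not_or] at hne
      exact hz (eq_add_of_sub_eq (hA ⟨mem_of_ne hne.1, mem_of_ne hne.2.2, mem_of_ne hne.2.1,
        by abel⟩).symm)
  calc _ ≤ 𝔼 x, 𝔼 y, 𝔼 z, relIndicator S A (x, y) * M ^ 2 * if z = x + y then 1 else 0 := by
        simp only [triangleDensity, pathDensity, mul_expect]
        exact expect_le_expect fun x _ ↦ expect_le_expect fun y _ ↦ expect_le_expect fun z _ ↦
          trivial_or_zero x y z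
    _ = M ^ 2 / Fintype.card G * (#A / #S) := by
        rw [← expect_relIndicator S A]
        simp only [mul_expect]
        refine expect_congr rfl fun x _ ↦ expect_congr rfl fun y _ ↦ ?_
        rw [← mul_expect, Fintype.expect_eq_sum_div_card, sum_ite_eq' univ, if_pos (mem_univ _)]
        ring
    _ ≤ M ^ 2 / Fintype.card G :=
        mul_le_of_le_one_right (by positivity)
          (div_le_one_of_le₀ (Nat.cast_le.2 hAS) (Nat.cast_nonneg _))
    _ = (Fintype.card G : ℝ) ^ 3 / #S ^ 2 := by
        rw [hM]
        field_simp

/-- The sextuples with `x = x'`, `y = y'`, `z = z' = x + y` and `(x, y) ∈ S` alone contribute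
`|S| (|G|² / |S|)¹²` to the sum over all sextuples. -/
lemma card_mul_pow_le
    (h : LinearFormsCondition 1 (cornerEdges (relIndicator S S) 0)
      (cornerEdges (relIndicator S S) 1) (cornerEdges (relIndicator S S) 2)) :
    #S * ((Fintype.card G : ℝ) ^ 2 / #S) ^ 12 ≤ 2 * Fintype.card G ^ 6 := by
  set factors := octahedronFactors (cornerEdges (relIndicator S S) 0)
    (cornerEdges (relIndicator S S) 1) (cornerEdges (relIndicator S S) 2)
  have card_ne_zero : (Fintype.card G : ℝ) ≠ 0 := Nat.cast_ne_zero.2 Fintype.card_ne_zero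
  have factors_nonneg v i : 0 ≤ factors v i := by
    fin_cases i <;> exact relIndicator_nonneg _ _ _
  let diagonal : G × G ↪ G × G × G × G × G × G :=
    ⟨fun p ↦ (p.1, p.1, p.2, p.2, p.1 + p.2, p.1 + p.2), fun p q h ↦
      Prod.ext (congrArg (fun v ↦ v.1) h) (congrArg (fun v ↦ v.2.2.1) h)⟩
  have factors_diagonal p (hp : p ∈ S) i :
      factors (diagonal p) i = (Fintype.card G : ℝ) ^ 2 / #S := by
    rw [← relIndicator_of_mem hp]
    exact octahedronFactors_trivialCorner _ p.1 p.2 i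
  calc #S * ((Fintype.card G : ℝ) ^ 2 / #S) ^ 12 = ∑ v ∈ S.map diagonal, ∏ i, factors v i := by
        rw [sum_map, sum_congr rfl fun p hp ↦ prod_congr rfl fun i _ ↦ factors_diagonal p hp i,
          sum_const, prod_const, card_univ, Fintype.card_fin, nsmul_eq_mul]
    _ ≤ ∑ v, ∏ i, factors v i :=
        sum_le_sum_of_subset_of_nonneg (subset_univ _) fun v _ _ ↦
          prod_nonneg fun i _ ↦ factors_nonneg v i
    _ = (𝔼 v, ∏ i, factors v i) * Fintype.card G ^ 6 := by
        rw [Fintype.expect_eq_sum_div_card]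
        simp only [Fintype.card_prod, Nat.cast_mul]
        field_simp
    _ ≤ 2 * Fintype.card G ^ 6 := by
        gcongr
        linarith [SubproductsNearOne.expect_prod_le h univ]

lemma card_pow_le (hS : S.Nonempty)
    (h : LinearFormsCondition 1 (cornerEdges (relIndicator S S) 0)
      (cornerEdges (relIndicator S S) 1) (cornerEdges (relIndicator S S) 2)) :
    (Fintype.card G : ℝ) ^ 18 ≤ 2 * (#S : ℝ) ^ 11 := by
  have : (0 : ℝ) < Fintype.card G := Nat.cast_pos.2 Fintype.card_pos
  have : (0 : ℝ) < #S := Nat.cast_pos.2 hS.card_pos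
  calc (Fintype.card G : ℝ) ^ 18
      = #S * ((Fintype.card G : ℝ) ^ 2 / #S) ^ 12 / Fintype.card G ^ 6 * #S ^ 11 := by
        field_simp
    _ ≤ 2 * (#S : ℝ) ^ 11 := by
        gcongr
        exact (div_le_iff₀ (by positivity)).2 (card_mul_pow_le h)

end Corners

lemma pow_three_div_sq_le {n s t : ℝ} (hn : 1 ≤ n) (hs : 0 < s) (ht : 0 < t)
    (h : n ^ 18 ≤ 2 * s ^ 11) (hnt : 4 / t ^ 11 ≤ n) : n ^ 3 / s ^ 2 ≤ t := by
  rw [div_le_iff₀ (by positivity)] at hnt ⊢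
  refine le_of_pow_le_pow_left₀ (n := 11) (by norm_num) (by positivity) ?_
  have : 4 * (n ^ 3) ^ 11 ≤ 4 * (t * s ^ 2) ^ 11 := by
    calc 4 * (n ^ 3) ^ 11 ≤ n * t ^ 11 * (n ^ 3) ^ 11 := by gcongr
      _ = t ^ 11 * n ^ 34 := by ring
      _ ≤ t ^ 11 * n ^ 36 := by gcongr; norm_num
      _ = t ^ 11 * (n ^ 18) ^ 2 := by ring
      _ ≤ t ^ 11 * (2 * s ^ 11) ^ 2 := by gcongr
      _ = 4 * (t * s ^ 2) ^ 11 := by ring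
  linarith

lemma linearFormsCondition_of_cornerFactors {N : ℕ} [NeZero N] {ν : ZMod N × ZMod N → ℝ} {η : ℝ}
    (hη : 0 ≤ η)
    (h : ∀ b : Fin 12 → Bool, (∃ i, b i = true) →
      |avg (fun v : Fin 6 → ZMod N ↦
        ∏ i, if b i then cornerFactors ν (v 0) (v 1) (v 2) (v 3) (v 4) (v 5) i else 1) - 1| ≤ η) :
    LinearFormsCondition η (cornerEdges ν 0) (cornerEdges ν 1) (cornerEdges ν 2) := by
  intro T
  obtain rfl | ⟨i, hi⟩ := T.eq_empty_or_nonempty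
  · simpa [expect_const univ_nonempty] using hη
  let coordinates : (Fin 6 → ZMod N) ≃ ZMod N × ZMod N × ZMod N × ZMod N × ZMod N × ZMod N :=
    { toFun := fun v ↦ (v 0, v 1, v 2, v 3, v 4, v 5)
      invFun := fun (x, x', y, y', z, z') ↦ ![x, x', y, y', z, z']
      left_inv := fun v ↦ by ext j; fin_cases j <;> rfl
      right_inv := fun _ ↦ rfl }
  convert h (fun j ↦ decide (j ∈ T)) ⟨i, decide_eq_true hi⟩ using 3
  rw [avg, ← Fintype.expect_eq_sum_div_card]
  refine (Fintype.expect_equiv coordinates _ _ fun v ↦ ?_).symm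
  simp only [decide_eq_true_eq, prod_ite_mem, univ_inter]
  exact prod_congr rfl fun j _ ↦ by fin_cases j <;> rfl

end CornerRemoval

open CornerRemoval in
theorem corner_removal_in_pseudorandom_general.{u} {δ : ℝ} (hδ : 0 < δ) :
    ∃ η : ℝ, 0 < η ∧ ∃ N₀ : ℕ, ∀ {G : Type u} [AddCommGroup G] [Fintype G] [DecidableEq G],
      N₀ ≤ Fintype.card G → ∀ {S : Finset (G × G)}, S.Nonempty →
      LinearFormsCondition η (cornerEdges (relIndicator S S) 0) (cornerEdges (relIndicator S S) 1)
        (cornerEdges (relIndicator S S) 2) →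
      ∀ {A : Finset (G × G)}, A ⊆ S → IsCornerFree (A : Set (G × G)) →
      (#A : ℝ) ≤ δ * #S := by
  obtain ⟨η, t, hη, ht, removal⟩ :=
    exists_triangleFree_of_linearFormsCondition.{u} (div_pos hδ three_pos)
  obtain ⟨N₀, hN₀⟩ := exists_nat_ge (4 / t ^ 11)
  refine ⟨min η 1, lt_min hη one_pos, N₀, fun {G} _ _ _ hG {S} hS hlin {A} hAS hA ↦ ?_⟩
  have card_S_pos : (0 : ℝ) < #S := Nat.cast_pos.2 hS.card_pos
  have density_le : (Fintype.card G : ℝ) ^ 3 / #S ^ 2 ≤ t :=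
    pow_three_div_sq_le (Nat.one_le_cast.2 Fintype.card_pos) card_S_pos ht
      (card_pow_le hS (hlin.mono (min_le_right _ _))) (hN₀.trans (Nat.cast_le.2 hG))
  obtain ⟨E, hE, removed⟩ := removal (F := cornerEdges (relIndicator S A))
    (fun i x y ↦ by fin_cases i <;> exact relIndicator_nonneg S A _)
    (fun i x y ↦ by fin_cases i <;> exact relIndicator_mono hAS _)
    (hlin.mono (min_le_left _ _))
    ((triangleDensity_cornerEdges_le hA (card_le_card hAS)).trans density_le)
  rw [← div_le_iff₀ card_S_pos, ← expect_relIndicator]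
  calc _ ≤ ∑ i, _ := hE.expect_le_sum_cornerEdges (relIndicator_nonneg S A)
    _ ≤ ∑ _i : Fin 3, δ / 3 := sum_le_sum fun i _ ↦ removed i
    _ = δ := by simp; ring

/-- **Corner-free subsets of pseudorandom subsets of `Z_N²`.** For every `δ > 0` there
exist `η > 0` and `N₀` such that for all `N ≥ N₀`: if `S ⊆ Z_N × Z_N` is nonempty,
`ν := (N²/|S|)·1_S`, and for every nonempty subset `F` of the twelve corner factors one
has `|E[∏_{factors in F} ν(·)] - 1| ≤ η`, then every corner-free `A ⊆ S` has
`|A| ≤ δ|S|`. -/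
theorem corner_removal_in_pseudorandom (δ : ℝ) (hδ : 0 < δ) :
    ∃ η : ℝ, 0 < η ∧ ∃ N₀ : ℕ, ∀ N : ℕ, N₀ ≤ N → ∀ [NeZero N],
      ∀ S : Finset (ZMod N × ZMod N), S.Nonempty →
      (∀ b : Fin 12 → Bool, (∃ i, b i = true) →
        |avg (fun v : Fin 6 → ZMod N =>
          ∏ i : Fin 12,
            if b i then
              cornerFactors
                (fun p => (N : ℝ) ^ 2 / (S.card : ℝ) * if p ∈ S then 1 else 0)
                (v 0) (v 1) (v 2) (v 3) (v 4) (v 5) i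
            else 1) - 1| ≤ η) →
      ∀ A : Finset (ZMod N × ZMod N), A ⊆ S →
      (¬ ∃ x y d : ZMod N, d ≠ 0 ∧
        (x, y) ∈ A ∧ (x + d, y) ∈ A ∧ (x, y + d) ∈ A) →
      (A.card : ℝ) ≤ δ * (S.card : ℝ) := by
  obtain ⟨η, hη, N₀, h⟩ := corner_removal_in_pseudorandom_general hδ
  exact ⟨η, hη, N₀, fun N hN _ S hS hν A hAS hA ↦ h (by rwa [ZMod.card]) hS
    (CornerRemoval.linearFormsCondition_of_cornerFactors hη.le
      (by unfold CornerRemoval.relIndicator; simpa only [ZMod.card] using hν))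
    hAS (CornerRemoval.isCornerFree_iff_not_exists.2 hA)⟩
end
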